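/- Let G be a finite group of odd order, let p be an odd prime with p ≡ 2 (mod 3), and let k be a subfield of ℂ containing the primitive p-th roots of unity but not containing the primitive 3rd roots of unity, such that either k does not contain the primitive ((p-1)/2)-th roots of unity or (p-1)/2 is even. If acd_k(G) < 3p²/(p²+2), then G has a normal p-complement. -/

import Mathlib

/-!
Put `c = 3p² / (p² + 2) < 3` and let the *excess* of `G` be the sum of `χ(1) - c` over the `k`-valued
irreducible characters `χ`; it is negative exactly when `acd_k(G) < c` (`acdK_lt_iff`). As `|G|` is
odd, nonlinear characters have degree at least `3`, so the excess does not grow when `G` is replaced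
by `G ⧸ N` with `N ≤ [G, G]` (`excess_quotient_le`). The theorem follows by induction on `|G|`
(`hasNormalPComplement_of_excess_neg`): for a minimal normal subgroup `N` of `G` inside `[G, G]`, the
quotient `G ⧸ N` has a normal `p`-complement `K ⧸ N`. If `p ∤ |N|` then `K` is a normal
`p`-complement of `G`. Otherwise `N` is either perfect or an abelian group of exponent `p`, and it
has to be shown that the nonlinear characters outweigh the linear ones, unless `G` has a normal
`p`-complement. Odd order is used only through elementary parity facts (nontrivial irreducible
characters are not real), not through solvability.

*Perfect `N`* (`perfect_case`). Choose a power map `x ↦ x ^ t` on `G` which inverts `p'`-elements and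
comes from a Galois automorphism over `k`, in the sense that the irreducible characters it fixes are
`k`-valued (`exists_t0`). Let `P` be a Sylow `p`-subgroup. The fixed irreducible characters with `N`
in their kernel have `K` in their kernel, hence are characters of `G ⧸ K ≅ P ⧸ (P ∩ N)`. By a form of
Tate's theorem (`tate`), `P` has a linear character of order `p` that is nontrivial on `P ∩ N`.
The projector onto the `G`-stable class functions on `P`, multiplied by an integer prime to `p`, has
an integral matrix in the basis of irreducible characters; its restriction to the fixed characters
has rank modulo `p` at most the number of fixed irreducible characters of `G` (`rank_fixed_le`,
`rank_E_le`), while the linear character above makes this rank large. Hence there are at least as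
many fixed irreducible characters nontrivial on `N` as there are `k`-valued linear characters of
`p`-power order (`count_Y`). Such a character has degree at least `5 s`, where `s` is the number of
linear characters of `p'`-order fixing it (`five_mul_card_le`), and two of them never differ by a
linear character of `p'`-order (`tau_eq`). Summing over twists gives the estimate, with `3` in place
of `c`.

*Abelian `N = Z`.* If `Z` is central in `K`, then `K` is the direct product of `Z` and a
characteristic `p'`-subgroup (`hasNormalPComplement_of_central`). Otherwise `Z` has a complement in
`G` (`exists_crossed`), so that every linear character `l` of `Z` extends to its stabilizer; inducing
the extension gives an irreducible `k`-valued character whose degree is the length `d` of the orbit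
of `l`. With its twists by `k`-valued linear characters, each orbit contributes `(d - c) / s` per
`k`-valued linear character of `G`, where `s ∣ d` is the number of `k`-valued linear characters
trivial on the stabilizer of `l` (`orbit_contribution`). The total has to be at least `c - 1`
(`abelian_case`):
* if `d ≥ 5` and `s ≠ d` for some `l`, the orbits of `l` and `l⁻¹` suffice, as `s ≤ d / 3`;
* if `d ≥ 5` and `s = d` for some `l`, then `G` acts on `Z` as an abelian group, all orbits have
  length `d`, and their number is even; it is not two, since then some element would act with order
  divisible by `(p - 1) / 2`, contrary to the assumption on `(p - 1) / 2`-th roots of unity; so there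
  are at least four, and at least six if `d = 5`, because `3 ∤ |Z|`;
* if `d = 3` for all `l`, then `s = 1` as `k` has no primitive cube roots of unity, and `|Z| ≥ p²`
  as `p ≡ 2 (mod 3)`; the `(|Z| - 1) / 3` orbits contribute enough, with equality for `|Z| = p²`.
-/

/-- The set of irreducible complex characters of `G`. -/
noncomputable def Irr (G : Type) [Group G] : Set (G → ℂ) :=
  {χ | ∃ V : FDRep ℂ G, CategoryTheory.Simple V ∧ χ = FDRep.character V}

/-- A group `G` has a normal `p`-complement: a normal subgroup of order coprime
to `p` whose index is a power of `p`. -/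
def HasNormalPComplement (G : Type) [Group G] (p : ℕ) : Prop :=
  ∃ N : Subgroup G, N.Normal ∧ Nat.Coprime (Nat.card N) p ∧ ∃ n : ℕ, N.index = p ^ n

/-- The irreducible complex characters of `G` all of whose values lie in `k`. -/
noncomputable def IrrK (G : Type) [Group G] (k : Subfield ℂ) : Set (G → ℂ) :=
  {χ ∈ Irr G | ∀ g, χ g ∈ k}

/-- The average of the degrees of the `k`-valued irreducible characters of `G`. -/
noncomputable def acdK (G : Type) [Group G] (k : Subfield ℂ) : ℝ :=
  (∑ᶠ χ ∈ IrrK G k, (χ 1).re) / (Nat.card (IrrK G k))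

set_option linter.unusedSectionVars false

/-! ### Characters, the bilinear form, and orthogonality -/

namespace AcdK

open CategoryTheory

section Basic

variable {G : Type} [Group G]

/-- `f` is the character of a finite-dimensional complex representation. -/
def IsChar (f : G → ℂ) : Prop := ∃ V : FDRep ℂ G, f = V.character

/-- The symmetric bilinear form `|G|⁻¹ ∑ f(x) g(x⁻¹)`, which on characters is the usual
inner product. -/
noncomputable def ip (f g : G → ℂ) : ℂ := (Nat.card G : ℂ)⁻¹ * ∑ᶠ x, f x * g x⁻¹

/-- Functions constant on conjugacy classes. -/
def IsClassFn (f : G → ℂ) : Prop := ∀ g x, f (g * x * g⁻¹) = f x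

lemma isChar_of_rep {V : Type} [AddCommGroup V] [Module ℂ V] [FiniteDimensional ℂ V]
    (ρ : Representation ℂ G V) : IsChar ρ.character :=
  ⟨FDRep.of ρ, rfl⟩

lemma IsChar.exists_rep {f : G → ℂ} (hf : IsChar f) :
    ∃ (V : Type) (_ : AddCommGroup V) (_ : Module ℂ V) (_ : FiniteDimensional ℂ V)
      (ρ : Representation ℂ G V), f = ρ.character := by
  obtain ⟨V, rfl⟩ := hf
  exact ⟨V, inferInstance, inferInstance, inferInstance, V.ρ, rfl⟩

lemma IsChar.mul {f g : G → ℂ} (hf : IsChar f) (hg : IsChar g) : IsChar (f * g) := by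
  obtain ⟨V, _, _, _, ρ, rfl⟩ := hf.exists_rep
  obtain ⟨W, _, _, _, σ, rfl⟩ := hg.exists_rep
  rw [← Representation.char_tensor]
  exact isChar_of_rep _

lemma IsChar.inv {f : G → ℂ} (hf : IsChar f) : IsChar (fun x => f x⁻¹) := by
  obtain ⟨V, _, _, _, ρ, rfl⟩ := hf.exists_rep
  have : (fun x => ρ.character x⁻¹) = ρ.dual.character := by
    ext x; rw [Representation.char_dual]
  rw [this]
  exact isChar_of_rep _

lemma IsChar.comp {H : Type} [Group H] {f : G → ℂ} (hf : IsChar f) (φ : H →* G) :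
    IsChar (fun x => f (φ x)) := by
  obtain ⟨V, _, _, _, ρ, rfl⟩ := hf.exists_rep
  exact isChar_of_rep (ρ.comp φ)

lemma IsChar.classFn {f : G → ℂ} (hf : IsChar f) : IsClassFn f := by
  obtain ⟨V, _, _, _, ρ, rfl⟩ := hf.exists_rep
  exact fun g x => Representation.char_conj ρ x g

lemma IsChar.exists_degree {f : G → ℂ} (hf : IsChar f) : ∃ n : ℕ, f 1 = n := by
  obtain ⟨V, _, _, _, ρ, rfl⟩ := hf.exists_rep
  exact ⟨_, Representation.char_one ρ⟩

lemma isChar_of_mem {χ : G → ℂ} (h : χ ∈ Irr G) : IsChar χ := by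
  obtain ⟨V, _, rfl⟩ := h
  exact ⟨V, rfl⟩

lemma isChar_linear (l : G →* ℂˣ) : IsChar (fun x => (l x : ℂ)) := by
  let ρ : Representation ℂ G ℂ :=
    { toFun := fun g => (l g : ℂ) • LinearMap.id
      map_one' := by simp; rfl
      map_mul' := fun g h => by ext; simp [mul_comm] }
  have : (fun x => (l x : ℂ)) = ρ.character := by
    ext x
    simp [Representation.character, ρ]
  rw [this]; exact isChar_of_rep _

end Basic

section Fin

variable {G : Type} [Group G] [Finite G]

lemma ip_def [Fintype G] (f g : G → ℂ) : ip f g = (Nat.card G : ℂ)⁻¹ * ∑ x, f x * g x⁻¹ := by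
  rw [ip, finsum_eq_sum_of_fintype]

lemma card_ne : (Nat.card G : ℂ) ≠ 0 := by
  exact_mod_cast Nat.card_pos.ne'

lemma ip_comm (f g : G → ℂ) : ip f g = ip g f := by
  have := Fintype.ofFinite G
  rw [ip_def, ip_def, ← Equiv.sum_comp (Equiv.inv G)]
  simp [mul_comm]

lemma ip_add_left (f g h : G → ℂ) : ip (f + g) h = ip f h + ip g h := by
  have := Fintype.ofFinite G
  simp [ip_def, add_mul, Finset.sum_add_distrib, mul_add]

lemma ip_smul_left (c : ℂ) (f h : G → ℂ) : ip (c • f) h = c * ip f h := by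
  have := Fintype.ofFinite G
  simp [ip_def, mul_assoc, ← Finset.mul_sum]
  ring

lemma ip_add_right (f g h : G → ℂ) : ip h (f + g) = ip h f + ip h g := by
  rw [ip_comm, ip_add_left, ip_comm f, ip_comm g]

lemma ip_smul_right (c : ℂ) (f h : G → ℂ) : ip h (c • f) = c * ip h f := by
  rw [ip_comm, ip_smul_left, ip_comm]

lemma ip_sum_left {ι : Type*} (s : Finset ι) (f : ι → G → ℂ) (h : G → ℂ) :
    ip (∑ i ∈ s, f i) h = ∑ i ∈ s, ip (f i) h := by
  classical
  induction s using Finset.induction_on with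
  | empty => simp [ip]
  | insert a s ha ih => rw [Finset.sum_insert ha, Finset.sum_insert ha, ip_add_left, ih]

lemma ip_sum_right {ι : Type*} (s : Finset ι) (f : ι → G → ℂ) (h : G → ℂ) :
    ip h (∑ i ∈ s, f i) = ∑ i ∈ s, ip h (f i) := by
  rw [ip_comm, ip_sum_left]
  exact Finset.sum_congr rfl fun i _ => ip_comm _ _

lemma ip_nat {f g : G → ℂ} (hf : IsChar f) (hg : IsChar g) : ∃ n : ℕ, ip f g = n := by
  have := Fintype.ofFinite G
  have := invertibleOfNonzero (card_ne (G := G))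
  obtain ⟨V, rfl⟩ := hf
  obtain ⟨W, rfl⟩ := hg
  exact ⟨_, (ip_def _ _).trans (FDRep.scalar_product_char_eq_finrank_equivariant W V)⟩

lemma mem_irr_iff {χ : G → ℂ} : χ ∈ Irr G ↔ IsChar χ ∧ ip χ χ = 1 := by
  have := Fintype.ofFinite G
  have key : ∀ V : FDRep ℂ G, Simple V ↔ ip V.character V.character = 1 := by
    intro V
    rw [FDRep.simple_iff_char_is_norm_one, ip_def, inv_mul_eq_one₀ card_ne, eq_comm]
  constructor
  · rintro ⟨V, hV, rfl⟩
    exact ⟨⟨V, rfl⟩, (key V).1 hV⟩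
  · rintro ⟨⟨V, rfl⟩, h⟩
    exact ⟨V, (key V).2 h, rfl⟩

lemma ip_irr_ne {χ ψ : G → ℂ} (hχ : χ ∈ Irr G) (hψ : ψ ∈ Irr G) (h : χ ≠ ψ) : ip χ ψ = 0 := by
  classical
  have := Fintype.ofFinite G
  have := invertibleOfNonzero (card_ne (G := G))
  obtain ⟨V, hV, rfl⟩ := hχ
  obtain ⟨W, hW, rfl⟩ := hψ
  rw [ip_def, FDRep.char_orthonormal, if_neg]
  rintro ⟨i⟩
  exact h (FDRep.char_iso i)

lemma ip_irr_self {χ : G → ℂ} (hχ : χ ∈ Irr G) : ip χ χ = 1 := (mem_irr_iff.1 hχ).2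

open scoped Classical in
lemma ip_irr {χ ψ : G → ℂ} (hχ : χ ∈ Irr G) (hψ : ψ ∈ Irr G) :
    ip χ ψ = if χ = ψ then 1 else 0 := by
  split_ifs with h
  · rw [h, ip_irr_self hψ]
  · exact ip_irr_ne hχ hψ h

lemma linear_mem_irr (l : G →* ℂˣ) : (fun x => (l x : ℂ)) ∈ Irr G := by
  refine mem_irr_iff.2 ⟨isChar_linear l, ?_⟩
  have := Fintype.ofFinite G
  rw [ip_def]
  simp

lemma one_mem_irr : (1 : G → ℂ) ∈ Irr G := by
  have h := linear_mem_irr (1 : G →* ℂˣ)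
  simp only [MonoidHom.one_apply, Units.val_one] at h
  exact h

/-- Induction over representations of a finite group, by Maschke's theorem. -/
lemma rep_induction
    (P : ∀ (V : Type) [AddCommGroup V] [Module ℂ V] [FiniteDimensional ℂ V]
      (_ : Representation ℂ G V), Prop)
    (h0 : ∀ (V : Type) [AddCommGroup V] [Module ℂ V] [FiniteDimensional ℂ V]
      (ρ : Representation ℂ G V), Subsingleton V → P V ρ)
    (h1 : ∀ (V : Type) [AddCommGroup V] [Module ℂ V] [FiniteDimensional ℂ V]
      (ρ : Representation ℂ G V), ρ.IsIrreducible → P V ρ)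
    (h2 : ∀ (V : Type) [AddCommGroup V] [Module ℂ V] [FiniteDimensional ℂ V]
      (ρ : Representation ℂ G V) (A B : Subrepresentation ρ),
      IsCompl A.toSubmodule B.toSubmodule →
      P A.toSubmodule A.toRepresentation → P B.toSubmodule B.toRepresentation → P V ρ)
    (V : Type) [AddCommGroup V] [Module ℂ V] [FiniteDimensional ℂ V]
    (ρ : Representation ℂ G V) : P V ρ := by
  suffices H : ∀ (n : ℕ) (V : Type) [AddCommGroup V] [Module ℂ V] [FiniteDimensional ℂ V]
      (ρ : Representation ℂ G V), Module.finrank ℂ V = n → P V ρ from H _ V ρ rfl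
  intro n
  induction n using Nat.strong_induction_on with
  | _ n ih =>
    intro V _ _ _ ρ hn
    by_cases hs : Subsingleton V
    · exact h0 V ρ hs
    rw [not_subsingleton_iff_nontrivial] at hs
    by_cases hi : ρ.IsIrreducible
    · exact h1 V ρ hi
    have hnt : Nontrivial (Subrepresentation ρ) := by
      refine ⟨⊥, ⊤, fun h => ?_⟩
      obtain ⟨v, hv⟩ := exists_ne (0 : V)
      have : v ∈ (⊤ : Subrepresentation ρ).toSubmodule := Submodule.mem_top
      rw [← h] at this
      exact hv this
    have : ∃ A : Subrepresentation ρ, A ≠ ⊥ ∧ A ≠ ⊤ := by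
      by_contra hcon
      push Not at hcon
      exact hi ⟨fun A => or_iff_not_imp_left.2 (hcon A)⟩
    obtain ⟨A, hA, hA'⟩ := this
    have : NeZero (Nat.card G : ℂ) := ⟨card_ne⟩
    obtain ⟨B, hB⟩ := exists_isCompl A
    have hc : IsCompl A.toSubmodule B.toSubmodule := by
      constructor
      · rw [disjoint_iff]
        have := congrArg Subrepresentation.toSubmodule hB.inf_eq_bot
        exact this
      · rw [codisjoint_iff]
        have := congrArg Subrepresentation.toSubmodule hB.sup_eq_top
        exact this
    have hAb : A.toSubmodule ≠ ⊥ := fun h => hA (Subrepresentation.toSubmodule_injective h)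
    have hAt : A.toSubmodule ≠ ⊤ := fun h => hA' (Subrepresentation.toSubmodule_injective h)
    have hadd := Submodule.finrank_add_eq_of_isCompl hc
    have hAp : 0 < Module.finrank ℂ A.toSubmodule :=
      Nat.pos_of_ne_zero fun h => hAb (Submodule.finrank_eq_zero.1 h)
    have hAl : Module.finrank ℂ A.toSubmodule < Module.finrank ℂ V :=
      Submodule.finrank_lt hAt
    exact h2 V ρ A B hc (ih _ (by omega) _ _ rfl) (ih _ (by omega) _ _ rfl)

lemma character_split {V : Type} [AddCommGroup V] [Module ℂ V] [FiniteDimensional ℂ V]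
    (ρ : Representation ℂ G V) (A B : Subrepresentation ρ)
    (hc : IsCompl A.toSubmodule B.toSubmodule) :
    ρ.character = A.toRepresentation.character + B.toRepresentation.character := by
  ext g
  simp only [Representation.character, Pi.add_apply]
  let N : Bool → Submodule ℂ V := fun b => cond b A.toSubmodule B.toSubmodule
  have hN : DirectSum.IsInternal N := by
    rw [DirectSum.isInternal_submodule_iff_isCompl N (i := true) (j := false) (by simp)
      (by ext b; cases b <;> simp)]
    exact hc
  have hf : ∀ b, Set.MapsTo (ρ g) (N b) (N b) := by
    rintro (_ | _)
    · exact fun v hv => B.apply_mem_toSubmodule g hv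
    · exact fun v hv => A.apply_mem_toSubmodule g hv
  rw [LinearMap.trace_eq_sum_trace_restrict hN hf, Fintype.sum_bool]
  rfl

/-- Every character is a sum of irreducible ones. -/
lemma IsChar.induction {P : (G → ℂ) → Prop} (h0 : P 0) (h1 : ∀ χ ∈ Irr G, P χ)
    (h2 : ∀ f g, IsChar f → IsChar g → P f → P g → P (f + g)) {f : G → ℂ} (hf : IsChar f) :
    P f := by
  obtain ⟨V, _, _, _, ρ, rfl⟩ := hf.exists_rep
  refine rep_induction (fun V _ _ _ ρ => P ρ.character) ?_ ?_ ?_ V ρ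
  · intro V _ _ _ ρ hs
    have : ρ.character = 0 := by
      ext g
      have : ρ g = 0 := by ext v; exact Subsingleton.elim _ _
      simp [Representation.character, this]
    rw [this]; exact h0
  · intro V _ _ _ ρ hi
    refine h1 _ (mem_irr_iff.2 ⟨isChar_of_rep ρ, ?_⟩)
    have := Fintype.ofFinite G
    have := invertibleOfNonzero (card_ne (G := G))
    rw [ip_def, Representation.char_orthonormal, if_pos ⟨.refl _⟩]
  · intro V _ _ _ ρ A B hc hA hB
    rw [character_split ρ A B hc]
    exact h2 _ _ (isChar_of_rep _) (isChar_of_rep _) hA hB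

/-- A class function orthogonal to all irreducible characters vanishes. -/
lemma classFn_eq_zero {f : G → ℂ} (hf : IsClassFn f) (h : ∀ χ ∈ Irr G, ip f χ = 0) : f = 0 := by
  classical
  have := Fintype.ofFinite G
  have key : ∀ (V : Type) [AddCommGroup V] [Module ℂ V] [FiniteDimensional ℂ V]
      (ρ : Representation ℂ G V), ∑ x, f x • ρ x⁻¹ = 0 := by
    refine rep_induction _ ?_ ?_ ?_
    · intro V _ _ _ ρ hs
      ext v; exact Subsingleton.elim _ _
    · intro V _ _ _ ρ hi
      set A : V →ₗ[ℂ] V := ∑ x, f x • ρ x⁻¹ with hA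
      have hcomm : ∀ g, A ∘ₗ ρ g = ρ g ∘ₗ A := by
        intro g
        ext v
        simp only [hA, LinearMap.comp_apply, LinearMap.sum_apply, LinearMap.smul_apply, map_sum,
          map_smul]
        rw [← Equiv.sum_comp (MulAut.conj g).toEquiv]
        refine Finset.sum_congr rfl fun x _ => ?_
        simp only [MulEquiv.toEquiv_eq_coe, MulEquiv.coe_toEquiv, MulAut.conj_apply]
        rw [hf, ← Module.End.mul_apply, ← map_mul, ← Module.End.mul_apply, ← map_mul]
        congr 3
        group
      let A' : Representation.IntertwiningMap ρ ρ :=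
        ⟨A, fun g => hcomm g⟩
      obtain ⟨c, hc⟩ := (Representation.IsIrreducible.algebraMap_intertwiningMap_bijective_of_isAlgClosed
        (ρ := ρ)).2 A'
      have hAc : A = c • LinearMap.id := by
        have := congrArg Representation.IntertwiningMap.toLinearMap hc
        rw [show A = A'.toLinearMap from rfl, ← this]
        rfl
      have htr : LinearMap.trace ℂ V A = 0 := by
        have hm : ρ.character ∈ Irr G := by
          refine mem_irr_iff.2 ⟨isChar_of_rep ρ, ?_⟩
          have := invertibleOfNonzero (card_ne (G := G))
          rw [ip_def, Representation.char_orthonormal, if_pos ⟨.refl _⟩]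
        have h0 := h _ hm
        rw [ip_def, mul_eq_zero] at h0
        have := h0.resolve_left (inv_ne_zero card_ne)
        rw [hA, map_sum, ← this]
        refine Finset.sum_congr rfl fun x _ => ?_
        simp [Representation.character]
      rw [hAc] at htr
      simp only [map_smul, LinearMap.trace_id, smul_eq_mul, mul_eq_zero, Nat.cast_eq_zero] at htr
      rcases htr with h | h
      · rw [hAc, h, zero_smul]
      · have := Module.finrank_zero_iff.1 h
        ext v; exact Subsingleton.elim _ _
    · intro V _ _ _ ρ A B hc hA hB
      have aux : ∀ (C : Subrepresentation ρ), (∑ x, f x • C.toRepresentation x⁻¹ = 0) →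
          ∀ v ∈ C.toSubmodule, (∑ x, f x • ρ x⁻¹) v = 0 := by
        intro C hC v hv
        have := congrArg (fun φ : C.toSubmodule →ₗ[ℂ] C.toSubmodule => ((φ ⟨v, hv⟩ : C.toSubmodule) : V)) hC
        simpa [LinearMap.sum_apply, Subrepresentation.toRepresentation] using this
      ext v
      have hv : v ∈ A.toSubmodule ⊔ B.toSubmodule := by rw [hc.sup_eq_top]; trivial
      obtain ⟨a, ha, b, hb, rfl⟩ := Submodule.mem_sup.1 hv
      rw [map_add, aux A hA a ha, aux B hB b hb]
      simp
  have hreg := key (G → ℂ) ((Representation.ofMulAction ℂ G G).comp (MonoidHom.id G) |> fun _ =>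
    { toFun := fun g => LinearMap.funLeft ℂ ℂ (fun x => g⁻¹ * x)
      map_one' := by ext; simp
      map_mul' := fun g h => by ext; simp [mul_assoc] })
  ext y
  have := congrFun (LinearMap.congr_fun hreg (Pi.single 1 1)) y⁻¹
  simpa [LinearMap.sum_apply, LinearMap.funLeft, Pi.single_apply, mul_eq_one_iff_eq_inv] using this

end Fin

end AcdK

namespace AcdK

open CategoryTheory

/-! ### Expansion of class functions in irreducible characters -/

section Expand

variable {G : Type} [Group G] [Finite G]

lemma linearIndepOn_irr : LinearIndepOn ℂ id (Irr G) := by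
  classical
  unfold LinearIndepOn
  rw [linearIndependent_iff']
  intro s c hc i hi
  have h := congrArg (fun f => ip f i.1) hc
  simp only [ip_sum_left, ip_smul_left, id] at h
  rw [Finset.sum_eq_single_of_mem i hi] at h
  · rw [ip_irr_self i.2, mul_one] at h
    simpa [ip] using h
  · intro j _ hj
    rw [ip_irr_ne j.2 i.2 (fun h => hj (Subtype.ext h)), mul_zero]

lemma irr_finite : (Irr G).Finite := linearIndepOn_irr.setFinite

/-- The irreducible characters as a finset. -/
noncomputable def irr (G : Type) [Group G] [Finite G] : Finset (G → ℂ) :=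
  (irr_finite (G := G)).toFinset

@[simp] lemma mem_irr {χ : G → ℂ} : χ ∈ irr G ↔ χ ∈ Irr G := by simp [irr]

lemma IsClassFn.smul {f : G → ℂ} (hf : IsClassFn f) (c : ℂ) : IsClassFn (c • f) :=
  fun g x => by simp [hf g x]

lemma IsClassFn.add {f f' : G → ℂ} (hf : IsClassFn f) (hf' : IsClassFn f') :
    IsClassFn (f + f') := fun g x => by simp [hf g x, hf' g x]

lemma IsClassFn.sum {ι : Type*} {s : Finset ι} {f : ι → G → ℂ} (hf : ∀ i ∈ s, IsClassFn (f i)) :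
    IsClassFn (∑ i ∈ s, f i) := fun g x => by
  simp only [Finset.sum_apply]
  exact Finset.sum_congr rfl fun i hi => hf i hi g x

lemma irr_classFn {χ : G → ℂ} (h : χ ∈ Irr G) : IsClassFn χ := (isChar_of_mem h).classFn

lemma expand {f : G → ℂ} (hf : IsClassFn f) : f = ∑ χ ∈ irr G, ip f χ • χ := by
  have h0 : f + (-1 : ℂ) • ∑ χ ∈ irr G, ip f χ • χ = 0 := by
    refine classFn_eq_zero (hf.add (IsClassFn.smul (IsClassFn.sum fun χ hχ =>
      (irr_classFn (mem_irr.1 hχ)).smul _) _)) fun ψ hψ => ?_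
    rw [ip_add_left, ip_smul_left, ip_sum_left, Finset.sum_eq_single_of_mem ψ (mem_irr.2 hψ)]
    · rw [ip_smul_left, ip_irr_self hψ]; ring
    · intro χ hχ hne
      rw [ip_smul_left, ip_irr_ne (mem_irr.1 hχ) hψ hne, mul_zero]
  have := congrArg (· + ∑ χ ∈ irr G, ip f χ • χ) h0
  simpa [add_assoc] using this

lemma ip_expand {f g : G → ℂ} (hf : IsClassFn f) :
    ip f g = ∑ χ ∈ irr G, ip f χ * ip χ g := by
  conv_lhs => rw [expand hf, ip_sum_left]
  simp [ip_smul_left]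

lemma classFn_ext {f g : G → ℂ} (hf : IsClassFn f) (hg : IsClassFn g)
    (h : ∀ χ ∈ Irr G, ip f χ = ip g χ) : f = g := by
  rw [expand hf, expand hg]
  exact Finset.sum_congr rfl fun χ hχ => by rw [h χ (mem_irr.1 hχ)]

/-- The degree of a character, as a natural number. -/
noncomputable def deg (f : G → ℂ) : ℕ := ⌊(f 1).re⌋₊

/-- The multiplicity `⟨f, g⟩` of characters, as a natural number. -/
noncomputable def mult (f g : G → ℂ) : ℕ := ⌊(ip f g).re⌋₊

lemma IsChar.deg_eq {f : G → ℂ} (hf : IsChar f) : f 1 = deg f := by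
  obtain ⟨n, hn⟩ := hf.exists_degree
  simp [deg, hn]

lemma mult_eq {f g : G → ℂ} (hf : IsChar f) (hg : IsChar g) : ip f g = mult f g := by
  obtain ⟨n, hn⟩ := ip_nat hf hg
  simp [mult, hn]

lemma irr_deg {χ : G → ℂ} (h : χ ∈ Irr G) : χ 1 = deg χ := (isChar_of_mem h).deg_eq

lemma IsChar.eq_zero_of_deg {f : G → ℂ} (hf : IsChar f) (h : f 1 = 0) : f = 0 := by
  obtain ⟨V, _, _, _, ρ, rfl⟩ := hf.exists_rep
  rw [Representation.char_one, Nat.cast_eq_zero] at h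
  have := Module.finrank_zero_iff.1 h
  ext g
  have : ρ g = 0 := by ext v; exact Subsingleton.elim _ _
  simp [Representation.character, this]

lemma deg_pos {χ : G → ℂ} (h : χ ∈ Irr G) : 0 < deg χ := by
  refine Nat.pos_of_ne_zero fun h0 => ?_
  have h1 := irr_deg h
  rw [h0, Nat.cast_zero] at h1
  have h2 := (isChar_of_mem h).eq_zero_of_deg h1
  have h3 := ip_irr_self h
  rw [h2] at h3
  simp [ip] at h3

lemma IsChar.expand {f : G → ℂ} (hf : IsChar f) : f = ∑ χ ∈ irr G, (mult f χ : ℂ) • χ := by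
  conv_lhs => rw [AcdK.expand hf.classFn]
  exact Finset.sum_congr rfl fun χ hχ => by rw [mult_eq hf (isChar_of_mem (mem_irr.1 hχ))]

lemma IsChar.deg_expand {f : G → ℂ} (hf : IsChar f) :
    deg f = ∑ χ ∈ irr G, mult f χ * deg χ := by
  have h : f 1 = ((∑ χ ∈ irr G, mult f χ * deg χ : ℕ) : ℂ) := by
    conv_lhs => rw [hf.expand]
    rw [Finset.sum_apply]
    push_cast
    exact Finset.sum_congr rfl fun χ hχ => by simp [irr_deg (mem_irr.1 hχ)]
  rw [hf.deg_eq] at h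
  exact_mod_cast h

lemma IsChar.norm_expand {f g : G → ℂ} (hf : IsChar f) (hg : IsChar g) :
    mult f g = ∑ χ ∈ irr G, mult f χ * mult g χ := by
  have h := ip_expand (g := g) hf.classFn
  rw [mult_eq hf hg] at h
  have : ∀ χ ∈ irr G, ip f χ * ip χ g = ((mult f χ * mult g χ : ℕ) : ℂ) := fun χ hχ => by
    rw [ip_comm χ g, mult_eq hf (isChar_of_mem (mem_irr.1 hχ)),
      mult_eq hg (isChar_of_mem (mem_irr.1 hχ))]
    push_cast; rfl
  rw [Finset.sum_congr rfl this] at h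
  exact_mod_cast h

lemma exists_constituent {f : G → ℂ} (hf : IsChar f) (h : deg f ≠ 0) :
    ∃ χ ∈ Irr G, mult f χ ≠ 0 := by
  by_contra hcon
  push Not at hcon
  apply h
  rw [hf.deg_expand]
  exact Finset.sum_eq_zero fun χ hχ => by rw [hcon χ (mem_irr.1 hχ), zero_mul]

/-- Multiplication by a linear character preserves irreducibility. -/
lemma twist_mem {χ : G → ℂ} (h : χ ∈ Irr G) (l : G →* ℂˣ) : (fun x => (l x : ℂ) * χ x) ∈ Irr G := by
  refine mem_irr_iff.2 ⟨(isChar_linear l).mul (isChar_of_mem h), ?_⟩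
  have := Fintype.ofFinite G
  rw [← ip_irr_self h, ip_def, ip_def]
  congr 1
  refine Finset.sum_congr rfl fun x _ => ?_
  have : (l x : ℂ) * (l x⁻¹ : ℂ) = 1 := by
    rw [← Units.val_mul, ← map_mul]; simp
  linear_combination (χ x * χ x⁻¹) * this

lemma inv_mem {χ : G → ℂ} (h : χ ∈ Irr G) : (fun x => χ x⁻¹) ∈ Irr G := by
  refine mem_irr_iff.2 ⟨(isChar_of_mem h).inv, ?_⟩
  have := Fintype.ofFinite G
  rw [← ip_irr_self h, ip_def, ip_def]
  congr 1
  exact Finset.sum_congr rfl fun x _ => by simp [mul_comm]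

lemma ip_mul_left (f g h : G → ℂ) : ip (f * g) h = ip f ((fun x => g x⁻¹) * h) := by
  have := Fintype.ofFinite G
  rw [ip_def, ip_def]
  congr 1
  exact Finset.sum_congr rfl fun x _ => by simp [mul_assoc]

/-- A degree-one character is a homomorphism. -/
lemma exists_linear {χ : G → ℂ} (h : χ ∈ Irr G) (h1 : deg χ = 1) :
    ∃ l : G →* ℂˣ, χ = fun x => (l x : ℂ) := by
  obtain ⟨V, _, _, _, ρ, rfl⟩ := (isChar_of_mem h).exists_rep
  have hd := irr_deg h
  rw [h1, Representation.char_one, Nat.cast_inj] at hd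
  have hs : ∀ φ : V →ₗ[ℂ] V, φ = LinearMap.trace ℂ V φ • LinearMap.id := by
    intro φ
    obtain ⟨v, hv, hspan⟩ := finrank_eq_one_iff'.1 hd
    obtain ⟨c, hc⟩ := hspan (φ v)
    have h2 : φ = c • LinearMap.id := by
      ext w
      obtain ⟨a, rfl⟩ := hspan w
      simp [← hc, smul_comm a c]
    rw [h2]; simp [hd]
  have hmul : ∀ g g' : G, ρ.character (g * g') = ρ.character g * ρ.character g' := by
    intro g g'
    simp only [Representation.character]
    rw [map_mul, hs (ρ g), hs (ρ g')]
    simp [hd, Module.End.mul_eq_comp, mul_comm]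
  have h1' : ρ.character 1 = 1 := by simp [hd]
  let m : G →* ℂ := ⟨⟨ρ.character, h1'⟩, hmul⟩
  exact ⟨m.toHomUnits, by ext x; simp [m]⟩

end Expand

/-! ### Pull-back along homomorphisms, kernels and induced class functions -/

section Pull

variable {G H : Type} [Group G] [Finite G] [Group H] [Finite H]

lemma ip_comp (φ : H →* G) (hφ : Function.Surjective φ) (f g : G → ℂ) :
    ip (fun x => f (φ x)) (fun x => g (φ x)) = ip f g := by
  classical
  have := Fintype.ofFinite G
  have := Fintype.ofFinite H
  rw [ip_def, ip_def]
  have hcard : ∀ y : G, (Finset.univ.filter fun x => φ x = y).card =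
      (Finset.univ.filter fun x => φ x = 1).card := fun y =>
    MonoidHom.card_fiber_eq_of_mem_range φ (hφ y) (hφ 1)
  set c := (Finset.univ.filter fun x => φ x = 1).card with hc
  have hsum : ∀ F : G → ℂ, ∑ x, F (φ x) = c * ∑ y, F y := by
    intro F
    rw [← Finset.sum_fiberwise (s := Finset.univ) (g := φ), Finset.mul_sum]
    refine Finset.sum_congr rfl fun y _ => ?_
    rw [Finset.sum_congr rfl (g := fun _ => F y), Finset.sum_const, hcard, nsmul_eq_mul]
    intro x hx
    rw [(Finset.mem_filter.1 hx).2]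
  have h1 := hsum (fun _ => 1)
  simp only [Finset.sum_const, Finset.card_univ, nsmul_eq_mul, mul_one,
    ← Nat.card_eq_fintype_card] at h1
  have h2 := hsum fun y => f y * g y⁻¹
  simp only [map_inv]
  rw [h2, h1]
  have := card_ne (G := G)
  have hc0 : (c : ℂ) ≠ 0 := fun h => card_ne (G := H) (by rw [h1, h, zero_mul])
  field_simp

lemma comp_mem (φ : H →* G) (hφ : Function.Surjective φ) {χ : G → ℂ} (h : χ ∈ Irr G) :
    (fun x => χ (φ x)) ∈ Irr H :=
  mem_irr_iff.2 ⟨(isChar_of_mem h).comp φ, by rw [ip_comp φ hφ, ip_irr_self h]⟩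

/-- If a character takes the value `χ 1` on a subgroup, this subgroup acts trivially. -/
lemma ker_of_const {V : Type} [AddCommGroup V] [Module ℂ V] [FiniteDimensional ℂ V]
    (ρ : Representation ℂ G V) (N : Subgroup G)
    (h : ∀ n ∈ N, ρ.character n = ρ.character 1) : ∀ n ∈ N, ρ n = 1 := by
  have := Fintype.ofFinite N
  have := invertibleOfNonzero (card_ne (G := N))
  let σ : Representation ℂ N V := ρ.comp N.subtype
  have h1 := Representation.card_inv_mul_sum_char_eq_finrank σ
  have h2 : ∀ x : N, σ.character x = (Module.finrank ℂ V : ℂ) := fun x => by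
    rw [← Representation.char_one ρ, ← h x x.2]; rfl
  have h3 : Module.finrank ℂ (Representation.invariants σ) = Module.finrank ℂ V := by
    simp only [h2, Finset.sum_const, Finset.card_univ, nsmul_eq_mul, smul_eq_mul] at h1
    have : ((Module.finrank ℂ V : ℕ) : ℂ) = Module.finrank ℂ (Representation.invariants σ) := by
      rw [← h1, ← Nat.card_eq_fintype_card, ← mul_assoc, inv_mul_cancel₀ card_ne, one_mul]
    exact_mod_cast this.symm
  have h4 := Submodule.eq_top_of_finrank_eq h3
  intro n hn
  ext v
  have hv : v ∈ Representation.invariants σ := by rw [h4]; trivial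
  exact hv ⟨n, hn⟩

lemma ker_mul {χ : G → ℂ} (hχ : IsChar χ) {N : Subgroup G} (h : ∀ n ∈ N, χ n = χ 1)
    {n : G} (hn : n ∈ N) (x : G) : χ (n * x) = χ x := by
  obtain ⟨V, _, _, _, ρ, rfl⟩ := hχ.exists_rep
  simp only [Representation.character]
  rw [map_mul, ker_of_const ρ N h n hn, one_mul]

lemma exists_quot {χ : G → ℂ} (hχ : χ ∈ Irr G) {N : Subgroup G} [N.Normal]
    (h : ∀ n ∈ N, χ n = χ 1) : ∃ ψ ∈ Irr (G ⧸ N), ∀ x : G, χ x = ψ (x : G ⧸ N) := by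
  obtain ⟨V, _, _, _, ρ, rfl⟩ := (isChar_of_mem hχ).exists_rep
  let σ : Representation ℂ (G ⧸ N) V := QuotientGroup.lift N ρ (ker_of_const ρ N h)
  have hσ : ∀ x : G, ρ.character x = σ.character (x : G ⧸ N) := fun x => rfl
  refine ⟨σ.character, mem_irr_iff.2 ⟨isChar_of_rep σ, ?_⟩, hσ⟩
  rw [← ip_comp (QuotientGroup.mk' N) (QuotientGroup.mk'_surjective N), ← ip_irr_self hχ]
  rfl

end Pull

section Ind

variable {G : Type} [Group G] [Finite G] (H : Subgroup G)

/-- Restriction of a function to a subgroup. -/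
def res (f : G → ℂ) : H → ℂ := fun x => f x

open scoped Classical in
/-- Extension of a function on a subgroup by zero. -/
noncomputable def ext0 (f : H → ℂ) : G → ℂ := fun x => if h : x ∈ H then f ⟨x, h⟩ else 0

/-- The induced class function. -/
noncomputable def ind (f : H → ℂ) : G → ℂ :=
  fun x => (Nat.card H : ℂ)⁻¹ * ∑ᶠ g : G, ext0 H f (g * x * g⁻¹)

lemma ind_def [Fintype G] (f : H → ℂ) (x : G) :
    ind H f x = (Nat.card H : ℂ)⁻¹ * ∑ g : G, ext0 H f (g * x * g⁻¹) := by
  rw [ind, finsum_eq_sum_of_fintype]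

lemma ext0_coe (f : H → ℂ) (x : H) : ext0 H f x = f x := by simp [ext0]

lemma sum_ext0 [Fintype G] [Fintype H] (f : H → ℂ) (F : G → ℂ) :
    ∑ x : G, ext0 H f x * F x = ∑ x : H, f x * F x := by
  classical
  rw [← Finset.sum_subset (Finset.subset_univ (Finset.univ.filter (· ∈ H)))]
  · rw [← Finset.sum_subtype_eq_sum_filter]
    rw [← Finset.sum_equiv (Equiv.refl H) (s := Finset.univ)]
    · simp
    · intro x _
      simp [ext0_coe]
  · intro x _ hx
    simp only [Finset.mem_filter, Finset.mem_univ, true_and] at hx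
    simp [ext0, hx]

lemma ind_classFn (f : H → ℂ) : IsClassFn (ind H f) := by
  have := Fintype.ofFinite G
  intro a x
  rw [ind_def, ind_def, ← Equiv.sum_comp (Equiv.mulRight a⁻¹)]
  simp [mul_assoc]

/-- Frobenius reciprocity. -/
lemma ip_ind (f : H → ℂ) {χ : G → ℂ} (hχ : IsClassFn χ) : ip (ind H f) χ = ip f (res H χ) := by
  have := Fintype.ofFinite G
  have := Fintype.ofFinite H
  rw [ip_def, ip_def]
  have h1 : ∀ x : G, ind H f x * χ x⁻¹ =
      (Nat.card H : ℂ)⁻¹ * ∑ g : G, ext0 H f (g * x * g⁻¹) * χ (g * x * g⁻¹)⁻¹ := by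
    intro x
    rw [ind_def, mul_assoc, Finset.sum_mul]
    congr 1
    refine Finset.sum_congr rfl fun g _ => ?_
    rw [← hχ g x⁻¹]
    simp [mul_assoc]
  simp_rw [h1]
  rw [← Finset.mul_sum, Finset.sum_comm]
  have h2 : ∀ g : G, ∑ x : G, ext0 H f (g * x * g⁻¹) * χ (g * x * g⁻¹)⁻¹ =
      ∑ x : H, f x * res H χ x⁻¹ := by
    intro g
    have := Equiv.sum_comp (MulAut.conj g).toEquiv fun x => ext0 H f x * χ x⁻¹
    simp only [MulEquiv.toEquiv_eq_coe, MulEquiv.coe_toEquiv, MulAut.conj_apply] at this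
    rw [this, sum_ext0 H f fun x => χ x⁻¹]
    rfl
  simp_rw [h2]
  simp only [Finset.sum_const, Finset.card_univ, nsmul_eq_mul, ← Nat.card_eq_fintype_card]
  have := card_ne (G := G)
  field_simp

lemma IsChar.res {f : G → ℂ} (hf : IsChar f) : IsChar (AcdK.res H f) := hf.comp H.subtype

lemma IsClassFn.res {f : G → ℂ} (hf : IsClassFn f) : IsClassFn (AcdK.res H f) :=
  fun g x => hf g x

/-- Clifford: all constituents of the restriction of an irreducible character to a normal
subgroup are conjugate. -/
lemma clifford [H.Normal] {χ : G → ℂ} (hχ : χ ∈ Irr G) {ψ ψ' : H → ℂ} (hψ : ψ ∈ Irr H)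
    (hψ' : ψ' ∈ Irr H) (h : ip (res H χ) ψ ≠ 0) (h' : ip (res H χ) ψ' ≠ 0) :
    ∃ g : G, ∀ x : H, ψ' x = ψ (MulAut.conjNormal g x) := by
  have := Fintype.ofFinite G
  have := Fintype.ofFinite H
  by_contra hcon
  push Not at hcon
  have hconj : ∀ g : G, (fun x => ψ (MulAut.conjNormal g x)) ∈ Irr H := fun g =>
    comp_mem (MulAut.conjNormal g).toMonoidHom (MulEquiv.surjective _) hψ
  have h0 : ip (res H (ind H ψ)) ψ' = 0 := by
    have : res H (ind H ψ) = (Nat.card H : ℂ)⁻¹ • ∑ g : G, fun x => ψ (MulAut.conjNormal g x) := by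
      ext x
      simp only [res, ind_def, Pi.smul_apply, Finset.sum_apply, smul_eq_mul]
      congr 1
      refine Finset.sum_congr rfl fun g _ => ?_
      rw [← MulAut.conjNormal_apply, ext0_coe]
    rw [this, ip_smul_left, ip_sum_left]
    refine mul_eq_zero_of_right _ (Finset.sum_eq_zero fun g _ => ?_)
    refine ip_irr_ne (hconj g) hψ' fun he => ?_
    obtain ⟨x, hx⟩ := hcon g
    exact hx (congrFun he x).symm
  -- `ind ψ` is a nonnegative combination of irreducibles in which `χ` occurs
  have h1 : ip (res H (ind H ψ)) ψ' =
      ((∑ θ ∈ irr G, mult (res H θ) ψ * mult (res H θ) ψ' : ℕ) : ℂ) := by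
    have he := congrArg (res H) (expand (ind_classFn H ψ))
    have hr : res H (∑ θ ∈ irr G, ip (ind H ψ) θ • θ) =
        ∑ θ ∈ irr G, ip (ind H ψ) θ • res H θ := by
      ext x; simp [res]
    rw [he, hr, ip_sum_left]
    push_cast
    refine Finset.sum_congr rfl fun θ hθ => ?_
    have hθ := mem_irr.1 hθ
    rw [ip_smul_left, ip_ind H ψ (irr_classFn hθ), ip_comm,
      mult_eq ((isChar_of_mem hθ).res H) (isChar_of_mem hψ),
      mult_eq ((isChar_of_mem hθ).res H) (isChar_of_mem hψ')]
  rw [h0] at h1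
  have h2 : ∑ θ ∈ irr G, mult (res H θ) ψ * mult (res H θ) ψ' = 0 := by exact_mod_cast h1.symm
  have h3 := Finset.sum_eq_zero_iff.1 h2 χ (mem_irr.2 hχ)
  rw [mult_eq ((isChar_of_mem hχ).res H) (isChar_of_mem hψ)] at h
  rw [mult_eq ((isChar_of_mem hχ).res H) (isChar_of_mem hψ')] at h'
  rcases Nat.mul_eq_zero.1 h3 with h4 | h4
  · exact h (by rw [h4]; simp)
  · exact h' (by rw [h4]; simp)

lemma ip_conj [H.Normal] {χ : G → ℂ} (hχ : IsClassFn χ) (ψ : H → ℂ) (g : G) :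
    ip (res H χ) (fun x => ψ (MulAut.conjNormal g x)) = ip (res H χ) ψ := by
  rw [← ip_comp (MulAut.conjNormal g : MulAut H).toMonoidHom (MulEquiv.surjective _) (res H χ) ψ]
  congr 1
  ext x
  simp [res, hχ g]

end Ind

end AcdK

/-! ### Galois twists of characters by power maps -/

namespace AcdK

lemma exists_fieldAut_aux (n t : ℕ) (hn : n ≠ 0) (ht : t.Coprime n) (K : Type) [Field K]
    [Algebra ℚ K] [IsCyclotomicExtension {n} ℚ K] [Algebra K ℂ] :
    ∃ σ : ℂ ≃+* ℂ, ∀ z : ℂ, z ^ n = 1 → σ z = z ^ t := by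
  have : NeZero n := ⟨hn⟩
  let φ : K →+* ℂ := algebraMap K ℂ
  have hirr := Polynomial.cyclotomic.irreducible_rat (Nat.pos_of_ne_zero hn)
  let α : K ≃ₐ[ℚ] K := (IsCyclotomicExtension.autEquivPow K hirr).symm (ZMod.unitOfCoprime t ht)
  have hζ := IsCyclotomicExtension.zeta_spec n ℚ K
  set ζ := IsCyclotomicExtension.zeta n ℚ K with hζdef
  have hα : α ζ = ζ ^ t := by
    have h1 := hζ.autToPow_spec ℚ α
    have h2 : hζ.autToPow ℚ α = ZMod.unitOfCoprime t ht :=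
      (IsCyclotomicExtension.autEquivPow K hirr).apply_symm_apply _
    rw [h2, ZMod.coe_unitOfCoprime] at h1
    rw [← h1, ZMod.val_natCast, hζ.eq_orderOf, pow_mod_orderOf]
  obtain ⟨ι, v, hv⟩ := exists_isTranscendenceBasis' K ℂ
  have := IsAlgClosed.isAlgClosure_of_transcendence_basis v hv
  let e : Algebra.adjoin K (Set.range v) ≃+* Algebra.adjoin K (Set.range v) :=
    (hv.1.aevalEquiv.symm.toRingEquiv.trans (MvPolynomial.mapEquiv ι α.toRingEquiv)).trans
      hv.1.aevalEquiv.toRingEquiv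
  have he : ∀ a : K, e (algebraMap K _ a) = algebraMap K _ (α a) := by
    intro a
    simp only [e, RingEquiv.trans_apply]
    have : hv.1.aevalEquiv.symm.toRingEquiv (algebraMap K _ a) = MvPolynomial.C a :=
      hv.1.aevalEquiv.symm.commutes a
    rw [this]
    have : MvPolynomial.mapEquiv ι α.toRingEquiv (MvPolynomial.C a) = MvPolynomial.C (α a) := by
      rw [MvPolynomial.mapEquiv_apply, MvPolynomial.map_C]
      rfl
    rw [this]
    exact hv.1.aevalEquiv.commutes (α a)
  refine ⟨IsAlgClosure.equivOfEquiv ℂ ℂ e, fun z hz => ?_⟩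
  have hφζ : IsPrimitiveRoot (φ ζ) n := hζ.map_of_injective φ.injective
  obtain ⟨i, -, rfl⟩ := hφζ.eq_pow_of_pow_eq_one hz
  have h1 : IsAlgClosure.equivOfEquiv ℂ ℂ e (φ ζ) = φ ζ ^ t := by
    have h2 := IsAlgClosure.equivOfEquiv_algebraMap ℂ ℂ e (algebraMap K _ ζ)
    rw [he, hα, ← IsScalarTower.algebraMap_apply, ← IsScalarTower.algebraMap_apply] at h2
    rw [map_pow] at h2
    exact h2
  rw [map_pow, h1, ← pow_mul, ← pow_mul, mul_comm]

lemma exists_fieldAut (n t : ℕ) (hn : n ≠ 0) (ht : t.Coprime n) :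
    ∃ σ : ℂ ≃+* ℂ, ∀ z : ℂ, z ^ n = 1 → σ z = z ^ t := by
  have : NeZero n := ⟨hn⟩
  have : NeZero (n : ℚ) := ⟨Nat.cast_ne_zero.2 hn⟩
  obtain ⟨K, _, _, _⟩ : ∃ (K : Type) (_ : Field K) (_ : Algebra ℚ K), IsCyclotomicExtension {n} ℚ K :=
    ⟨_, _, _, CyclotomicField.isCyclotomicExtension n ℚ⟩
  have : FiniteDimensional ℚ K := IsCyclotomicExtension.finiteDimensional {n} ℚ K
  let φ : K →ₐ[ℚ] ℂ := IsAlgClosed.lift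
  let _ : Algebra K ℂ := φ.toRingHom.toAlgebra
  exact exists_fieldAut_aux n t hn ht K

section Abelian

lemma irr_abelian {A : Type} [hA : Group A] [Finite A] (hcomm : ∀ a b : A, a * b = b * a) {χ : A → ℂ} (h : χ ∈ Irr A) : ∃ l : A →* ℂˣ, χ = fun x => (l x : ℂ) := by
  classical
  have := Fintype.ofFinite A
  have hcard : Nat.card (A →* ℂˣ) = Nat.card A :=
    @CommGroup.card_monoidHom_of_hasEnoughRootsOfUnity A ℂ { hA with mul_comm := hcomm } _ _ _
  have hfin : Finite (A →* ℂˣ) := Nat.finite_of_card_ne_zero (by rw [hcard]; exact Nat.card_pos.ne')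
  have := Fintype.ofFinite (A →* ℂˣ)
  let F : (A →* ℂˣ) → (A → ℂ) := fun l x => (l x : ℂ)
  have hF : Function.Injective F := fun l l' h => by
    ext x; exact congrFun h x
  have hle : (irr A).card ≤ Nat.card A := by
    have h1 := (linearIndepOn_irr (G := A)).encard_le_toENat_rank
    have h2 : Module.rank ℂ (A → ℂ) = (Fintype.card A : ℕ) := by simp
    rw [h2] at h1
    have h3 : (Irr A) = (irr A : Set (A → ℂ)) := by ext; simp
    rw [h3, Set.encard_coe_eq_coe_finsetCard] at h1
    simp only [map_natCast, Nat.cast_le] at h1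
    rwa [Nat.card_eq_fintype_card]
  have hsub : Finset.univ.image F ⊆ irr A := by
    intro f hf
    obtain ⟨l, -, rfl⟩ := Finset.mem_image.1 hf
    exact mem_irr.2 (linear_mem_irr l)
  have heq := Finset.eq_of_subset_of_card_le hsub (by
    rw [Finset.card_image_of_injective _ hF, Finset.card_univ, ← Nat.card_eq_fintype_card, hcard]
    exact hle)
  have hχ := mem_irr.2 h
  rw [← heq] at hχ
  obtain ⟨l, -, rfl⟩ := Finset.mem_image.1 hχ
  exact ⟨l, rfl⟩

end Abelian

section Twist

variable {G : Type} [Group G] [Finite G]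

lemma zp_comm (x : G) (a b : Subgroup.zpowers x) : a * b = b * a :=
  Subtype.ext (Subgroup.mem_zpowers_iff.1 a.2 |>.elim fun i hi => Subgroup.mem_zpowers_iff.1 b.2 |>.elim
    fun j hj => by simp [← hi, ← hj, zpow_mul_comm])

/-- The values of a character on the powers of `x`, as sums of powers of roots of unity. -/
lemma IsChar.eigen {f : G → ℂ} (hf : IsChar f) (x : G) :
    ∃ (s : Finset (Subgroup.zpowers x → ℂ)) (m : (Subgroup.zpowers x → ℂ) → ℕ)
      (e : (Subgroup.zpowers x → ℂ) → ℂ), (∀ i ∈ s, e i ^ orderOf x = 1) ∧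
      ∀ j : ℕ, f (x ^ j) = ∑ i ∈ s, m i * e i ^ j := by
  have hr := hf.res (Subgroup.zpowers x)
  let x' : Subgroup.zpowers x := ⟨x, Subgroup.mem_zpowers x⟩
  have hx' : x' ^ orderOf x = 1 := Subtype.ext (pow_orderOf_eq_one x)
  refine ⟨irr (Subgroup.zpowers x), mult (AcdK.res (Subgroup.zpowers x) f), fun χ => χ x', ?_, ?_⟩
  · intro χ hχ
    obtain ⟨l, rfl⟩ := irr_abelian (zp_comm x) (mem_irr.1 hχ)
    rw [← Units.val_pow_eq_pow_val, ← map_pow, hx']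
    simp
  · intro j
    have h1 : f (x ^ j) = AcdK.res (Subgroup.zpowers x) f (x' ^ j) := rfl
    rw [h1]
    conv_lhs => rw [hr.expand]
    rw [Finset.sum_apply]
    refine Finset.sum_congr rfl fun χ hχ => ?_
    obtain ⟨l, rfl⟩ := irr_abelian (zp_comm x) (mem_irr.1 hχ)
    simp

/-- The Galois twist `x ↦ f (x ^ t)`. -/
def pw (t : ℕ) (f : G → ℂ) : G → ℂ := fun x => f (x ^ t)

lemma fieldAut_apply {f : G → ℂ} (hf : IsChar f) {t : ℕ} {σ : ℂ ≃+* ℂ}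
    (hσ : ∀ z : ℂ, z ^ Nat.card G = 1 → σ z = z ^ t) (x : G) : σ (f x) = f (x ^ t) := by
  obtain ⟨s, m, e, he, h⟩ := hf.eigen x
  have h1 := h 1
  rw [pow_one] at h1
  rw [h t, h1, map_sum]
  refine Finset.sum_congr rfl fun i hi => ?_
  rw [map_mul, map_natCast, pow_one, hσ]
  obtain ⟨c, hc⟩ := orderOf_dvd_natCard x
  rw [hc, pow_mul, he i hi, one_pow]

lemma IsChar.map {f : G → ℂ} (hf : IsChar f) (σ : ℂ →+* ℂ) : IsChar fun x => σ (f x) := by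
  obtain ⟨V, _, _, _, ρ, rfl⟩ := hf.exists_rep
  let b := Module.finBasis ℂ V
  let M : G →* Matrix (Fin (Module.finrank ℂ V)) (Fin (Module.finrank ℂ V)) ℂ :=
    (σ.mapMatrix.toMonoidHom).comp
      (((LinearMap.toMatrixAlgEquiv b).toAlgHom.toRingHom.toMonoidHom).comp ρ)
  let ρ' : Representation ℂ G (Fin (Module.finrank ℂ V) → ℂ) :=
    (Matrix.toLinAlgEquiv' (R := ℂ)).toAlgHom.toRingHom.toMonoidHom.comp M
  have : (fun x => σ (ρ.character x)) = ρ'.character := by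
    ext x
    have h1 : ρ'.character x = Matrix.trace (M x) := by
      exact Matrix.trace_toLin'_eq (M x)
    have h2 : ρ.character x = Matrix.trace (LinearMap.toMatrix b b (ρ x)) :=
      LinearMap.trace_eq_matrix_trace ℂ b _
    rw [h1, h2, AddMonoidHom.map_trace σ]
    rfl
  rw [this]
  exact isChar_of_rep _

lemma IsChar.pw {f : G → ℂ} (hf : IsChar f) {t : ℕ} (ht : t.Coprime (Nat.card G)) :
    IsChar (AcdK.pw t f) := by
  obtain ⟨σ, hσ⟩ := exists_fieldAut (Nat.card G) t Nat.card_pos.ne' ht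
  have := hf.map σ.toRingHom
  convert this using 1
  ext x
  exact (fieldAut_apply hf hσ x).symm

lemma ip_pw (f g : G → ℂ) {t : ℕ} (ht : t.Coprime (Nat.card G)) : ip (pw t f) (pw t g) = ip f g := by
  have := Fintype.ofFinite G
  rw [ip_def, ip_def]
  congr 1
  have := Equiv.sum_comp (powCoprime ht.symm) fun x => f x * g x⁻¹
  rw [← this]
  refine Finset.sum_congr rfl fun x _ => ?_
  simp [pw]

lemma pw_mem {χ : G → ℂ} (h : χ ∈ Irr G) {t : ℕ} (ht : t.Coprime (Nat.card G)) : pw t χ ∈ Irr G :=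
  mem_irr_iff.2 ⟨(isChar_of_mem h).pw ht, by rw [ip_pw _ _ ht, ip_irr_self h]⟩

lemma pw_classFn {f : G → ℂ} (hf : IsClassFn f) (t : ℕ) : IsClassFn (pw t f) := fun g x => by
  simp only [pw, conj_pow]
  exact hf g _

lemma pw_pw (s t : ℕ) (f : G → ℂ) : pw s (pw t f) = pw (s * t) f := by
  ext x; simp [pw, pow_mul]

lemma pw_inj {t : ℕ} (ht : t.Coprime (Nat.card G)) : Function.Injective (pw (G := G) t) := by
  intro f g h
  ext x
  obtain ⟨y, rfl⟩ := (powCoprime ht.symm).surjective x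
  exact congrFun h y

lemma pw_congr {s t : ℕ} (h : s ≡ t [MOD Nat.card G]) (f : G → ℂ) : pw s f = pw t f := by
  ext x
  simp only [pw]
  congr 1
  exact pow_eq_pow_iff_modEq.2 (h.of_dvd (orderOf_dvd_natCard x))

lemma IsChar.isIntegral {f : G → ℂ} (hf : IsChar f) (x : G) : IsIntegral ℤ (f x) := by
  obtain ⟨s, m, e, he, h⟩ := hf.eigen x
  have h1 := h 1
  rw [pow_one] at h1
  rw [h1]
  refine IsIntegral.sum _ fun i hi => IsIntegral.mul (isIntegral_natCast (m i)) ?_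
  rw [pow_one]
  exact IsIntegral.of_pow (orderOf_pos x) (by rw [he i hi]; exact isIntegral_one)

end Twist

end AcdK

/-! ### Column orthogonality, real characters and parity of degrees -/

namespace AcdK

section Col

variable {G : Type} [Group G] [Finite G]

open scoped Classical in
/-- Column orthogonality, with the centralizer order written as the number of conjugators. -/
lemma col_orth [Fintype G] (x y : G) :
    ∑ χ ∈ irr G, χ x * χ y⁻¹ = ((Finset.univ.filter fun g => g * y * g⁻¹ = x).card : ℂ) := by
  let δ : G → ℂ := fun z => ∑ g : G, if g * y * g⁻¹ = z then 1 else 0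
  have hδ : IsClassFn δ := fun h z => by
    simp only [δ]
    rw [← Equiv.sum_comp (Equiv.mulLeft h)]
    refine Finset.sum_congr rfl fun g _ => ?_
    congr 1
    simp only [Equiv.coe_mulLeft, mul_inv_rev, eq_iff_iff]
    constructor
    · intro h1
      have : h * (g * y * g⁻¹) * h⁻¹ = h * z * h⁻¹ := by rw [← h1]; group
      exact mul_left_cancel (mul_right_cancel this)
    · intro h1; rw [← h1]; group
  have hip : ∀ χ ∈ irr G, ip δ χ = χ y⁻¹ := by
    intro χ hχ
    rw [ip_def]
    simp only [δ, Finset.sum_mul, ite_mul, one_mul, zero_mul]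
    rw [Finset.sum_comm]
    simp only [Finset.sum_ite_eq, Finset.mem_univ, if_true]
    have : ∀ g : G, χ (g * y * g⁻¹)⁻¹ = χ y⁻¹ := fun g => by
      rw [← irr_classFn (mem_irr.1 hχ) g y⁻¹]; congr 1; group
    simp only [this, Finset.sum_const, Finset.card_univ, nsmul_eq_mul]
    rw [← Nat.card_eq_fintype_card, inv_mul_cancel_left₀ card_ne]
  have h1 := congrFun (expand hδ) x
  rw [Finset.sum_apply] at h1
  have h2 : δ x = ((Finset.univ.filter fun g => g * y * g⁻¹ = x).card : ℂ) := by
    simp [δ]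
  rw [← h2, h1]
  refine Finset.sum_congr rfl fun χ hχ => ?_
  rw [hip χ hχ, Pi.smul_apply, smul_eq_mul, mul_comm]

open scoped Classical in
/-- Brauer's permutation lemma: the number of irreducible characters fixed by a power map. -/
lemma brauer [Fintype G] {t : ℕ} (ht : t.Coprime (Nat.card G)) :
    ((irr G).filter fun χ => pw t χ = χ).card * Nat.card G =
      (Finset.univ.filter fun a : G × G => a.2 * a.1 * a.2⁻¹ = a.1 ^ t).card := by
  have h1 : (((irr G).filter fun χ => pw t χ = χ).card : ℂ) = ∑ χ ∈ irr G, ip (pw t χ) χ := by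
    rw [Finset.card_filter]
    push_cast
    refine Finset.sum_congr rfl fun χ hχ => ?_
    rw [ip_irr (pw_mem (mem_irr.1 hχ) ht) (mem_irr.1 hχ)]
    congr
  have h2 : ((Finset.univ.filter fun a : G × G => a.2 * a.1 * a.2⁻¹ = a.1 ^ t).card : ℂ) =
      ∑ x : G, ((Finset.univ.filter fun g : G => g * x * g⁻¹ = x ^ t).card : ℂ) := by
    simp only [Finset.card_filter]
    push_cast
    rw [Fintype.sum_prod_type]
  rw [← Nat.cast_inj (R := ℂ), h2, Nat.cast_mul, h1]
  simp only [ip_def]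
  rw [← Finset.mul_sum, mul_comm, mul_inv_cancel_left₀ card_ne, Finset.sum_comm]
  exact Finset.sum_congr rfl fun x _ => col_orth _ _

lemma eq_one_of_conj_inv (hG : Odd (Nat.card G)) {x g : G} (h : g * x * g⁻¹ = x⁻¹) : x = 1 := by
  have h2 : ∀ n : ℕ, Odd n → g ^ n * x * (g ^ n)⁻¹ = x⁻¹ := by
    have h3 : ∀ n : ℕ, (g ^ (2 * n + 1)) * x * (g ^ (2 * n + 1))⁻¹ = x⁻¹ := by
      intro n
      induction n with
      | zero => simpa using h
      | succ n ih =>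
        have : g ^ (2 * (n + 1) + 1) = g * g * g ^ (2 * n + 1) := by
          rw [show 2 * (n + 1) + 1 = 1 + 1 + (2 * n + 1) by ring, pow_add, pow_add, pow_one]
        rw [this]
        calc _ = g * (g * (g ^ (2 * n + 1) * x * (g ^ (2 * n + 1))⁻¹) * g⁻¹) * g⁻¹ := by group
          _ = g * (g * x * g⁻¹)⁻¹ * g⁻¹ := by rw [ih]; group
          _ = x⁻¹ := by rw [h, inv_inv, h]
    rintro n ⟨k, rfl⟩; exact h3 k
  have h3 := h2 _ hG
  rw [pow_card_eq_one', one_mul, inv_one, mul_one] at h3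
  have h4 : x ^ 2 = 1 := by rw [sq]; nth_rewrite 2 [h3]; simp
  have h5 : Nat.Coprime 2 (Nat.card G) := Nat.coprime_two_left.2 hG
  have := orderOf_dvd_of_pow_eq_one h4
  have h6 := Nat.eq_one_of_dvd_coprimes h5 this (orderOf_dvd_natCard x)
  exact orderOf_eq_one_iff.1 h6

lemma pw_card_sub_one (f : G → ℂ) : pw (Nat.card G - 1) f = fun x => f x⁻¹ := by
  ext x
  simp only [pw]
  congr 1
  rw [eq_inv_iff_mul_eq_one, ← pow_succ, Nat.sub_add_cancel Nat.card_pos, pow_card_eq_one']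

/-- Burnside: in odd order only the trivial irreducible character is real. -/
lemma eq_one_of_real (hG : Odd (Nat.card G)) {χ : G → ℂ} (hχ : χ ∈ Irr G)
    (h : (fun x => χ x⁻¹) = χ) : χ = 1 := by
  classical
  have := Fintype.ofFinite G
  have ht : (Nat.card G - 1).Coprime (Nat.card G) := by
    have := Nat.coprime_self_sub_right (n := Nat.card G) (m := 1) Nat.card_pos
    rw [Nat.coprime_comm, this]; simp
  have hb := brauer ht
  have h1 : (Finset.univ.filter fun a : G × G => a.2 * a.1 * a.2⁻¹ = a.1 ^ (Nat.card G - 1)) =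
      ({1} : Finset G) ×ˢ Finset.univ := by
    ext ⟨x, g⟩
    simp only [Finset.mem_filter, Finset.mem_univ, true_and, Finset.mem_product,
      Finset.mem_singleton, and_true]
    constructor
    · intro h
      refine eq_one_of_conj_inv hG (h.trans ?_)
      rw [eq_inv_iff_mul_eq_one, ← pow_succ, Nat.sub_add_cancel Nat.card_pos, pow_card_eq_one']
    · rintro rfl; simp
  rw [h1, Finset.card_product, Finset.card_singleton, Finset.card_univ, ← Nat.card_eq_fintype_card]
    at hb
  have hb' := Nat.eq_of_mul_eq_mul_right Nat.card_pos hb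
  obtain ⟨a, ha⟩ := Finset.card_eq_one.1 hb'
  have hχ' : χ ∈ (irr G).filter fun χ => pw (Nat.card G - 1) χ = χ :=
    Finset.mem_filter.2 ⟨mem_irr.2 hχ, by rw [pw_card_sub_one]; exact h⟩
  have h1' : (1 : G → ℂ) ∈ (irr G).filter fun χ => pw (Nat.card G - 1) χ = χ :=
    Finset.mem_filter.2 ⟨mem_irr.2 one_mem_irr, by rw [pw_card_sub_one]; rfl⟩
  rw [ha, Finset.mem_singleton] at hχ' h1'
  rw [hχ', h1']

lemma mult_real {f : G → ℂ} (hr : ∀ x, f x⁻¹ = f x) (χ : G → ℂ) :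
    mult f (fun x => χ x⁻¹) = mult f χ := by
  have := Fintype.ofFinite G
  simp only [mult]
  congr 2
  rw [ip_def, ip_def, ← Equiv.sum_comp (Equiv.inv G)]
  simp [hr]

lemma deg_inv (f : G → ℂ) : deg (fun x => f x⁻¹) = deg f := by simp [deg]

lemma deg_one : deg (1 : G → ℂ) = 1 := by simp [deg]

/-- In odd order, the degree of a real character has the parity of the multiplicity of `1`. -/
lemma deg_real (hG : Odd (Nat.card G)) {f : G → ℂ} (hf : IsChar f) (hr : ∀ x, f x⁻¹ = f x) :
    (deg f : ZMod 2) = mult f 1 := by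
  classical
  rw [hf.deg_expand, ← Finset.add_sum_erase _ _ (mem_irr.2 one_mem_irr), deg_one, mul_one]
  push_cast
  rw [add_eq_left]
  have hne : ∀ χ ∈ (irr G).erase 1, (fun x => χ x⁻¹) ≠ χ := by
    intro χ hχ h
    have := Finset.mem_erase.1 hχ
    exact this.1 (eq_one_of_real hG (mem_irr.1 this.2) h)
  refine Finset.sum_involution (fun χ _ => fun x => χ x⁻¹) ?_ (fun χ hχ _ => hne χ hχ) ?_ ?_
  · intro χ hχ
    simp only [mult_real hr, deg_inv]
    exact CharTwo.add_self_eq_zero _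
  · intro χ hχ
    have := Finset.mem_erase.1 hχ
    refine Finset.mem_erase.2 ⟨fun h => this.1 ?_, mem_irr.2 (inv_mem (mem_irr.1 this.2))⟩
    ext x
    have := congrFun h x⁻¹
    simpa using this
  · intro χ hχ
    ext x; simp

lemma deg_mul_inv {χ : G → ℂ} (h : χ ∈ Irr G) : deg (χ * fun x => χ x⁻¹) = deg χ ^ 2 := by
  have h1 := ((isChar_of_mem h).mul (isChar_of_mem (inv_mem h))).deg_eq
  rw [Pi.mul_apply, inv_one, irr_deg h] at h1
  rw [sq]
  exact_mod_cast h1.symm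

lemma mult_mul_inv {χ : G → ℂ} (h : χ ∈ Irr G) : mult (χ * fun x => χ x⁻¹) 1 = 1 := by
  have h1 : ip (χ * fun x => χ x⁻¹) 1 = 1 := by
    rw [ip_mul_left]
    simp only [inv_inv, mul_one]
    exact ip_irr_self h
  simp [mult, h1]

lemma mul_inv_real (χ : G → ℂ) (x : G) :
    (χ * fun x => χ x⁻¹) x⁻¹ = (χ * fun x => χ x⁻¹) x := by
  simp [mul_comm]

lemma deg_odd (hG : Odd (Nat.card G)) {χ : G → ℂ} (h : χ ∈ Irr G) : Odd (deg χ) := by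
  have h1 := deg_real hG ((isChar_of_mem h).mul (isChar_of_mem (inv_mem h))) (mul_inv_real χ)
  rw [mult_mul_inv h, deg_mul_inv h, Nat.cast_one, ZMod.natCast_eq_one_iff_odd] at h1
  rw [sq] at h1
  exact Nat.Odd.of_mul_left h1

lemma three_le_deg (hG : Odd (Nat.card G)) {χ : G → ℂ} (h : χ ∈ Irr G) (h1 : deg χ ≠ 1) :
    3 ≤ deg χ := by
  obtain ⟨n, hn⟩ := deg_odd hG h
  omega

/-- A nontrivial irreducible character of a perfect group of odd order has degree at least `5`. -/
lemma five_le_deg_of_perfect (hG : Odd (Nat.card G)) (hperf : commutator G = ⊤) {χ : G → ℂ}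
    (h : χ ∈ Irr G) (h1 : χ ≠ 1) : 5 ≤ deg χ := by
  classical
  have key : ∀ ψ ∈ Irr G, ψ ≠ 1 → 3 ≤ deg ψ := by
    intro ψ hψ hne
    refine three_le_deg hG hψ fun hd => hne ?_
    obtain ⟨l, rfl⟩ := exists_linear hψ hd
    have : commutator G ≤ l.ker := Abelianization.commutator_subset_ker l
    rw [hperf] at this
    ext x
    have := this (Subgroup.mem_top x)
    rw [MonoidHom.mem_ker] at this
    simp [this]
  by_contra hlt
  have h3 : deg χ = 3 := by
    obtain ⟨n, hn⟩ := deg_odd hG h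
    have := key χ h h1
    omega
  have hf := (isChar_of_mem h).mul (isChar_of_mem (inv_mem h))
  have hdeg := hf.deg_expand
  rw [deg_mul_inv h, h3, ← Finset.add_sum_erase _ _ (mem_irr.2 one_mem_irr), mult_mul_inv h,
    deg_one] at hdeg
  have hsum : ∑ ψ ∈ (irr G).erase 1, mult (χ * fun x => χ x⁻¹) ψ * deg ψ = 8 := by omega
  have h3' : ∀ ψ ∈ (irr G).erase 1, 3 ∣ mult (χ * fun x => χ x⁻¹) ψ * deg ψ := by
    intro ψ hψ
    have hψ1 := Finset.mem_erase.1 hψ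
    have hψI := mem_irr.1 hψ1.2
    rcases Nat.eq_zero_or_pos (mult (χ * fun x => χ x⁻¹) ψ) with h0 | h0
    · simp [h0]
    have hψ' : (fun x => ψ x⁻¹) ∈ (irr G).erase 1 := by
      refine Finset.mem_erase.2 ⟨fun h => hψ1.1 ?_, mem_irr.2 (inv_mem hψI)⟩
      ext x
      have := congrFun h x⁻¹
      simpa using this
    have hne : ψ ≠ fun x => ψ x⁻¹ := fun h => hψ1.1 (eq_one_of_real hG hψI h.symm)
    have hle : ∑ φ ∈ {ψ, fun x => ψ x⁻¹}, mult (χ * fun x => χ x⁻¹) φ * deg φ ≤ 8 := by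
      rw [← hsum]
      refine Finset.sum_le_sum_of_subset fun φ hφ => ?_
      rcases Finset.mem_insert.1 hφ with rfl | hφ
      · exact hψ
      · rw [Finset.mem_singleton.1 hφ]; exact hψ'
    rw [Finset.sum_pair hne, mult_real (mul_inv_real χ), deg_inv] at hle
    have h4 : deg ψ ≤ mult (χ * fun x => χ x⁻¹) ψ * deg ψ := Nat.le_mul_of_pos_left _ h0
    have h5 := key ψ hψI hψ1.1
    obtain ⟨n, hn⟩ := deg_odd hG hψI
    have : deg ψ = 3 := by omega
    exact this ▸ Dvd.intro_left _ rfl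
  have := Finset.dvd_sum h3'
  rw [hsum] at this
  omega

end Col

end AcdK

/-! ### Restriction to normal subgroups and twisting by linear characters -/

namespace AcdK

section Normal

variable {G : Type} [Group G] [Finite G]

lemma deg_res (H : Subgroup G) (f : G → ℂ) : deg (res H f) = deg f := rfl

lemma deg_comp {H : Type} [Group H] (φ : H →* G) (f : G → ℂ) : deg (fun x => f (φ x)) = deg f := by
  simp [deg]

lemma mult_ne_iff {f g : G → ℂ} (hf : IsChar f) (hg : IsChar g) : mult f g ≠ 0 ↔ ip f g ≠ 0 := by
  rw [mult_eq hf hg, Nat.cast_ne_zero]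

lemma deg_le_of_constituent {f χ : G → ℂ} (hf : IsChar f) (hχ : χ ∈ Irr G) (h : mult f χ ≠ 0) :
    deg χ ≤ deg f := by
  rw [hf.deg_expand]
  refine le_trans (Nat.le_mul_of_pos_left _ (Nat.pos_of_ne_zero h)) ?_
  exact Finset.single_le_sum (f := fun χ => mult f χ * deg χ) (fun _ _ => Nat.zero_le _)
    (mem_irr.2 hχ)

/-- A subgroup all of whose constituents in `χ` are trivial lies in the kernel of `χ`. -/
lemma ker_of_constituents {f : G → ℂ} (hf : IsChar f) {N : Subgroup G}
    (h : ∀ ψ ∈ Irr N, mult (res N f) ψ ≠ 0 → ψ = 1) : ∀ n ∈ N, f n = f 1 := by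
  have h1 := (hf.res N).expand
  have key : ∀ n : N, res N f n = res N f 1 := by
    intro n
    rw [h1, Finset.sum_apply, Finset.sum_apply]
    refine Finset.sum_congr rfl fun ψ hψ => ?_
    by_cases h0 : mult (res N f) ψ = 0
    · simp [h0]
    · rw [h ψ (mem_irr.1 hψ) h0]; rfl
  exact fun n hn => key ⟨n, hn⟩

lemma five_le_deg (hG : Odd (Nat.card G)) {N : Subgroup G} (hperf : commutator N = ⊤)
    {χ : G → ℂ} (hχ : χ ∈ Irr G) (h : ¬ ∀ n ∈ N, χ n = χ 1) : 5 ≤ deg χ := by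
  have hN : Odd (Nat.card N) := hG.of_dvd_nat (Subgroup.card_subgroup_dvd_card N)
  have : ∃ ψ ∈ Irr N, mult (res N χ) ψ ≠ 0 ∧ ψ ≠ 1 := by
    by_contra hcon
    push Not at hcon
    exact h (ker_of_constituents (isChar_of_mem hχ) hcon)
  obtain ⟨ψ, hψ, hm, h1⟩ := this
  exact (five_le_deg_of_perfect hN hperf hψ h1).trans
    (deg_le_of_constituent ((isChar_of_mem hχ).res N) hψ hm)

lemma ker_of_mult_one {χ : G → ℂ} (hχ : χ ∈ Irr G) {N : Subgroup G} [N.Normal]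
    (h : mult (res N χ) 1 ≠ 0) : ∀ n ∈ N, χ n = χ 1 := by
  have hr := (isChar_of_mem hχ).res N
  refine ker_of_constituents (isChar_of_mem hχ) fun ψ hψ hm => ?_
  obtain ⟨g, hg⟩ := clifford N hχ one_mem_irr hψ ((mult_ne_iff hr (isChar_of_mem one_mem_irr)).1 h)
    ((mult_ne_iff hr (isChar_of_mem hψ)).1 hm)
  ext x
  rw [hg]; rfl

/-- If a power map fixing `χ` inverts the elements of the normal subgroup `N`, then `N` is in the
kernel: the restriction of `χ` to `N` is real of odd degree. -/
lemma ker_of_inverted (hG : Odd (Nat.card G)) {χ : G → ℂ} (hχ : χ ∈ Irr G) {N : Subgroup G}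
    [N.Normal] {t : ℕ} (hfix : pw t χ = χ) (ht : ∀ n ∈ N, n ^ t = n⁻¹) : ∀ n ∈ N, χ n = χ 1 := by
  have hN : Odd (Nat.card N) := hG.of_dvd_nat (Subgroup.card_subgroup_dvd_card N)
  have hr := (isChar_of_mem hχ).res N
  apply ker_of_mult_one hχ
  have h1 := deg_real hN hr (fun x => by
    have := congrFun hfix (x : G)
    simp only [pw, ht x x.2] at this
    exact this)
  intro h0
  rw [h0, deg_res, Nat.cast_zero, ZMod.natCast_eq_zero_iff_even] at h1
  exact (Nat.not_even_iff_odd.2 (deg_odd hG hχ)) h1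

end Normal

section Twist

variable {G : Type} [Group G] [Finite G]

/-- The product of `χ` with a linear character. -/
def tw (l : G →* ℂˣ) (χ : G → ℂ) : G → ℂ := fun x => (l x : ℂ) * χ x

lemma tw_mem (l : G →* ℂˣ) {χ : G → ℂ} (h : χ ∈ Irr G) : tw l χ ∈ Irr G := twist_mem h l

lemma tw_one (χ : G → ℂ) : tw 1 χ = χ := by ext; simp [tw]

lemma tw_mul (l m : G →* ℂˣ) (χ : G → ℂ) : tw (l * m) χ = tw l (tw m χ) := by
  ext; simp [tw, mul_assoc]

lemma deg_tw (l : G →* ℂˣ) (χ : G → ℂ) : deg (tw l χ) = deg χ := by simp [deg, tw]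

lemma tw_inj (l : G →* ℂˣ) : Function.Injective (tw l) := by
  intro χ ψ h
  ext x
  exact mul_left_cancel₀ (Units.ne_zero (l x)) (congrFun h x)

/-- The stabilizer of `χ` in the group of linear characters. -/
def stab (χ : G → ℂ) : Subgroup (G →* ℂˣ) where
  carrier := {l | tw l χ = χ}
  one_mem' := tw_one χ
  mul_mem' {a b} ha hb := by
    simp only [Set.mem_ofPred_eq] at *
    rw [tw_mul, hb, ha]
  inv_mem' {a} ha := by
    simp only [Set.mem_ofPred_eq] at *
    nth_rewrite 1 [← ha]
    rw [← tw_mul, inv_mul_cancel, tw_one]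

lemma mem_stab {χ : G → ℂ} {l : G →* ℂˣ} : l ∈ stab χ ↔ tw l χ = χ := Iff.rfl

lemma ip_res_ker {l : G →* ℂˣ} {q : ℕ} (hq : q ≠ 0) (hl : l ^ q = 1) (hi : l.ker.index = q)
    (χ : G → ℂ) : ip (res l.ker χ) (res l.ker χ) = ∑ i ∈ Finset.range q, ip (tw (l ^ i) χ) χ := by
  have := Fintype.ofFinite G
  have := Fintype.ofFinite l.ker
  have hgeo : ∀ x : G, ∑ i ∈ Finset.range q, ((l x : ℂ)) ^ i = (q : ℂ) * ext0 l.ker 1 x := by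
    intro x
    by_cases hx : x ∈ l.ker
    · have : l x = 1 := hx
      simp [ext0, hx, this]
    · have h1 : (l x : ℂ) ≠ 1 := fun h => hx (by
        rw [MonoidHom.mem_ker]; exact Units.ext h)
      have h2 := geom_sum_eq h1 q
      have h3 : (l x : ℂ) ^ q = 1 := by
        rw [← Units.val_pow_eq_pow_val, ← MonoidHom.pow_apply, hl]; simp
      rw [h2, h3]
      simp [ext0, hx]
  simp only [ip_def]
  rw [← Finset.mul_sum, Finset.sum_comm]
  have h1 : ∀ x : G, ∑ i ∈ Finset.range q, tw (l ^ i) χ x * χ x⁻¹ =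
      (q : ℂ) * (ext0 l.ker 1 x * (χ x * χ x⁻¹)) := by
    intro x
    rw [← mul_assoc, ← hgeo x, Finset.sum_mul]
    refine Finset.sum_congr rfl fun i _ => ?_
    simp [tw, mul_assoc]
  simp only [h1]
  rw [← Finset.mul_sum, sum_ext0]
  have h2 : (Nat.card G : ℂ) = q * Nat.card l.ker := by
    rw [← hi, ← Nat.cast_mul, Subgroup.index_mul_card]
  have h3 : (q : ℂ) ≠ 0 := Nat.cast_ne_zero.2 hq
  rw [h2, mul_inv, mul_comm (q : ℂ)⁻¹, mul_assoc, inv_mul_cancel_left₀ h3]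
  simp [res]

/-- If `l χ = χ` with `l` of prime order `q`, the restriction of `χ` to `ker l` is the sum of `q`
distinct conjugate irreducible characters. -/
lemma cp_one {l : G →* ℂˣ} {q : ℕ} (hq : q.Prime) (hl : l ^ q = 1) (hi : l.ker.index = q)
    {χ : G → ℂ} (hχ : χ ∈ Irr G) (hfix : tw l χ = χ) :
    ∃ S : Finset (l.ker → ℂ), S.card = q ∧ (∀ ψ ∈ S, ψ ∈ Irr l.ker ∧ deg χ = q * deg ψ) ∧
      (∀ ψ ∈ Irr l.ker, ψ ∈ S ↔ ip (res l.ker χ) ψ ≠ 0) := by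
  classical
  have hr := (isChar_of_mem hχ).res l.ker
  have hn : mult (res l.ker χ) (res l.ker χ) = q := by
    have h1 := ip_res_ker hq.ne_zero hl hi χ
    have h2 : ∀ i, tw (l ^ i) χ = χ := by
      intro i
      induction i with
      | zero => simp [tw_one]
      | succ i ih => rw [pow_succ, tw_mul, hfix, ih]
    simp only [h2, ip_irr_self hχ, Finset.sum_const, Finset.card_range, nsmul_eq_mul, mul_one] at h1
    rw [mult_eq hr hr] at h1
    exact_mod_cast h1
  let S := (irr l.ker).filter fun ψ => mult (res l.ker χ) ψ ≠ 0
  obtain ⟨ψ₀, hψ₀, hm₀⟩ := exists_constituent hr (deg_pos hχ).ne'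
  have hconj : ∀ ψ ∈ S, mult (res l.ker χ) ψ = mult (res l.ker χ) ψ₀ ∧ deg ψ = deg ψ₀ := by
    intro ψ hψ
    obtain ⟨hψ1, hψ2⟩ := Finset.mem_filter.1 hψ
    have hψI := mem_irr.1 hψ1
    obtain ⟨g, hg⟩ := clifford l.ker hχ hψ₀ hψI ((mult_ne_iff hr (isChar_of_mem hψ₀)).1 hm₀)
      ((mult_ne_iff hr (isChar_of_mem hψI)).1 hψ2)
    have hg' : ψ = fun x => ψ₀ (MulAut.conjNormal g x) := funext hg
    constructor
    · simp only [mult]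
      rw [hg', ip_conj _ (irr_classFn hχ)]
    · rw [hg']
      exact deg_comp (MulAut.conjNormal g : MulAut l.ker).toMonoidHom ψ₀
  set e := mult (res l.ker χ) ψ₀
  have hsumS : ∀ F : (l.ker → ℂ) → ℕ, (∀ ψ, mult (res l.ker χ) ψ = 0 → F ψ = 0) →
      ∑ ψ ∈ irr l.ker, F ψ = ∑ ψ ∈ S, F ψ := by
    intro F hF
    refine (Finset.sum_subset (Finset.filter_subset _ _) fun ψ hψ hψ' => hF ψ ?_).symm
    by_contra h
    exact hψ' (Finset.mem_filter.2 ⟨hψ, h⟩)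
  have hcard : S.card * (e * e) = q := by
    have h1 := hr.norm_expand hr
    rw [hn, hsumS _ (fun ψ h => by simp [h]),
      Finset.sum_congr rfl (fun ψ hψ => by rw [(hconj ψ hψ).1]), Finset.sum_const, smul_eq_mul] at h1
    exact h1.symm
  have he : e = 1 := by
    have h1 : e * e ∣ q := Dvd.intro_left _ hcard
    rcases (Nat.dvd_prime hq).1 h1 with h | h
    · exact Nat.eq_one_of_mul_eq_one_left h
    · exact absurd (h ▸ hq) (Nat.not_prime_mul (by rintro h1; rw [h1] at h; exact hq.one_lt.ne h) (by rintro h1; rw [h1] at h; exact hq.one_lt.ne h))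
  rw [he, mul_one, mul_one] at hcard
  refine ⟨S, hcard, fun ψ hψ => ⟨mem_irr.1 (Finset.mem_filter.1 hψ).1, ?_⟩, fun ψ hψ => ?_⟩
  · have h1 := hr.deg_expand
    rw [deg_res, hsumS _ (fun ψ h => by simp [h]), Finset.sum_congr rfl (fun φ hφ => by
      rw [(hconj φ hφ).1, (hconj φ hφ).2, he, one_mul]), Finset.sum_const, smul_eq_mul, hcard] at h1
    rw [h1, (hconj ψ hψ).2]
  · rw [Finset.mem_filter, mult_ne_iff hr (isChar_of_mem hψ)]
    exact ⟨fun h => h.2, fun h => ⟨mem_irr.2 hψ, h⟩⟩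

lemma cp_two {l : G →* ℂˣ} {q : ℕ} (hq : q.Prime) (hl : l ^ q = 1) (hi : l.ker.index = q)
    {χ : G → ℂ} (hχ : χ ∈ Irr G) (hfix : tw l χ ≠ χ) : res l.ker χ ∈ Irr l.ker := by
  refine mem_irr_iff.2 ⟨(isChar_of_mem hχ).res _, ?_⟩
  rw [ip_res_ker hq.ne_zero hl hi χ, Finset.sum_eq_single_of_mem 0 (Finset.mem_range.2 hq.pos)]
  · have : tw (l ^ 0) χ = χ := by ext; simp [tw]
    rw [this, ip_irr_self hχ]
  · intro i hi' h0
    refine ip_irr_ne (tw_mem _ hχ) hχ fun h => hfix ?_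
    have hmem : l ^ i ∈ stab χ := h
    have hcop : i.Coprime q := Nat.Coprime.symm
      ((Nat.Prime.coprime_iff_not_dvd hq).2 (Nat.not_dvd_of_pos_of_lt (Nat.pos_of_ne_zero h0)
        (Finset.mem_range.1 hi')))
    have h2 : l ∈ Subgroup.zpowers (l ^ i) := by
      have hlo : (orderOf l) ∣ q := orderOf_dvd_of_pow_eq_one hl
      have : (orderOf l).Coprime i := Nat.Coprime.symm (hcop.coprime_dvd_right hlo)
      obtain ⟨m, hm⟩ := exists_pow_eq_self_of_coprime this.symm
      exact Subgroup.mem_zpowers_iff.2 ⟨m, by rw [zpow_natCast, hm]⟩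
    exact (Subgroup.zpowers_le.2 hmem) h2

/-- The kernel of a linear character of prime order `q` has index `q`. -/
lemma index_ker {l : G →* ℂˣ} {q : ℕ} (hq : q.Prime) (hl : l ^ q = 1) (h1 : l ≠ 1) :
    l.ker.index = q := by
  have : NeZero q := ⟨hq.ne_zero⟩
  rw [Subgroup.index_ker]
  have hle : l.range ≤ rootsOfUnity q ℂ := by
    rintro _ ⟨x, rfl⟩
    rw [mem_rootsOfUnity, ← MonoidHom.pow_apply, hl]; rfl
  have hc : Nat.card (rootsOfUnity q ℂ) = q := Complex.card_rootsOfUnity q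
  have hd := Subgroup.card_dvd_of_le hle
  rw [hc] at hd
  rcases (Nat.dvd_prime hq).1 hd with h | h
  · exfalso
    apply h1
    ext x
    have hb : l.range = ⊥ := Subgroup.eq_bot_of_card_eq _ h
    have : l x ∈ l.range := ⟨x, rfl⟩
    rw [hb, Subgroup.mem_bot] at this
    simp [this]
  · exact h

end Twist

lemma exists_linear_ne_one {G : Type} [Group G] [Finite G] {x : G} (hx : x ∉ commutator G) :
    ∃ l : G →* ℂˣ, l x ≠ 1 := by
  have h1 : (Abelianization.of x) ≠ 1 := fun h => hx (by
    rw [← Abelianization.ker_of]; exact h)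
  have : Finite (Abelianization G) := inferInstanceAs (Finite (G ⧸ commutator G))
  obtain ⟨φ, hφ⟩ := CommGroup.exists_apply_ne_one_of_hasEnoughRootsOfUnity (Abelianization G) ℂ h1
  exact ⟨φ.comp Abelianization.of, hφ⟩

lemma exists_linear_of_pGroup {p : ℕ} [hp : Fact p.Prime] {P : Type} [Group P] [Finite P]
    [Nontrivial P] (hP : IsPGroup p P) : ∃ l : P →* ℂˣ, l ^ p = 1 ∧ l ≠ 1 := by
  classical
  have := hP.isNilpotent
  obtain ⟨x, -, hx⟩ := SetLike.exists_of_lt (Group.IsSolvable.commutator_lt_top_of_nontrivial P)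
  obtain ⟨l₀, hl₀⟩ := exists_linear_ne_one hx
  obtain ⟨n, hn⟩ := IsPGroup.iff_card.1 hP
  have hex : ∃ j, l₀ ^ (p ^ j) = 1 := ⟨n, by
    ext y
    rw [MonoidHom.pow_apply, ← map_pow, ← hn, pow_card_eq_one', map_one]; rfl⟩
  have h0 : Nat.find hex ≠ 0 := fun h => by
    have := Nat.find_spec hex
    rw [h, pow_zero] at this
    have h1 : l₀ = 1 := (pow_one l₀).symm.trans this
    exact hl₀ (by rw [h1]; rfl)
  obtain ⟨j, hj⟩ := Nat.exists_eq_succ_of_ne_zero h0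
  refine ⟨l₀ ^ (p ^ j), ?_, Nat.find_min hex (by omega)⟩
  have := Nat.find_spec hex
  rw [hj, Nat.succ_eq_add_one, pow_succ] at this
  exact (pow_mul l₀ (p ^ j) p).symm.trans this

/-- Nonlinear irreducible characters of a `p`-group have degree divisible by `p`. -/
lemma dvd_deg_of_pGroup {p : ℕ} (hp : p.Prime) : ∀ (n : ℕ) (P : Type) [Group P] [Finite P],
    Nat.card P = n → IsPGroup p P → ∀ χ ∈ Irr P, deg χ ≠ 1 → p ∣ deg χ := by
  intro n
  induction n using Nat.strong_induction_on with
  | _ n ih =>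
  intro P _ _ hn hP χ hχ hd
  have : Fact p.Prime := ⟨hp⟩
  by_cases htriv : Nontrivial P
  swap
  · exfalso
    rw [not_nontrivial_iff_subsingleton] at htriv
    obtain ⟨l, hl⟩ := irr_abelian (fun a b => Subsingleton.elim _ _) hχ
    apply hd
    rw [hl]; simp [deg]
  obtain ⟨l, hl, hl1⟩ := exists_linear_of_pGroup hP
  have hi := index_ker hp hl hl1
  by_cases hfix : tw l χ = χ
  · obtain ⟨S, hS, hS1, -⟩ := cp_one hp hl hi hχ hfix
    obtain ⟨ψ, hψ⟩ := Finset.card_pos.1 (hS ▸ hp.pos)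
    exact (hS1 ψ hψ).2 ▸ Dvd.intro _ rfl
  · have h1 := cp_two hp hl hi hχ hfix
    have hlt : Nat.card l.ker < n := by
      rw [← hn, ← Subgroup.index_mul_card l.ker, hi]
      exact lt_mul_of_one_lt_left Nat.card_pos hp.one_lt
    exact ih _ hlt l.ker rfl (hP.to_subgroup _) _ h1 hd

end AcdK

/-! ### Characters fixed by a power map of order two -/

namespace AcdK

section Parity

variable {G : Type} [Group G] [Finite G]

instance : Finite (G →* ℂˣ) := by
  refine Finite.of_injective (β := irr G) (fun l => ⟨fun x => (l x : ℂ), mem_irr.2 (linear_mem_irr l)⟩) ?_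
  intro l l' h
  ext x
  exact congrFun (congrArg Subtype.val h) x

/-- Irreducible characters fixed by an involutory power map are determined by their values on the
elements fixed by this map: modulo two only these contribute to scalar products. -/
lemma tau_eq (hG : Odd (Nat.card G)) {τ : ℕ} (hτ : ∀ x : G, (x ^ τ) ^ τ = x) {χ χ' : G → ℂ}
    (hχ : χ ∈ Irr G) (hχ' : χ' ∈ Irr G) (h : pw τ χ = χ) (h' : pw τ χ' = χ')
    (hagree : ∀ x : G, x ^ τ = x → χ x = χ' x) : χ = χ' := by
  classical
  have := Fintype.ofFinite G
  by_contra hne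
  let R := integralClosure ℤ ℂ
  let I : Ideal R := Ideal.span {2}
  have h2 : (2 : R ⧸ I) = 0 := by
    have : (Ideal.Quotient.mk I 2) = 0 := Ideal.Quotient.eq_zero_iff_mem.2
      (Ideal.subset_span rfl)
    rwa [map_ofNat] at this
  let a : G → R := fun x => ⟨χ x, (isChar_of_mem hχ).isIntegral x⟩
  let b : G → R := fun x => ⟨χ' x, (isChar_of_mem hχ').isIntegral x⟩
  have ha : ∀ x, a (x ^ τ) = a x := fun x => Subtype.ext (congrFun h x)
  have hb : ∀ x, b (x ^ τ) = b x := fun x => Subtype.ext (congrFun h' x)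
  have key : ∀ f : G → R, (∀ x, f (x ^ τ) = f x) → Ideal.Quotient.mk I (∑ x, f x) =
      ∑ x ∈ Finset.univ.filter (fun x : G => x ^ τ = x), Ideal.Quotient.mk I (f x) := by
    intro f hf
    rw [map_sum, ← Finset.sum_filter_add_sum_filter_not Finset.univ (fun x : G => x ^ τ = x),
      add_eq_left]
    refine Finset.sum_involution (fun x _ => x ^ τ) ?_ ?_ ?_ ?_
    · intro x _
      rw [hf, ← two_mul, h2, zero_mul]
    · intro x hx _
      exact (Finset.mem_filter.1 hx).2
    · intro x hx
      refine Finset.mem_filter.2 ⟨Finset.mem_univ _, fun h => (Finset.mem_filter.1 hx).2 ?_⟩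
      rw [hτ] at h
      exact h.symm
    · intro x _; exact hτ x
  have e1 : ∑ x, a x * b x⁻¹ = 0 := by
    have := ip_irr_ne hχ hχ' hne
    rw [ip_def, mul_eq_zero, inv_eq_zero] at this
    have := this.resolve_left card_ne
    apply Subtype.ext
    push_cast
    exact this
  have e2 : ∑ x, a x * a x⁻¹ = (Nat.card G : R) := by
    have := ip_irr_self hχ
    rw [ip_def, inv_mul_eq_one₀ card_ne] at this
    apply Subtype.ext
    push_cast
    exact this.symm
  have k1 := key (fun x => a x * b x⁻¹) fun x => by rw [ha, ← inv_pow, hb]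
  have k2 := key (fun x => a x * a x⁻¹) fun x => by rw [ha, ← inv_pow, ha]
  have k3 : ∑ x ∈ Finset.univ.filter (fun x : G => x ^ τ = x), Ideal.Quotient.mk I (a x * b x⁻¹) =
      ∑ x ∈ Finset.univ.filter (fun x : G => x ^ τ = x), Ideal.Quotient.mk I (a x * a x⁻¹) := by
    refine Finset.sum_congr rfl fun x hx => ?_
    have hx := (Finset.mem_filter.1 hx).2
    have : a x⁻¹ = b x⁻¹ := Subtype.ext (hagree x⁻¹ (by rw [inv_pow, hx]))
    rw [this]
  rw [e1] at k1
  rw [e2, ← k3, ← k1, map_zero] at k2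
  have hmem := Ideal.Quotient.eq_zero_iff_mem.1 k2
  obtain ⟨r, hr⟩ := Ideal.mem_span_singleton'.1 hmem
  have hr' : (r : ℂ) * 2 = Nat.card G := by
    have := congrArg Subtype.val hr
    push_cast at this
    exact this
  have hrat : (r : ℂ) = algebraMap ℚ ℂ ((Nat.card G : ℚ) / 2) := by
    rw [map_div₀, map_natCast, map_ofNat, eq_div_iff two_ne_zero, hr']
  have hIntg : IsIntegral ℤ ((Nat.card G : ℚ) / 2) := by
    have : IsIntegral ℤ (algebraMap ℚ ℂ ((Nat.card G : ℚ) / 2)) := hrat ▸ r.2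
    exact (isIntegral_algebraMap_iff (algebraMap ℚ ℂ).injective).1 this
  obtain ⟨z, hz⟩ := IsIntegrallyClosed.isIntegral_iff.1 hIntg
  have hz' : z * 2 = Nat.card G := by
    have : (z : ℚ) * 2 = Nat.card G := by
      have hz2 : (z : ℚ) = (Nat.card G : ℚ) / 2 := hz
      rw [hz2]; ring
    exact_mod_cast this
  obtain ⟨m, hm⟩ := hG
  omega

lemma ip_tw (l : G →* ℂˣ) (f g : G → ℂ) : ip (tw l f) (tw l g) = ip f g := by
  have := Fintype.ofFinite G
  rw [ip_def, ip_def]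
  congr 1
  refine Finset.sum_congr rfl fun x _ => ?_
  have : (l x : ℂ) * (l x⁻¹ : ℂ) = 1 := by
    rw [← Units.val_mul, ← map_mul, mul_inv_cancel, map_one, Units.val_one]
  simp only [tw]
  linear_combination (f x * g x⁻¹) * this

lemma perfect_of_mulEquiv {A B : Type} [Group A] [Group B] (e : A ≃* B) (h : commutator A = ⊤) :
    commutator B = ⊤ := by
  have := Subgroup.map_commutator (⊤ : Subgroup A) ⊤ e.toMonoidHom
  rw [← commutator_def, h, ← MonoidHom.range_eq_map,
    MonoidHom.range_eq_top.2 (by exact e.surjective)] at this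
  rw [commutator_def, ← this]

lemma perfect_le_ker {N : Subgroup G} (hperf : commutator N = ⊤) (l : G →* ℂˣ) : N ≤ l.ker := by
  intro n hn
  have h1 : commutator N ≤ (l.comp N.subtype).ker := Abelianization.commutator_subset_ker _
  rw [hperf] at h1
  exact h1 (Subgroup.mem_top (⟨n, hn⟩ : N))

lemma card_le_of_restrict {l : G →* ℂˣ} {q : ℕ} (hq : q.Prime) (hi : l.ker.index = q)
    (W : Subgroup (G →* ℂˣ)) :
    Nat.card W ≤ q * Nat.card (W.map (MonoidHom.compHom' (P := ℂˣ) l.ker.subtype)) := by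
  have : NeZero q := ⟨hq.ne_zero⟩
  let φ : W →* (l.ker →* ℂˣ) := (MonoidHom.compHom' (P := ℂˣ) l.ker.subtype).comp W.subtype
  have h1 : φ.range = W.map (MonoidHom.compHom' (P := ℂˣ) l.ker.subtype) := by
    rw [MonoidHom.range_comp, Subgroup.range_subtype]
  have h2 := Subgroup.index_mul_card φ.ker
  rw [Subgroup.index_ker, h1] at h2
  rw [← h2, mul_comm]
  refine Nat.mul_le_mul_right _ ?_
  have hne : l.ker ≠ ⊤ := fun h => by
    rw [h, Subgroup.index_top] at hi
    exact hq.one_lt.ne hi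
  obtain ⟨g, -, hg⟩ := SetLike.exists_of_lt (lt_top_iff_ne_top.2 hne)
  have hφ : ∀ μ : φ.ker, ∀ x ∈ l.ker, μ.1.1 x = 1 := fun μ x hx =>
    DFunLike.congr_fun (show φ μ.1 = 1 from μ.2) ⟨x, hx⟩
  have hgq : g ^ q ∈ l.ker := by
    rw [← hi]; exact Subgroup.pow_index_mem _ _
  have hc : Nat.card (rootsOfUnity q ℂ) = q := Complex.card_rootsOfUnity q
  rw [← hc]
  refine Nat.card_le_card_of_injective (fun μ : φ.ker => (⟨μ.1.1 g, by
    rw [mem_rootsOfUnity, ← map_pow, hφ μ _ hgq]⟩ : rootsOfUnity q ℂ)) ?_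
  intro μ ν h
  have hgg : μ.1.1 g = ν.1.1 g := congrArg Subtype.val h
  have hle : l.ker ≤ μ.1.1.eqLocus ν.1.1 := fun x hx => by
    show μ.1.1 x = ν.1.1 x
    rw [hφ μ x hx, hφ ν x hx]
  have hd := Subgroup.index_dvd_of_le hle
  rw [hi] at hd
  have htop : μ.1.1.eqLocus ν.1.1 = ⊤ := by
    rcases (Nat.dvd_prime hq).1 hd with h | h
    · exact Subgroup.index_eq_one.1 h
    · exfalso
      have h3 := Subgroup.relIndex_mul_index hle
      rw [h, hi] at h3
      have h4 : l.ker.relIndex (μ.1.1.eqLocus ν.1.1) = 1 :=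
        Nat.eq_of_mul_eq_mul_right hq.pos (h3.trans (one_mul q).symm)
      exact hg (Subgroup.relIndex_eq_one.1 h4 hgg)
  apply Subtype.ext
  apply Subtype.ext
  exact MonoidHom.ext fun x => by
    have : x ∈ μ.1.1.eqLocus ν.1.1 := by rw [htop]; trivial
    exact this

end Parity

/-- A `τ`-fixed irreducible character that is nontrivial on a perfect normal subgroup has degree at
least `5 |W|`, for each group `W` of linear characters that fixes it and is trivial on the elements
fixed by `τ`. -/
lemma five_mul_card_le : ∀ (n : ℕ) (G : Type) [Group G] [Finite G] (_ : Odd (Nat.card G)) (τ : ℕ)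
    (_ : τ.Coprime (Nat.card G)) (_ : ∀ x : G, (x ^ τ) ^ τ = x) (N : Subgroup G) (_ : N.Normal)
    (_ : commutator N = ⊤) (χ : G → ℂ) (_ : χ ∈ Irr G) (_ : pw τ χ = χ)
    (_ : ¬ ∀ n ∈ N, χ n = χ 1) (W : Subgroup (G →* ℂˣ)) (_ : Nat.card W = n) (_ : W ≤ stab χ)
    (_ : ∀ l ∈ W, ∀ x, x ^ τ = x → l x = 1), 5 * Nat.card W ≤ deg χ := by
  intro n
  induction n using Nat.strong_induction_on with
  | _ n ih =>
  intro G _ _ hG τ hcop hτ N hN hperf χ hχ hfix hker W hWn hW hWτ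
  classical
  by_cases hW1 : Nat.card W = 1
  · rw [hW1]
    exact five_le_deg hG hperf hχ hker
  obtain ⟨q, hq, hqd⟩ := Nat.exists_prime_and_dvd hW1
  have : Fact q.Prime := ⟨hq⟩
  obtain ⟨⟨l, hlW⟩, hlo⟩ := exists_prime_orderOf_dvd_card' q hqd
  have hl : l ^ q = 1 := by
    have := pow_orderOf_eq_one (⟨l, hlW⟩ : W)
    rw [hlo] at this
    exact congrArg Subtype.val this
  have hl1 : l ≠ 1 := fun h => by
    have : (⟨l, hlW⟩ : W) = 1 := Subtype.ext h
    rw [this, orderOf_one] at hlo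
    exact hq.one_lt.ne hlo
  have hi := index_ker hq hl hl1
  set K := l.ker with hK
  have hqodd : Odd q := hG.of_dvd_nat (hi ▸ Subgroup.index_dvd_card K)
  have hKodd : Odd (Nat.card K) := hG.of_dvd_nat (Subgroup.card_subgroup_dvd_card K)
  have hKcop : τ.Coprime (Nat.card K) := hcop.coprime_dvd_right (Subgroup.card_subgroup_dvd_card K)
  have hKτ : ∀ x : K, (x ^ τ) ^ τ = x := fun x => Subtype.ext (hτ x)
  obtain ⟨S, hSc, hSd, hSm⟩ := cp_one hq hl hi hχ (hW hlW)
  have hr := (isChar_of_mem hχ).res K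
  have hresfix : pw τ (res K χ) = res K χ := by
    ext x; exact congrFun hfix x
  have hSpw : ∀ ψ ∈ S, pw τ ψ ∈ S := fun ψ hψ => by
    have hψI := (hSd ψ hψ).1
    refine (hSm _ (pw_mem hψI hKcop)).2 ?_
    rw [← hresfix, ip_pw _ _ hKcop]
    exact (hSm _ hψI).1 hψ
  obtain ⟨ψ, hψ, hψfix⟩ : ∃ ψ ∈ S, pw τ ψ = ψ := by
    by_contra hcon
    push Not at hcon
    have h0 : ∑ ψ ∈ S, (1 : ZMod 2) = 0 :=
      Finset.sum_involution (fun ψ _ => pw τ ψ) (fun _ _ => by decide) (fun ψ hψ _ => hcon ψ hψ)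
        (fun ψ hψ => hSpw ψ hψ) (fun ψ _ => by
          ext x; simp only [pw]; rw [hKτ])
    rw [Finset.sum_const, hSc, nsmul_eq_mul, mul_one, ZMod.natCast_eq_zero_iff_even] at h0
    exact Nat.not_even_iff_odd.2 hqodd h0
  obtain ⟨hψI, hψd⟩ := hSd ψ hψ
  have hconj : ∀ φ ∈ S, ∃ g : G, ∀ x : K, φ x = ψ (MulAut.conjNormal g x) := fun φ hφ =>
    clifford K hχ hψI (hSd φ hφ).1 ((hSm _ hψI).1 hψ) ((hSm _ (hSd φ hφ).1).1 hφ)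
  have hallfix : ∀ φ ∈ S, pw τ φ = φ := by
    intro φ hφ
    obtain ⟨g, hg⟩ := hconj φ hφ
    ext x
    simp only [pw]
    rw [hg, hg, map_pow]
    exact congrFun hψfix _
  let ρ := MonoidHom.compHom' (P := ℂˣ) K.subtype
  have hWle : W.map ρ ≤ stab ψ := by
    rintro _ ⟨ν, hν, rfl⟩
    have hmemS : tw (ρ ν) ψ ∈ S := by
      refine (hSm _ (tw_mem _ hψI)).2 ?_
      have : res K χ = tw (ρ ν) (res K χ) := by
        ext x; exact (congrFun (hW hν) (x : G)).symm
      rw [this, ip_tw]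
      exact (hSm _ hψI).1 hψ
    refine mem_stab.2 (tau_eq hKodd hKτ (tw_mem _ hψI) hψI (hallfix _ hmemS) hψfix fun x hx => ?_)
    have : ν (x : G) = 1 := hWτ ν hν x (congrArg Subtype.val hx)
    have h2 : ρ ν x = 1 := this
    simp [tw, h2]
  have hNK : N ≤ K := perfect_le_ker hperf l
  have hcard := card_le_of_restrict hq hi W
  have hlt : Nat.card (W.map ρ) < n := by
    have h1 : Nat.card (W.map ρ) ≤ Nat.card W :=
      Nat.le_of_dvd Nat.card_pos (Subgroup.card_map_dvd _ _)
    refine lt_of_le_of_ne (hWn ▸ h1) fun h => ?_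
    have hinj : Function.Injective (ρ.comp W.subtype) := by
      have hb : (ρ.comp W.subtype).ker = ⊥ := by
        have h2 := Subgroup.index_mul_card (ρ.comp W.subtype).ker
        rw [Subgroup.index_ker, MonoidHom.range_comp, Subgroup.range_subtype, h, ← hWn] at h2
        refine Subgroup.eq_bot_of_card_eq _ (Nat.eq_of_mul_eq_mul_left Nat.card_pos
          (h2.trans (mul_one _).symm))
      exact (MonoidHom.ker_eq_bot_iff _).1 hb
    have h3 : (ρ.comp W.subtype) ⟨l, hlW⟩ = (ρ.comp W.subtype) 1 := by
      rw [map_one]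
      ext x
      have : l x = 1 := x.2
      exact congrArg Units.val this
    exact hl1 (congrArg Subtype.val (hinj h3))
  have hfin := ih _ hlt K hKodd τ hKcop hKτ (N.subgroupOf K) inferInstance
    (perfect_of_mulEquiv (Subgroup.subgroupOfEquivOfLe hNK).symm hperf) ψ hψI hψfix ?_ (W.map ρ) rfl hWle ?_
  · rw [hψd]
    calc 5 * Nat.card W ≤ 5 * (q * Nat.card (W.map ρ)) := Nat.mul_le_mul_left _ hcard
      _ = q * (5 * Nat.card (W.map ρ)) := by ring
      _ ≤ q * deg ψ := Nat.mul_le_mul_left _ hfin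
  · intro hcon
    apply hker
    intro n hn
    have h1 := hr.expand
    have h2 : res K χ ⟨n, hNK hn⟩ = res K χ 1 := by
      rw [h1, Finset.sum_apply, Finset.sum_apply]
      refine Finset.sum_congr rfl fun φ hφ => ?_
      by_cases h0 : mult (res K χ) φ = 0
      · simp [h0]
      have hφI := mem_irr.1 hφ
      obtain ⟨g, hg⟩ := hconj φ ((hSm φ hφI).2 ((mult_ne_iff hr (isChar_of_mem hφI)).1 h0))
      simp only [Pi.smul_apply]
      rw [hg, hg, map_one, hcon]
      rw [Subgroup.mem_subgroupOf, MulAut.conjNormal_apply]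
      exact hN.conj_mem n hn g
    exact h2
  · rintro _ ⟨ν, hν, rfl⟩ x hx
    exact hWτ ν hν x (congrArg Subtype.val hx)

end AcdK

/-! ### The Galois twist attached to a subfield -/

namespace AcdK

lemma modEq_of_pow_eq {M : Type} [Monoid M] {x : M} {n i j : ℕ} (hn : 0 < n) (hx : orderOf x = n)
    (h : x ^ i = x ^ j) : i ≡ j [MOD n] := by
  rw [← hx]
  exact (IsOfFinOrder.pow_eq_pow_iff_modEq (orderOf_pos_iff.1 (hx ▸ hn))).1 h

section Tau

variable {G : Type} [Group G] [Finite G]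

lemma tau_sq {q m t : ℕ} (hcard : Nat.card G = q * m) (hqm : q.Coprime m) (hm : m ∣ t + 1)
    (hq : t ^ q ≡ 1 [MOD q]) (hodd : Odd q) (x : G) : (x ^ (t ^ q)) ^ (t ^ q) = x := by
  have h1 : (t ^ q) * (t ^ q) ≡ 1 [MOD q * m] := by
    rw [← Nat.modEq_and_modEq_iff_modEq_mul hqm]
    refine ⟨hq.mul hq, ?_⟩
    have h2 : (t : ZMod m) = -1 := by
      have : ((t + 1 : ℕ) : ZMod m) = 0 := (ZMod.natCast_eq_zero_iff _ _).2 hm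
      push_cast at this
      linear_combination this
    rw [← ZMod.natCast_eq_natCast_iff]
    push_cast
    rw [h2, hodd.neg_one_pow]; ring
  rw [← pow_mul]
  conv_rhs => rw [← pow_one x]
  exact pow_eq_pow_iff_modEq.2 (h1.of_dvd (hcard ▸ orderOf_dvd_natCard x))

lemma tau_fix {q m t : ℕ} (hG : Odd (Nat.card G)) (hcard : Nat.card G = q * m) (hqm : q.Coprime m)
    (hm : m ∣ t + 1) (hq : t ^ q ≡ 1 [MOD q]) (hodd : Odd q) (x : G) :
    x ^ (t ^ q) = x ↔ x ^ q = 1 := by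
  constructor
  · intro h
    have h1 : (x ^ q) ^ m = 1 := by rw [← pow_mul, ← hcard, pow_card_eq_one']
    have h2 : t ^ q + 1 ≡ 0 [MOD m] := by
      have h2 : (t : ZMod m) = -1 := by
        have : ((t + 1 : ℕ) : ZMod m) = 0 := (ZMod.natCast_eq_zero_iff _ _).2 hm
        push_cast at this
        linear_combination this
      rw [← ZMod.natCast_eq_natCast_iff]
      push_cast
      rw [h2, hodd.neg_one_pow]; ring
    have h3 : (x ^ q) ^ (t ^ q + 1) = 1 := by
      obtain ⟨c, hc⟩ := (Nat.modEq_zero_iff_dvd).1 h2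
      rw [hc, pow_mul, h1, one_pow]
    have h4 : (x ^ q) ^ 2 = 1 := by
      have e : (x ^ q) ^ (t ^ q) = x ^ q := by rw [← pow_mul, mul_comm, pow_mul, h]
      rw [pow_succ, e] at h3
      rw [sq]; exact h3
    have h5 := orderOf_dvd_of_pow_eq_one h4
    have h6 := Nat.eq_one_of_dvd_coprimes (Nat.coprime_two_left.2 hG) h5 (orderOf_dvd_natCard _)
    exact orderOf_eq_one_iff.1 h6
  · intro h
    conv_rhs => rw [← pow_one x]
    exact pow_eq_pow_iff_modEq.2 (hq.of_dvd (orderOf_dvd_of_pow_eq_one h))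

end Tau

lemma exists_t0_aux {G : Type} [Group G] [Finite G] (hG : Odd (Nat.card G)) {p a m : ℕ}
    (hp : p.Prime) (hodd : Odd p) (hcard : Nat.card G = p ^ a * m) (hpm : (p ^ a).Coprime m)
    {k : Subfield ℂ} (hkp : ∀ z : ℂ, IsPrimitiveRoot z p → z ∈ k) (E : Type) [Field E] [Algebra k E]
    [IsCyclotomicExtension {Nat.card G} k E] [IsGalois k E] [FiniteDimensional k E]
    (φ : E →ₐ[k] ℂ) : ∃ t : ℕ, t.Coprime (Nat.card G) ∧ m ∣ t + 1 ∧ t ^ (p ^ a) ≡ 1 [MOD p ^ a] ∧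
      (∀ z ∈ k, z ^ (p ^ a) = 1 → z ^ t = z) ∧
      ∀ χ ∈ Irr G, pw t χ = χ → ∀ x, χ x ∈ k := by
  have hn : NeZero (Nat.card G) := ⟨Nat.card_pos.ne'⟩
  have hpa : NeZero (p ^ a) := ⟨(pow_pos hp.pos a).ne'⟩
  have hqodd : Odd (p ^ a) := hodd.pow
  have hζ := IsCyclotomicExtension.zeta_spec (Nat.card G) k E
  set ζ := IsCyclotomicExtension.zeta (Nat.card G) k E
  have hμ : IsPrimitiveRoot (ζ ^ m) (p ^ a) := hζ.pow Nat.card_pos (by rw [hcard, mul_comm])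
  have hφμ : IsPrimitiveRoot (φ (ζ ^ m)) (p ^ a) := hμ.map_of_injective φ.injective
  have hφζ : IsPrimitiveRoot (φ ζ) (Nat.card G) := hζ.map_of_injective φ.injective
  have hp2 : p ≠ 2 := by rintro rfl; exact absurd hodd (by decide)
  have := ZMod.isCyclic_units_of_prime_pow p hp hp2 a
  obtain ⟨⟨g, σ₀, hσ₀⟩, hgen⟩ := IsCyclic.exists_monoid_generator (α := (hμ.autToPow k).range)
  set u := (g : ZMod (p ^ a)).val with hu
  have hσu : σ₀ (ζ ^ m) = (ζ ^ m) ^ u := by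
    rw [← hμ.autToPow_spec k σ₀, hσ₀]
  have hucast : (u : ZMod (p ^ a)) = g := ZMod.natCast_zmod_val _
  have hucop : u.Coprime (p ^ a) := ZMod.val_coe_unit_coprime g
  obtain ⟨t, ht1, ht2⟩ := Nat.chineseRemainder hpm u (m * 2 - 1)
  have hm0 : 0 < m := Nat.pos_of_ne_zero fun h => by
    rw [h, mul_zero] at hcard; exact Nat.card_pos.ne' hcard
  have hmt : m ∣ t + 1 := by
    have h1 : t + 1 ≡ m * 2 - 1 + 1 [MOD m] := ht2.add_right 1
    rw [Nat.sub_add_cancel (by omega)] at h1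
    exact (Nat.modEq_zero_iff_dvd).1 (h1.trans ((Nat.modEq_zero_iff_dvd).2 (Dvd.intro _ rfl)))
  have hfixk : ∀ z ∈ k, z ^ (p ^ a) = 1 → z ^ u = z := by
    intro z hz hz1
    obtain ⟨j, -, hj⟩ := hφμ.eq_pow_of_pow_eq_one hz1
    have h1 : (ζ ^ m) ^ j = algebraMap k E ⟨z, hz⟩ := by
      refine φ.injective (?_ : φ _ = φ _)
      rw [map_pow, hj, AlgHom.commutes]; rfl
    have h2 : σ₀ ((ζ ^ m) ^ j) = (ζ ^ m) ^ j := by rw [h1, AlgEquiv.commutes]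
    rw [map_pow, hσu, ← pow_mul, mul_comm, pow_mul] at h2
    have h3 := congrArg φ h2
    rw [map_pow, map_pow, hj] at h3
    exact h3
  have hfixt : ∀ z ∈ k, z ^ (p ^ a) = 1 → z ^ t = z := by
    intro z hz hz1
    have h1 : t ≡ u [MOD orderOf z] := ht1.of_dvd (orderOf_dvd_of_pow_eq_one hz1)
    have h2 : IsOfFinOrder z := isOfFinOrder_iff_pow_eq_one.2 ⟨p ^ a, pow_pos hp.pos a, hz1⟩
    exact ((IsOfFinOrder.pow_eq_pow_iff_modEq h2).2 h1).trans (hfixk z hz hz1)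
  have htq : t ^ (p ^ a) ≡ 1 [MOD p ^ a] := by
    rcases Nat.eq_zero_or_pos a with rfl | ha
    · rw [pow_zero]; exact Nat.modEq_one
    have hz := hφμ.pow (pow_pos hp.pos a) (a := p ^ (a - 1)) (b := p) (by
      rw [← pow_succ, Nat.sub_add_cancel ha])
    have h1 := hfixt _ (hkp _ hz) (by rw [← pow_mul, mul_comm, pow_mul, hφμ.pow_eq_one, one_pow])
    have h2 : t ≡ 1 [MOD p] := modEq_of_pow_eq hp.pos hz.eq_orderOf.symm (h1.trans (pow_one _).symm)
    have h3 : ((p : ℕ) : ℤ) ∣ (t : ℤ) - 1 := (Nat.modEq_iff_dvd.1 h2.symm)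
    have h4 := dvd_sub_pow_of_dvd_sub h3 a
    apply Nat.ModEq.symm
    rw [Nat.modEq_iff_dvd]
    push_cast
    rw [one_pow] at h4
    exact (pow_dvd_pow _ (Nat.le_succ a)).trans h4
  have htcop : t.Coprime (Nat.card G) := by
    rw [hcard]
    refine Nat.Coprime.mul_right ?_ ?_
    · have := ht1.gcd_eq
      rw [Nat.Coprime, this]; exact hucop
    · refine Nat.Coprime.coprime_dvd_right hmt ?_
      simp
  refine ⟨t, htcop, hmt, htq, hfixt, fun χ hχ hfix x => ?_⟩
  have hpows : ∀ i, pw (t ^ i) χ = χ := by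
    intro i
    induction i with
    | zero => ext; simp [pw]
    | succ i ih => rw [pow_succ, ← pw_pw, hfix, ih]
  obtain ⟨s, c, e, he, hval⟩ := (isChar_of_mem hχ).eigen x
  have hej : ∀ i ∈ s, ∃ j : ℕ, φ ζ ^ j = e i := by
    intro i hi
    have : e i ^ Nat.card G = 1 := by
      obtain ⟨d, hd⟩ := orderOf_dvd_natCard x
      rw [hd, pow_mul, he i hi, one_pow]
    obtain ⟨j, -, hj⟩ := hφζ.eq_pow_of_pow_eq_one this
    exact ⟨j, hj⟩
  choose! j hj using hej
  let y : E := ∑ i ∈ s, (c i : E) * ζ ^ j i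
  have hy : φ y = χ x := by
    have h1 := hval 1
    rw [pow_one] at h1
    rw [h1, map_sum]
    refine Finset.sum_congr rfl fun i hi => ?_
    rw [map_mul, map_natCast, map_pow, hj i hi, pow_one]
  have hybot : y ∈ (⊥ : IntermediateField k E) := by
    rw [IsGalois.mem_bot_iff_fixed]
    intro σ
    refine φ.injective (?_ : φ _ = φ _)
    obtain ⟨v, hv⟩ : ∃ v, v = ((hζ.autToPow k σ : (ZMod (Nat.card G))ˣ) : ZMod (Nat.card G)).val :=
      ⟨_, rfl⟩
    have hσζ : σ ζ = ζ ^ v := by rw [hv, hζ.autToPow_spec k σ]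
    have hvcop : v.Coprime (Nat.card G) := hv ▸ ZMod.val_coe_unit_coprime _
    have h1 : φ (σ y) = χ (x ^ v) := by
      rw [hval v, map_sum, map_sum]
      refine Finset.sum_congr rfl fun i hi => ?_
      rw [map_mul, map_natCast, map_mul, map_natCast, map_pow, hσζ, map_pow, map_pow, ← pow_mul,
        mul_comm v, pow_mul, hj i hi]
    rw [h1, hy]
    obtain ⟨i, hi⟩ := hgen ⟨hμ.autToPow k σ, σ, rfl⟩
    have hi' : g ^ i = hμ.autToPow k σ := congrArg Subtype.val hi
    have hvu : v ≡ t ^ i [MOD p ^ a] := by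
      refine Nat.ModEq.trans ?_ (ht1.pow i).symm
      have h2 : (ζ ^ m) ^ v = (ζ ^ m) ^ ((hμ.autToPow k σ : (ZMod (p ^ a))ˣ) : ZMod (p ^ a)).val := by
        rw [hμ.autToPow_spec k σ, map_pow, hσζ, ← pow_mul, ← pow_mul, mul_comm]
      have h3 := modEq_of_pow_eq (pow_pos hp.pos a) hμ.eq_orderOf.symm h2
      refine h3.trans ?_
      rw [← ZMod.natCast_eq_natCast_iff, ZMod.natCast_zmod_val, ← hi']
      push_cast
      rw [hucast]
    have hpw : pw v χ = χ := by
      refine tau_eq hG (tau_sq hcard hpm hmt htq hqodd) (pw_mem hχ hvcop) hχ ?_ (hpows _) ?_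
      · rw [pw_pw, mul_comm, ← pw_pw, hpows]
      · intro z hz
        rw [tau_fix hG hcard hpm hmt htq hqodd] at hz
        have h4 : z ^ v = z ^ (t ^ i) :=
          pow_eq_pow_iff_modEq.2 (hvu.of_dvd (orderOf_dvd_of_pow_eq_one hz))
        simp only [pw]
        rw [h4]
        exact congrFun (hpows i) z
    exact congrFun hpw x
  obtain ⟨w, hw⟩ := IntermediateField.mem_bot.1 hybot
  rw [← hy, ← hw, AlgHom.commutes]
  exact w.2

/-- There is a power map `x ↦ x ^ t` that inverts `p'`-elements, whose fixed irreducible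
characters are `k`-valued, and which fixes the linear characters of `p`-power order over `k`. -/
lemma exists_t0 {G : Type} [Group G] [Finite G] (hG : Odd (Nat.card G)) {p a m : ℕ}
    (hp : p.Prime) (hodd : Odd p) (hcard : Nat.card G = p ^ a * m) (hpm : (p ^ a).Coprime m)
    {k : Subfield ℂ} (hkp : ∀ z : ℂ, IsPrimitiveRoot z p → z ∈ k) :
    ∃ t : ℕ, t.Coprime (Nat.card G) ∧ m ∣ t + 1 ∧ t ^ (p ^ a) ≡ 1 [MOD p ^ a] ∧
      (∀ z ∈ k, z ^ (p ^ a) = 1 → z ^ t = z) ∧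
      ∀ χ ∈ Irr G, pw t χ = χ → ∀ x, χ x ∈ k := by
  have hn : NeZero (Nat.card G) := ⟨Nat.card_pos.ne'⟩
  have : NeZero ((Nat.card G : ℕ) : k) := ⟨Nat.cast_ne_zero.2 Nat.card_pos.ne'⟩
  obtain ⟨E, _, _, _⟩ : ∃ (E : Type) (_ : Field E) (_ : Algebra k E),
      IsCyclotomicExtension {Nat.card G} k E :=
    ⟨_, _, _, CyclotomicField.isCyclotomicExtension (Nat.card G) k⟩
  have : FiniteDimensional k E := IsCyclotomicExtension.finiteDimensional {Nat.card G} k E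
  have : IsGalois k E := IsCyclotomicExtension.isGalois {Nat.card G} k E
  exact exists_t0_aux hG hp hodd hcard hpm hkp E IsAlgClosed.lift

end AcdK

/-! ### Integer matrices modulo `p` and permutation modules -/

namespace AcdK

open Matrix Module

section Minor

variable {K : Type*} [Field K] {m n : Type} [Fintype m] [Fintype n]

lemma exists_minor (A : Matrix m n K) :
    ∃ (r : Fin A.rank → m) (c : Fin A.rank → n), (A.submatrix r c).det ≠ 0 := by
  classical
  have key : ∀ {m n : Type} [Fintype m] [Fintype n] (A : Matrix m n K),
      ∃ c : Fin A.rank → n, LinearIndependent K (fun i => A.col (c i)) := by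
    intro m n _ _ A
    obtain ⟨κ, a, ha, hs, hli⟩ := exists_linearIndependent' K A.col
    have : Finite κ := Finite.of_injective a ha
    have := Fintype.ofFinite κ
    have h1 : Fintype.card κ = A.rank := by
      rw [rank_eq_finrank_span_cols, ← hs, finrank_span_eq_card hli]
    let e := Fintype.equivFinOfCardEq h1
    exact ⟨fun i => a (e.symm i), hli.comp _ e.symm.injective⟩
  obtain ⟨c, hc⟩ := key A
  have hr : ((A.submatrix id c)ᵀ).rank = A.rank := by
    have : LinearIndependent K ((A.submatrix id c)ᵀ).row := hc
    rw [this.rank_matrix, Fintype.card_fin]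
  obtain ⟨r, hr'⟩ := key (A.submatrix id c)ᵀ
  refine ⟨fun i => r (Fin.cast hr.symm i), c, ?_⟩
  have h2 : LinearIndependent K (A.submatrix (fun i => r (Fin.cast hr.symm i)) c).row :=
    hr'.comp _ (Fin.cast_injective _)
  have h3 := (linearIndependent_rows_iff_isUnit).1 h2
  exact ((isUnit_iff_isUnit_det _).1 h3).ne_zero

lemma le_rank_of_minor (A : Matrix m n K) {s : ℕ} (r : Fin s → m) (c : Fin s → n)
    (h : (A.submatrix r c).det ≠ 0) : s ≤ A.rank := by
  have h1 := rank_of_det_ne_zero h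
  rw [Fintype.card_fin] at h1
  rw [← h1]
  exact rank_submatrix_le A r c

end Minor

/-- Reduction modulo `p` does not increase the rank of an integer matrix. -/
lemma rank_mod_le {p : ℕ} [Fact p.Prime] {m n : Type} [Fintype m] [Fintype n]
    (A : Matrix m n ℤ) :
    (A.map (Int.cast : ℤ → ZMod p)).rank ≤ (A.map (Int.cast : ℤ → ℂ)).rank := by
  obtain ⟨r, c, h⟩ := exists_minor (A.map (Int.cast : ℤ → ZMod p))
  refine le_rank_of_minor _ r c ?_
  have h1 : (A.map (Int.cast : ℤ → ZMod p)).submatrix r c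
      = (A.submatrix r c).map (Int.castRingHom (ZMod p)) := rfl
  have h2 : (A.map (Int.cast : ℤ → ℂ)).submatrix r c
      = (A.submatrix r c).map (Int.castRingHom ℂ) := rfl
  rw [h1, ← RingHom.mapMatrix_apply, ← RingHom.map_det] at h
  rw [h2, ← RingHom.mapMatrix_apply, ← RingHom.map_det]
  intro h3
  apply h
  rw [eq_intCast, Int.cast_eq_zero] at h3
  rw [h3, map_zero]

section Orbits

variable {S : Type} [Fintype S] [DecidableEq S]

/-- The `K`-valued functions on `S` invariant under the permutation `c`. -/
def inv (K : Type*) [Field K] (c : Equiv.Perm S) : Submodule K (S → K) :=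
  LinearMap.ker (LinearMap.funLeft K K c - 1)

lemma mem_inv {K : Type*} [Field K] {c : Equiv.Perm S} {f : S → K} :
    f ∈ inv K c ↔ f ∘ c = f := by
  rw [inv, LinearMap.mem_ker, LinearMap.sub_apply, sub_eq_zero]; rfl

/-- The number of cycles of `c`, fixed points included. -/
noncomputable def norb (c : Equiv.Perm S) : ℕ :=
  Nat.card (Quotient (Equiv.Perm.SameCycle.setoid c))

lemma inv_const {K : Type*} [Field K] {c : Equiv.Perm S} {f : S → K} (hf : f ∈ inv K c) {x y : S}
    (h : c.SameCycle x y) : f x = f y := by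
  rw [mem_inv] at hf
  have h1 : ∀ (i : ℕ) x, f ((c ^ i) x) = f x := by
    intro i
    induction i with
    | zero => simp
    | succ i ih => intro x; rw [pow_succ', Equiv.Perm.mul_apply, ← ih x]; exact congrFun hf _
  obtain ⟨i, -, hi⟩ := h.exists_pow_eq'
  rw [← hi, h1]

lemma finrank_inv (K : Type*) [Field K] (c : Equiv.Perm S) : finrank K (inv K c) = norb c := by
  classical
  let e : (Quotient (Equiv.Perm.SameCycle.setoid c) → K) ≃ₗ[K] inv K c :=
    { toFun := fun g => ⟨fun x => g (Quotient.mk _ x), by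
        rw [mem_inv]; ext x
        exact congrArg g (Quotient.sound (Equiv.Perm.sameCycle_apply_left.2
          (Equiv.Perm.SameCycle.refl c x)))⟩
      invFun := fun f q => Quotient.lift f.1 (fun x y h => inv_const f.2 h) q
      map_add' := fun _ _ => rfl
      map_smul' := fun _ _ => rfl
      left_inv := fun g => by
        ext q; induction q using Quotient.inductionOn; rfl
      right_inv := fun f => rfl }
  have := Fintype.ofFinite (Quotient (Equiv.Perm.SameCycle.setoid c))
  rw [← e.finrank_eq, finrank_fintype_fun_eq_card, norb, Nat.card_eq_fintype_card]

lemma card_cycle (c : Equiv.Perm S) (x : S) :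
    (Finset.univ.filter fun y => c.SameCycle x y).card = Function.minimalPeriod c x := by
  have h0 : 0 < Function.minimalPeriod c x := Function.minimalPeriod_pos_of_mem_periodicPts
    ((Equiv.injective c).mem_periodicPts x)
  have h1 : (Finset.univ.filter fun y => c.SameCycle x y)
      = (Finset.range (Function.minimalPeriod c x)).image fun i => c^[i] x := by
    ext y
    simp only [Finset.mem_filter, Finset.mem_univ, true_and, Finset.mem_image, Finset.mem_range]
    constructor
    · intro h
      obtain ⟨i, -, hi⟩ := h.exists_pow_eq'
      refine ⟨i % Function.minimalPeriod c x, Nat.mod_lt _ h0, ?_⟩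
      rw [Function.iterate_mod_minimalPeriod_eq, ← hi, Equiv.Perm.coe_pow]
    · rintro ⟨i, -, rfl⟩
      exact ⟨i, by rw [zpow_natCast, Equiv.Perm.coe_pow]⟩
  rw [h1, Finset.card_image_of_injOn, Finset.card_range]
  intro i hi j hj h
  exact Function.iterate_injOn_Iio_minimalPeriod (by simpa using hi) (by simpa using hj) h

lemma norb_eq_sum (c : Equiv.Perm S) :
    (norb c : ℚ) = ∑ x : S, (Function.minimalPeriod c x : ℚ)⁻¹ := by
  classical
  have := Fintype.ofFinite (Quotient (Equiv.Perm.SameCycle.setoid c))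
  rw [norb, Nat.card_eq_fintype_card, ← Finset.card_univ, Finset.card_eq_sum_ones, Nat.cast_sum,
    ← Finset.sum_fiberwise (s := Finset.univ)
      (g := fun x => (Quotient.mk (Equiv.Perm.SameCycle.setoid c) x))]
  refine Finset.sum_congr rfl fun q _ => ?_
  induction q using Quotient.inductionOn with
  | h x =>
  have h1 : (Finset.univ.filter fun y => Quotient.mk (Equiv.Perm.SameCycle.setoid c) y
      = Quotient.mk (Equiv.Perm.SameCycle.setoid c) x)
      = Finset.univ.filter fun y => c.SameCycle x y := by
    ext y
    simp only [Finset.mem_filter, Finset.mem_univ, true_and, Quotient.eq]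
    exact Equiv.Perm.sameCycle_comm
  have h2 : ∀ y ∈ Finset.univ.filter (fun y => c.SameCycle x y),
      (Function.minimalPeriod c y : ℚ)⁻¹ = (Function.minimalPeriod c x : ℚ)⁻¹ := by
    intro y hy
    have hy : c.SameCycle x y := by simpa using hy
    rw [← card_cycle, ← card_cycle]
    congr 3
    ext z
    simp only [Finset.mem_filter, Finset.mem_univ, true_and]
    exact ⟨hy.trans, hy.symm.trans⟩
  have h0 : 0 < Function.minimalPeriod c x := Function.minimalPeriod_pos_of_mem_periodicPts
    ((Equiv.injective c).mem_periodicPts x)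
  rw [h1, Finset.sum_congr rfl h2, Finset.sum_const, card_cycle, nsmul_eq_mul,
    mul_inv_cancel₀ (by exact_mod_cast h0.ne'), Nat.cast_one]

lemma norb_pow {p n : ℕ} (hp : p.Prime) (c : Equiv.Perm S) (hc : c ^ p ^ n = 1) :
    norb (c ^ p) + (p - 1) * (Finset.univ.filter fun x => c x = x).card = p * norb c := by
  have h : (norb (c ^ p) : ℚ) + ((p : ℚ) - 1) * (Finset.univ.filter fun x => c x = x).card
      = p * norb c := by
    rw [norb_eq_sum, norb_eq_sum, Finset.card_filter, Nat.cast_sum, Finset.mul_sum, Finset.mul_sum,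
      ← Finset.sum_add_distrib]
    refine Finset.sum_congr rfl fun x _ => ?_
    by_cases hx : c x = x
    · have h1 : Function.minimalPeriod c x = 1 := Function.minimalPeriod_eq_one_iff_isFixedPt.2 hx
      have h2 : Function.minimalPeriod (c ^ p : Equiv.Perm S) x = 1 := by
        apply Function.minimalPeriod_eq_one_iff_isFixedPt.2
        rw [Equiv.Perm.coe_pow]; exact Function.IsFixedPt.iterate hx p
      rw [h1, h2, if_pos hx]; push_cast; ring
    · have h1 : Function.minimalPeriod c x ∣ p ^ n := by
        apply Function.IsPeriodicPt.minimalPeriod_dvd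
        rw [Function.IsPeriodicPt, ← Equiv.Perm.coe_pow, hc]; rfl
      have h3 : p ∣ Function.minimalPeriod c x := by
        obtain ⟨j, -, hj⟩ := (Nat.dvd_prime_pow hp).1 h1
        rcases Nat.eq_zero_or_pos j with rfl | hj0
        · exact absurd (Function.minimalPeriod_eq_one_iff_isFixedPt.1 (by simpa using hj)) hx
        · rw [hj]; exact dvd_pow_self p hj0.ne'
      have h2 : Function.minimalPeriod (c ^ p : Equiv.Perm S) x * p
          = Function.minimalPeriod c x := by
        rw [Equiv.Perm.coe_pow, Function.minimalPeriod_iterate_eq_div_gcd hp.ne_zero,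
          Nat.gcd_eq_right h3, Nat.div_mul_cancel h3]
      have hp0 : (p : ℚ) ≠ 0 := by exact_mod_cast hp.ne_zero
      rw [← h2, if_neg hx]
      push_cast
      rw [mul_inv]
      field_simp
      ring
  have h1 : ((p - 1 : ℕ) : ℚ) = (p : ℚ) - 1 := by rw [Nat.cast_sub hp.one_le, Nat.cast_one]
  rw [← h1] at h
  exact_mod_cast h

end Orbits

end AcdK

namespace AcdK

open Matrix Module

section Abstract

variable {Ω : Type} [Fintype Ω] [DecidableEq Ω]

lemma finrank_map_add {K V W : Type*} [Field K] [AddCommGroup V] [Module K V]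
    [FiniteDimensional K V] [AddCommGroup W] [Module K W] (f : V →ₗ[K] W) (M : Submodule K V) :
    finrank K (M.map f) + finrank K (M ⊓ LinearMap.ker f : Submodule K V) = finrank K M := by
  have h := LinearMap.finrank_range_add_finrank_ker (f.domRestrict M)
  rw [LinearMap.range_domRestrict, LinearMap.ker_domRestrict] at h
  rw [← h, inf_comm]
  congr 1
  rw [← Submodule.finrank_map_subtype_eq, Submodule.map_comap_subtype, inf_comm]

/-- The matrix of `a ↦ (E a) ∘ γ - E a`. -/
def shift {R : Type*} [Ring R] (E : Matrix Ω Ω R) (γ : Equiv.Perm Ω) : Matrix Ω Ω R :=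
  Matrix.of fun i j => E (γ i) j - E i j

lemma map_range_shift {K : Type*} [Field K] (E : Matrix Ω Ω K) (γ : Equiv.Perm Ω) :
    (LinearMap.range E.mulVecLin).map (LinearMap.funLeft K K γ - 1)
      = LinearMap.range (shift E γ).mulVecLin := by
  rw [← LinearMap.range_comp]
  congr 1
  ext a i
  simp [shift, LinearMap.funLeft, mulVec, dotProduct, Pi.single_apply]

lemma finrank_shift {K : Type*} [Field K] (E : Matrix Ω Ω K) (γ : Equiv.Perm Ω) :
    (shift E γ).rank + finrank K (LinearMap.range E.mulVecLin ⊓ inv K γ : Submodule K (Ω → K))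
      = E.rank := by
  have := finrank_map_add (LinearMap.funLeft K K γ - 1) (LinearMap.range E.mulVecLin)
  rw [map_range_shift] at this
  exact this

lemma funLeft_pow {K : Type*} [Field K] (β : Equiv.Perm Ω) (i : ℕ) :
    (LinearMap.funLeft K K β : End K (Ω → K)) ^ i = LinearMap.funLeft K K (β ^ i : Equiv.Perm Ω) := by
  induction i with
  | zero => ext; simp
  | succ i ih => rw [pow_succ, ih]; ext; simp [LinearMap.funLeft, pow_succ']

lemma funLeft_sub_pow {p : ℕ} [Fact p.Prime] (β : Equiv.Perm Ω) :
    (LinearMap.funLeft (ZMod p) (ZMod p) β - 1 : End (ZMod p) (Ω → ZMod p)) ^ p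
      = LinearMap.funLeft (ZMod p) (ZMod p) (β ^ p : Equiv.Perm Ω) - 1 := by
  have h : ((Polynomial.X : Polynomial (ZMod p)) - 1) ^ p = Polynomial.X ^ p - 1 := by
    rw [sub_pow_char, one_pow]
  have := congrArg (Polynomial.aeval
    (LinearMap.funLeft (ZMod p) (ZMod p) β : End (ZMod p) (Ω → ZMod p))) h
  simpa [funLeft_pow] using this

/-- Dimension of the kernel of a power, bounded along the filtration by kernels of powers. -/
lemma finrank_ker_pow {K V : Type*} [Field K] [AddCommGroup V] [Module K V]
    [FiniteDimensional K V] (T : End K V) (M : Submodule K V) (hM : ∀ m ∈ M, T m ∈ M) (i : ℕ) :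
    finrank K (M ⊓ LinearMap.ker (T ^ (i + 1)) : Submodule K V)
      ≤ finrank K (M ⊓ LinearMap.ker T : Submodule K V)
        + i * finrank K (M ⊓ LinearMap.ker T ⊓ M.map T : Submodule K V) := by
  have hpow : ∀ (i : ℕ), ∀ m ∈ M, (T ^ i) m ∈ M := by
    intro i
    induction i with
    | zero => intro m hm; simpa using hm
    | succ i ih => intro m hm; rw [pow_succ', End.mul_apply]; exact hM _ (ih m hm)
  induction i with
  | zero => rw [zero_add, pow_one, zero_mul, add_zero]
  | succ i ih =>
    have h := finrank_map_add (T ^ (i + 1)) (M ⊓ LinearMap.ker (T ^ (i + 1 + 1)))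
    have h1 : (M ⊓ LinearMap.ker (T ^ (i + 1 + 1))).map (T ^ (i + 1))
        ≤ M ⊓ LinearMap.ker T ⊓ M.map T := by
      rintro _ ⟨m, ⟨hm, hm'⟩, rfl⟩
      refine ⟨⟨hpow _ m hm, ?_⟩, ⟨(T ^ i) m, hpow _ m hm, ?_⟩⟩
      · have : (T ^ (i + 1 + 1)) m = 0 := hm'
        rw [pow_succ', End.mul_apply] at this
        exact this
      · rw [pow_succ', End.mul_apply]
    have h2 : M ⊓ LinearMap.ker (T ^ (i + 1 + 1)) ⊓ LinearMap.ker (T ^ (i + 1))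
        ≤ M ⊓ LinearMap.ker (T ^ (i + 1)) := fun x hx => ⟨hx.1.1, hx.2⟩
    have h3 := Submodule.finrank_mono h1
    have h4 := Submodule.finrank_mono h2
    rw [add_mul, one_mul]
    omega

/-- A Brauer-quotient bound: an integral quasi-idempotent `E` commuting with a permutation `β` of
`p`-power order on its index set, whose complex image is a permutation module on `𝒞`, restricts
modulo `p` to a matrix on the `β`-fixed indices of rank at most the number of fixed points on
`𝒞`. -/
theorem rank_fixed_le {p : ℕ} [hp : Fact p.Prime] {C : Type} [Fintype C] [DecidableEq C]
    (β : Equiv.Perm Ω) (c : Equiv.Perm C) (n : ℕ) (hc : c ^ p ^ n = 1) (E : Matrix Ω Ω ℤ)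
    (hE : ∀ i j, E (β i) (β j) = E i j) (κ : ℤ) (hκ : ((κ : ℤ) : ZMod p) ≠ 0) (hEE : E * E = κ • E)
    (Φ : (C → ℂ) →ₗ[ℂ] (Ω → ℂ)) (hΦ : Function.Injective Φ)
    (hΦr : LinearMap.range Φ = LinearMap.range (E.map (Int.cast : ℤ → ℂ)).mulVecLin)
    (hΦc : ∀ f, Φ (f ∘ c) = Φ f ∘ β) :
    ((E.map (Int.cast : ℤ → ZMod p)).submatrix (Subtype.val : {i // β i = i} → Ω)
      (Subtype.val : {i // β i = i} → Ω)).rank ≤ (Finset.univ.filter fun x => c x = x).card := by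
  classical
  have hκ0 : κ ≠ 0 := by rintro rfl; simp at hκ
  -- complex invariants
  have hΦpow : ∀ (i : ℕ) f, Φ (f ∘ (c ^ i : Equiv.Perm C)) = Φ f ∘ (β ^ i : Equiv.Perm Ω) := by
    intro i
    induction i with
    | zero => intro f; rfl
    | succ i ih =>
      intro f
      have : f ∘ (c ^ (i + 1) : Equiv.Perm C) = (f ∘ (c ^ i : Equiv.Perm C)) ∘ c := by
        ext x; simp [pow_succ]
      rw [this, hΦc, ih]
      ext x; simp [pow_succ]
  have hinv : ∀ i : ℕ, finrank ℂ (LinearMap.range (E.map (Int.cast : ℤ → ℂ)).mulVecLin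
      ⊓ inv ℂ (β ^ i) : Submodule ℂ (Ω → ℂ)) = norb (c ^ i) := by
    intro i
    rw [← finrank_inv ℂ, LinearEquiv.finrank_eq (Submodule.equivMapOfInjective Φ hΦ _)]
    suffices h : LinearMap.range (E.map (Int.cast : ℤ → ℂ)).mulVecLin ⊓ inv ℂ (β ^ i)
        = (inv ℂ (c ^ i)).map Φ by rw [h]
    rw [← hΦr]
    ext a
    constructor
    · rintro ⟨⟨f, rfl⟩, hf⟩
      refine ⟨f, ?_, rfl⟩
      rw [SetLike.mem_coe, mem_inv] at *
      apply hΦ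
      rw [hΦpow, hf]
    · rintro ⟨f, hf, rfl⟩
      refine ⟨⟨f, rfl⟩, ?_⟩
      rw [SetLike.mem_coe, mem_inv] at *
      rw [← hΦpow, hf]
  set Ec := E.map (Int.cast : ℤ → ℂ) with hEc
  set Ep := E.map (Int.cast : ℤ → ZMod p) with hEp
  set M := LinearMap.range Ep.mulVecLin with hM
  have hEEp : Ep * Ep = (κ : ZMod p) • Ep := by
    have h := congrArg (fun A : Matrix Ω Ω ℤ => A.map (Int.castRingHom (ZMod p))) hEE
    simp only [Matrix.map_mul] at h
    rw [hEp]
    refine h.trans ?_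
    ext i j
    simp [Matrix.smul_apply, -zsmul_eq_mul]
  have hEEc : Ec * Ec = (κ : ℂ) • Ec := by
    have h := congrArg (fun A : Matrix Ω Ω ℤ => A.map (Int.castRingHom ℂ)) hEE
    simp only [Matrix.map_mul] at h
    rw [hEc]
    refine h.trans ?_
    ext i j
    simp [Matrix.smul_apply, -zsmul_eq_mul]
  -- the rank of `E` is the same over both fields
  have hrank : Ec.rank ≤ Ep.rank := by
    have h1 : ((κ • (1 : Matrix Ω Ω ℤ) - E).map (Int.cast : ℤ → ℂ)).rank + Ec.rank
        ≤ Fintype.card Ω := by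
      apply rank_add_rank_le_card_of_mul_eq_zero
      have : (κ • (1 : Matrix Ω Ω ℤ) - E).map (Int.cast : ℤ → ℂ) = (κ : ℂ) • 1 - Ec := by
        ext i j
        simp only [hEc, Matrix.map_apply, Matrix.sub_apply, Matrix.smul_apply, Matrix.one_apply]
        split_ifs <;> simp
      rw [this, sub_mul, hEEc, smul_mul_assoc, one_mul, sub_self]
    have h2 : Fintype.card Ω ≤ ((κ • (1 : Matrix Ω Ω ℤ) - E).map (Int.cast : ℤ → ZMod p)).rank
        + Ep.rank := by
      have h3 : ((κ : ZMod p) • (1 : Matrix Ω Ω (ZMod p))).rank = Fintype.card Ω := by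
        rw [rank_smul_of_mem_nonZeroDivisors _ (mem_nonZeroDivisors_of_ne_zero hκ), rank_one]
      have h4 : (κ : ZMod p) • (1 : Matrix Ω Ω (ZMod p))
          = (κ • (1 : Matrix Ω Ω ℤ) - E).map (Int.cast : ℤ → ZMod p) + Ep := by
        ext i j
        simp only [hEp, Matrix.map_apply, Matrix.sub_apply, Matrix.smul_apply, Matrix.one_apply,
          Matrix.add_apply]
        split_ifs <;> simp
      rw [← h3, h4, Matrix.rank, Matrix.mulVecLin_add]
      refine (Submodule.finrank_mono (LinearMap.range_add_le _ _)).trans ?_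
      exact Submodule.finrank_add_le_finrank_add_finrank _ _
    have h5 := rank_mod_le (p := p) (κ • (1 : Matrix Ω Ω ℤ) - E)
    omega
  have hcomm : ∀ (a : Ω → ZMod p), (Ep.mulVec a) ∘ β = Ep.mulVec (a ∘ β) := by
    intro a
    ext i
    simp only [Function.comp, mulVec, dotProduct]
    rw [← Equiv.sum_comp β]
    refine Finset.sum_congr rfl fun j _ => ?_
    simp [hEp, hE]
  set T : End (ZMod p) (Ω → ZMod p) := LinearMap.funLeft (ZMod p) (ZMod p) β - 1 with hT
  have hTapp : ∀ f, T f = f ∘ β - f := fun f => rfl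
  have hTM : ∀ m ∈ M, T m ∈ M := by
    rintro _ ⟨a, rfl⟩
    rw [hTapp]
    refine sub_mem ⟨a ∘ β, ?_⟩ ⟨a, rfl⟩
    exact (hcomm a).symm
  -- invariants of `β ^ p`
  have h1 : norb (c ^ p) ≤ finrank (ZMod p) (M ⊓ LinearMap.ker (T ^ p) : Submodule _ _) := by
    have e1 := finrank_shift Ep (β ^ p)
    have e2 := finrank_shift Ec (β ^ p)
    have e3 := rank_mod_le (p := p) (shift E (β ^ p))
    have e4 : (shift E (β ^ p)).map (Int.cast : ℤ → ZMod p) = shift Ep (β ^ p) := by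
      ext i j; simp [shift, hEp]
    have e5 : (shift E (β ^ p)).map (Int.cast : ℤ → ℂ) = shift Ec (β ^ p) := by
      ext i j; simp [shift, hEc]
    rw [e4, e5] at e3
    rw [hinv p] at e2
    rw [← hM] at e1
    rw [hT, funLeft_sub_pow]
    change norb (c ^ p) ≤ finrank (ZMod p) (M ⊓ inv (ZMod p) (β ^ p) : Submodule _ _)
    omega
  -- invariants of `β`
  have h2 : finrank (ZMod p) (M ⊓ LinearMap.ker T : Submodule _ _) ≤ norb c := by
    have hfin := Fintype.ofFinite (Quotient (Equiv.Perm.SameCycle.setoid β))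
    let B : Matrix Ω (Quotient (Equiv.Perm.SameCycle.setoid β)) ℤ :=
      Matrix.of fun i q => if Quotient.mk _ i = q then 1 else 0
    have hB : ∀ (R : Type) [CommRing R] (g : Quotient (Equiv.Perm.SameCycle.setoid β) → R) (i : Ω),
        ((B.map (Int.cast : ℤ → R)).mulVec g) i = g (Quotient.mk _ i) := by
      intro R _ g i
      simp [B, mulVec, dotProduct]
    have e1 : (M ⊓ LinearMap.ker T : Submodule _ _)
        ≤ LinearMap.range (((E * B).map (Int.cast : ℤ → ZMod p))).mulVecLin := by
      rintro m ⟨⟨a, ha⟩, hm⟩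
      have hm' : m ∈ inv (ZMod p) β := hm
      let g : Quotient (Equiv.Perm.SameCycle.setoid β) → ZMod p :=
        fun q => Quotient.lift m (fun x y h => inv_const hm' h) q
      refine ⟨(κ : ZMod p)⁻¹ • g, ?_⟩
      have e2 : (E * B).map (Int.cast : ℤ → ZMod p) = Ep * B.map (Int.cast : ℤ → ZMod p) :=
        Matrix.map_mul (f := Int.castRingHom (ZMod p))
      have e3 : (B.map (Int.cast : ℤ → ZMod p)).mulVec g = m := by
        ext i; rw [hB]; rfl
      rw [e2, mulVecLin_apply, mulVec_smul, ← mulVec_mulVec, e3, ← ha, mulVecLin_apply,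
        mulVec_mulVec, hEEp, smul_mulVec, smul_smul, inv_mul_cancel₀ hκ, one_smul]
    refine (Submodule.finrank_mono e1).trans ((rank_mod_le _).trans ?_)
    have e4 := hinv 1
    rw [pow_one, pow_one] at e4
    rw [← e4]
    apply Submodule.finrank_mono
    have e2 : (E * B).map (Int.cast : ℤ → ℂ) = Ec * B.map (Int.cast : ℤ → ℂ) :=
      Matrix.map_mul (f := Int.castRingHom ℂ)
    rintro _ ⟨g, rfl⟩
    rw [e2, mulVecLin_apply, ← mulVec_mulVec]
    refine ⟨⟨_, rfl⟩, ?_⟩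
    rw [SetLike.mem_coe, mem_inv]
    ext i
    simp only [Function.comp, mulVec, dotProduct]
    rw [← Equiv.sum_comp β]
    refine Finset.sum_congr rfl fun j _ => ?_
    have e5 : Ec (β i) (β j) = Ec i j := by simp [hEc, hE]
    have e6 := hB ℂ g
    simp only [mulVec, dotProduct] at e6
    rw [e5, e6, e6]
    congr 2
    exact Quotient.sound (Equiv.Perm.sameCycle_apply_left.2 (Equiv.Perm.SameCycle.refl β j))
  -- projection to the fixed indices
  let pr : (Ω → ZMod p) →ₗ[ZMod p] ({i // β i = i} → ZMod p) :=
    LinearMap.funLeft (ZMod p) (ZMod p) Subtype.val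
  have h3 : (Ep.submatrix (Subtype.val : {i // β i = i} → Ω)
      (Subtype.val : {i // β i = i} → Ω)).rank
      + finrank (ZMod p) (M ⊓ LinearMap.ker T ⊓ M.map T : Submodule _ _)
      ≤ finrank (ZMod p) (M ⊓ LinearMap.ker T : Submodule _ _) := by
    rw [← finrank_map_add pr (M ⊓ LinearMap.ker T)]
    refine add_le_add (Submodule.finrank_mono ?_) (Submodule.finrank_mono ?_)
    · rw [Matrix.range_mulVecLin, Submodule.span_le]
      rintro _ ⟨j, rfl⟩
      refine ⟨Ep.mulVec (Pi.single j.1 1), ⟨⟨_, rfl⟩, ?_⟩, ?_⟩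
      · rw [SetLike.mem_coe, LinearMap.mem_ker, hTapp, hcomm]
        rw [sub_eq_zero]
        congr 1
        ext i
        simp only [Function.comp, Pi.single_apply]
        congr 1
        conv_lhs => rw [← j.2]
        simp [β.injective.eq_iff]
      · ext i
        simp [pr, LinearMap.funLeft]
    · rintro m ⟨⟨hm1, hm2⟩, ⟨m', hm', rfl⟩⟩
      refine ⟨⟨hm1, hm2⟩, ?_⟩
      rw [SetLike.mem_coe, LinearMap.mem_ker]
      ext i
      change T m' i.1 = 0
      rw [hTapp, Pi.sub_apply, Function.comp, i.2, sub_self]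
  have h4 := finrank_ker_pow T M hTM (p - 1)
  rw [Nat.sub_add_cancel hp.out.one_le] at h4
  have h5 := norb_pow hp.out c hc
  have hp2 := hp.out.two_le
  obtain ⟨q, rfl⟩ : ∃ q, p = q + 1 := ⟨p - 1, by omega⟩
  rw [Nat.add_sub_cancel] at h4 h5
  set ρ := (Ep.submatrix (Subtype.val : {i // β i = i} → Ω)
      (Subtype.val : {i // β i = i} → Ω)).rank
  set F := (Finset.univ.filter fun x => c x = x).card
  set d := finrank (ZMod (q + 1)) (M ⊓ LinearMap.ker T ⊓ M.map T : Submodule _ _)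
  by_contra hcon
  push Not at hcon
  have h6 : q * (ρ + d) ≤ q * norb c := Nat.mul_le_mul_left q (h3.trans h2)
  have h7 : q * (F + 1) ≤ q * ρ := Nat.mul_le_mul_left q hcon
  have hq : 0 < q := by omega
  nlinarith
end Abstract

end AcdK

/-! ### Integral class functions and the stable projector -/

namespace AcdK

/-- In the group algebra over `ZMod p` of an abelian `p`-group, an element of nonzero augmentation
is not a zero divisor. -/
lemma conv_eq_zero {p n : ℕ} [hp : Fact p.Prime] {W : Type} [CommGroup W] [Fintype W]
    (hW : ∀ w : W, w ^ p ^ n = 1) (g c : W → ZMod p) (hg : ∑ w, g w ≠ 0)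
    (h : ∀ s, ∑ w, c w * g (w⁻¹ * s) = 0) : c = 0 := by
  classical
  let a : MonoidAlgebra (ZMod p) W := ∑ w, MonoidAlgebra.single w (c w)
  let b : MonoidAlgebra (ZMod p) W := ∑ w, MonoidAlgebra.single w (g w)
  have hac : ∀ (c : W → ZMod p) s, (∑ w, MonoidAlgebra.single w (c w) : MonoidAlgebra (ZMod p) W).coeff s
      = c s := by
    intro c s
    rw [MonoidAlgebra.coeff_sum, Finsupp.finsetSum_apply]
    simp [Finsupp.single_apply]
  have hab : a * b = 0 := by
    apply MonoidAlgebra.coeff_injective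
    ext s
    rw [Finset.sum_mul, MonoidAlgebra.coeff_sum, Finsupp.finsetSum_apply, MonoidAlgebra.coeff_zero,
      Finsupp.zero_apply, ← h s]
    refine Finset.sum_congr rfl fun w _ => ?_
    rw [MonoidAlgebra.coeff_single_mul_apply, hac]
  have : CharP (MonoidAlgebra (ZMod p) W) p := by
    refine charP_of_injective_algebraMap (R := ZMod p) ?_ p
    exact (algebraMap (ZMod p) (MonoidAlgebra (ZMod p) W)).injective
  have hb : b ^ p ^ n = MonoidAlgebra.single 1 (∑ w, g w) := by
    rw [sum_pow_char_pow]
    have : ∀ w, (MonoidAlgebra.single w (g w)) ^ p ^ n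
        = (MonoidAlgebra.single 1 (g w) : MonoidAlgebra (ZMod p) W) := by
      intro w
      rw [MonoidAlgebra.single_pow, hW, ZMod.pow_card_pow]
    rw [Finset.sum_congr rfl fun w _ => this w]
    exact (map_sum (MonoidAlgebra.singleAddHom (1 : W)) g Finset.univ).symm
  have h2 : a * b ^ p ^ n = 0 := by
    have hpos : p ^ n = (p ^ n - 1) + 1 := (Nat.sub_add_cancel (pow_pos hp.out.pos n)).symm
    rw [hpos, pow_succ', ← mul_assoc, hab, zero_mul]
  ext s
  have h3 : (a * b ^ p ^ n).coeff s = 0 := by rw [h2]; rfl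
  rw [hb, MonoidAlgebra.coeff_mul_single_apply, inv_one, mul_one, hac] at h3
  rcases mul_eq_zero.1 h3 with h4 | h4
  · exact h4
  · exact absurd h4 hg

/-- The analogue of `conv_eq_zero` for a free action. -/
lemma conv_eq_zero_of_free {p n : ℕ} [hp : Fact p.Prime] {W S : Type} [CommGroup W] [Fintype W]
    [Fintype S] [MulAction W S] (hfree : ∀ (w : W) (s : S), w • s = s → w = 1)
    (hW : ∀ w : W, w ^ p ^ n = 1) (g : S → ZMod p) (c : W → ZMod p) (hg : ∑ s, g s ≠ 0)
    (h : ∀ s, ∑ w, c w * g (w⁻¹ • s) = 0) : c = 0 := by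
  classical
  obtain ⟨s₀, hs₀⟩ : ∃ s₀, ∑ w : W, g (w • s₀) ≠ 0 := by
    by_contra hcon
    push Not at hcon
    apply hg
    have := Fintype.ofFinite (MulAction.orbitRel.Quotient W S)
    rw [← Finset.sum_fiberwise (s := Finset.univ)
      (g := fun x => (Quotient.mk (MulAction.orbitRel W S) x))]
    refine Finset.sum_eq_zero fun q _ => ?_
    induction q using Quotient.inductionOn with
    | h s₀ =>
    rw [← hcon s₀]
    symm
    refine Finset.sum_bij (fun w _ => w • s₀) ?_ ?_ ?_ (fun _ _ => rfl)
    · intro w _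
      simp only [Finset.mem_filter, Finset.mem_univ, true_and, Quotient.eq]
      exact ⟨w, rfl⟩
    · intro w _ w' _ hw
      have : (w'⁻¹ * w) • s₀ = s₀ := by rw [mul_smul]; exact inv_smul_eq_iff.2 hw
      have := hfree _ _ this
      exact (inv_mul_eq_one.1 this).symm
    · intro x hx
      simp only [Finset.mem_filter, Finset.mem_univ, true_and, Quotient.eq] at hx
      obtain ⟨w, hw⟩ := hx
      exact ⟨w, Finset.mem_univ _, hw⟩
  refine conv_eq_zero hW (fun w => g (w • s₀)) c hs₀ fun s => ?_
  simpa [mul_smul] using h (s • s₀)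

lemma sum_eq_sum_fixed {p n : ℕ} [hp : Fact p.Prime] {S : Type} [Fintype S] [DecidableEq S]
    (β : Equiv.Perm S) (hβ : β ^ p ^ n = 1) (u : S → ZMod p) (hu : ∀ s, u (β s) = u s) :
    ∑ s, u s = ∑ s ∈ Finset.univ.filter (fun s => β s = s), u s := by
  classical
  have h : ∑ s ∈ Finset.univ.filter (fun s => ¬ β s = s), u s = 0 := by
    have := Fintype.ofFinite (Quotient (Equiv.Perm.SameCycle.setoid β))
    rw [← Finset.sum_fiberwise (g := fun x => (Quotient.mk (Equiv.Perm.SameCycle.setoid β) x))]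
    refine Finset.sum_eq_zero fun q _ => ?_
    by_cases hne : ∃ x, β x ≠ x ∧ Quotient.mk (Equiv.Perm.SameCycle.setoid β) x = q
    · obtain ⟨x, hx, rfl⟩ := hne
      have hinv : u ∈ inv (ZMod p) β := mem_inv.2 (funext hu)
      have h1 : ((Finset.univ.filter (fun s => ¬ β s = s)).filter fun y =>
          Quotient.mk (Equiv.Perm.SameCycle.setoid β) y
          = Quotient.mk (Equiv.Perm.SameCycle.setoid β) x)
          = Finset.univ.filter fun y => β.SameCycle x y := by
        ext y
        simp only [Finset.mem_filter, Finset.mem_univ, true_and, Quotient.eq]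
        constructor
        · rintro ⟨-, hy⟩; exact Equiv.Perm.SameCycle.symm hy
        · intro hy; exact ⟨fun h => hx (hy.apply_eq_self_iff.2 h), Equiv.Perm.SameCycle.symm hy⟩
      rw [h1, Finset.sum_congr rfl (g := fun _ => u x) fun y hy =>
        (inv_const hinv (by simpa using hy : β.SameCycle x y)).symm, Finset.sum_const, card_cycle]
      have h2 : Function.minimalPeriod β x ∣ p ^ n := by
        apply Function.IsPeriodicPt.minimalPeriod_dvd
        rw [Function.IsPeriodicPt, ← Equiv.Perm.coe_pow, hβ]; rfl
      have h3 : p ∣ Function.minimalPeriod β x := by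
        obtain ⟨j, -, hj⟩ := (Nat.dvd_prime_pow hp.out).1 h2
        rcases Nat.eq_zero_or_pos j with rfl | hj0
        · exact absurd (Function.minimalPeriod_eq_one_iff_isFixedPt.1 (by simpa using hj)) hx
        · rw [hj]; exact dvd_pow_self p hj0.ne'
      rw [nsmul_eq_mul, (ZMod.natCast_eq_zero_iff _ _).2 h3, zero_mul]
    · refine Finset.sum_eq_zero fun y hy => ?_
      simp only [Finset.mem_filter, Finset.mem_univ, true_and] at hy
      exact absurd ⟨y, hy⟩ hne
  rw [← Finset.sum_filter_add_sum_filter_not Finset.univ (fun s => β s = s), h, add_zero]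

section Integral

variable {G : Type} [Group G] [Finite G]

/-- Class functions that are integral combinations of irreducible characters. -/
def IsInt (f : G → ℂ) : Prop := IsClassFn f ∧ ∀ χ ∈ Irr G, ∃ n : ℤ, ip f χ = n

lemma IsChar.isInt {f : G → ℂ} (hf : IsChar f) : IsInt f :=
  ⟨hf.classFn, fun χ hχ => by
    obtain ⟨n, hn⟩ := ip_nat hf (isChar_of_mem hχ)
    exact ⟨n, by rw [hn]; simp⟩⟩

lemma IsInt.add {f g : G → ℂ} (hf : IsInt f) (hg : IsInt g) : IsInt (f + g) :=
  ⟨hf.1.add hg.1, fun χ hχ => by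
    obtain ⟨n, hn⟩ := hf.2 χ hχ
    obtain ⟨m, hm⟩ := hg.2 χ hχ
    exact ⟨n + m, by rw [ip_add_left, hn, hm]; push_cast; rfl⟩⟩

lemma IsInt.zsmul {f : G → ℂ} (hf : IsInt f) (a : ℤ) : IsInt ((a : ℂ) • f) :=
  ⟨hf.1.smul _, fun χ hχ => by
    obtain ⟨n, hn⟩ := hf.2 χ hχ
    exact ⟨a * n, by rw [ip_smul_left, hn]; push_cast; rfl⟩⟩

lemma IsInt.zero : IsInt (0 : G → ℂ) := ⟨fun _ _ => rfl, fun χ _ => ⟨0, by simp [ip]⟩⟩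

lemma IsInt.sum {ι : Type*} (s : Finset ι) (f : ι → G → ℂ) (hf : ∀ i ∈ s, IsInt (f i)) :
    IsInt (∑ i ∈ s, f i) := by
  classical
  induction s using Finset.induction_on with
  | empty => rw [Finset.sum_empty]; exact IsInt.zero
  | insert a s ha ih =>
    rw [Finset.sum_insert ha]
    exact (hf a (Finset.mem_insert_self a s)).add
      (ih fun i hi => hf i (Finset.mem_insert_of_mem hi))

lemma IsInt.mul {f g : G → ℂ} (hf : IsInt f) (hg : IsInt g) : IsInt (f * g) := by
  have h1 : f * g = ∑ χ ∈ irr G, ∑ ψ ∈ irr G, (ip f χ * ip g ψ) • (χ * ψ) := by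
    conv_lhs => rw [expand hf.1, expand hg.1, Finset.sum_mul_sum]
    simp [smul_smul, mul_comm]
  rw [h1]
  refine IsInt.sum _ _ fun χ hχ => IsInt.sum _ _ fun ψ hψ => ?_
  obtain ⟨n, hn⟩ := hf.2 χ (mem_irr.1 hχ)
  obtain ⟨m, hm⟩ := hg.2 ψ (mem_irr.1 hψ)
  have h2 := ((isChar_of_mem (mem_irr.1 hχ)).mul (isChar_of_mem (mem_irr.1 hψ))).isInt.zsmul (n * m)
  rw [hn, hm]
  push_cast at h2
  exact h2

lemma IsInt.one : IsInt (fun _ : G => (1 : ℂ)) := (isChar_of_mem one_mem_irr).isInt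

lemma IsInt.res {f : G → ℂ} (hf : IsInt f) (P : Subgroup G) : IsInt (res P f) := by
  have h : AcdK.res P f = ∑ χ ∈ irr G, ip f χ • AcdK.res P χ := by
    conv_lhs => rw [expand hf.1]
    ext x; simp [AcdK.res]
  rw [h]
  refine IsInt.sum _ _ fun χ hχ => ?_
  obtain ⟨n, hn⟩ := hf.2 χ (mem_irr.1 hχ)
  rw [hn]
  exact (IsChar.res P (isChar_of_mem (mem_irr.1 hχ))).isInt.zsmul n

lemma IsInt.ip {f g : G → ℂ} (hf : IsInt f) (hg : IsInt g) : ∃ n : ℤ, ip f g = n := by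
  choose! a ha using hf.2
  choose! b hb using hg.2
  refine ⟨∑ χ ∈ irr G, a χ * b χ, ?_⟩
  rw [ip_expand hf.1]
  push_cast
  refine Finset.sum_congr rfl fun χ hχ => ?_
  rw [ha χ (mem_irr.1 hχ), ip_comm, hb χ (mem_irr.1 hχ)]

lemma IsInt.ind {P : Subgroup G} {f : P → ℂ} (hf : IsInt f) : IsInt (ind P f) :=
  ⟨ind_classFn _ f, fun χ hχ => by
    rw [ip_ind _ f (irr_classFn hχ)]
    exact hf.ip (IsChar.res P (isChar_of_mem hχ)).isInt⟩

lemma IsInt.aeval {f : G → ℂ} (hf : IsInt f) (h : Polynomial ℤ) :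
    IsInt (fun x => Polynomial.aeval (f x) h) := by
  induction h using Polynomial.induction_on with
  | C a =>
    have := (IsInt.one (G := G)).zsmul a
    convert this using 2 with x
    simp
  | add p q hp hq =>
    convert hp.add hq using 2 with x
    simp
  | monomial n a ih =>
    convert ih.mul hf using 2 with x
    simp [pow_succ, mul_assoc]

end Integral

end AcdK

/-! ### Stable class functions on a Sylow subgroup -/

namespace AcdK

variable {G : Type} [Group G] [Finite G]

lemma ext0_mul (P : Subgroup G) (f : P → ℂ) (F : G → ℂ) (x : G) :
    ext0 P (f * res P F) x = ext0 P f x * F x := by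
  by_cases hx : x ∈ P
  · have := ext0_coe P (f * res P F) ⟨x, hx⟩
    have h2 := ext0_coe P f ⟨x, hx⟩
    simp only at this h2
    rw [this, h2]; rfl
  · simp [ext0, hx]

lemma ind_mul_res (P : Subgroup G) (f : P → ℂ) {F : G → ℂ} (hF : IsClassFn F) :
    ind P (f * res P F) = ind P f * F := by
  have := Fintype.ofFinite G
  funext x
  rw [Pi.mul_apply, ind_def, ind_def, mul_assoc, Finset.sum_mul]
  congr 1
  refine Finset.sum_congr rfl fun g _ => ?_
  rw [ext0_mul, hF g x]

lemma pow_mem_iff (P : Subgroup G) {t : ℕ} (ht : t.Coprime (Nat.card G)) (x : G) :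
    x ^ t ∈ P ↔ x ∈ P := by
  refine ⟨fun h => ?_, fun h => P.pow_mem h t⟩
  obtain ⟨s, hs⟩ := exists_pow_eq_self_of_coprime (x := x)
    (ht.coprime_dvd_right (orderOf_dvd_natCard x))
  rw [← hs]
  exact P.pow_mem h s

lemma ind_pw (P : Subgroup G) (f : P → ℂ) {t : ℕ} (ht : t.Coprime (Nat.card G)) :
    ind P (pw t f) = pw t (ind P f) := by
  have := Fintype.ofFinite G
  funext x
  unfold pw
  rw [ind_def, ind_def]
  congr 1
  refine Finset.sum_congr rfl fun g _ => ?_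
  have hc : g * x ^ t * g⁻¹ = (g * x * g⁻¹) ^ t := conj_pow.symm
  rw [hc]
  set y := g * x * g⁻¹
  by_cases hy : y ∈ P
  · have h1 := ext0_coe P (fun x => f (x ^ t)) ⟨y, hy⟩
    have h2 := ext0_coe P f (⟨y, hy⟩ ^ t)
    simp only [Subgroup.coe_pow] at h1 h2
    rw [h1, h2]
  · have hy' : y ^ t ∉ P := fun h => hy ((pow_mem_iff P ht y).1 h)
    simp [ext0, hy, hy']

/-- The permutation character on `G ⧸ P`. -/
noncomputable def pi (P : Subgroup G) : G → ℂ := ind P (fun _ => 1)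

lemma pi_pow (P : Subgroup G) {t : ℕ} (ht : t.Coprime (Nat.card G)) (x : G) :
    pi P (x ^ t) = pi P x := by
  have := ind_pw P (fun _ => 1) ht
  exact (congrFun this x).symm

lemma pi_inv (P : Subgroup G) (x : G) : pi P x⁻¹ = pi P x := by
  have h := pw_card_sub_one (pi P)
  have hc : (Nat.card G - 1).Coprime (Nat.card G) := by
    rw [Nat.coprime_comm]
    exact (Nat.coprime_self_sub_right Nat.card_pos).2 (Nat.coprime_one_right _)
  rw [← congrFun h x]
  exact pi_pow P hc x

/-- At elements of a Sylow `p`-subgroup `P` the permutation character on `G ⧸ P` is prime to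
`p`. -/
lemma pi_val {p a m : ℕ} (hp : p.Prime) (P : Subgroup G) (hP : Nat.card P = p ^ a)
    (hcard : Nat.card G = p ^ a * m) (hpm : (p ^ a).Coprime m) (ha : a ≠ 0) (x : G) (hx : x ∈ P) :
    ∃ n : ℕ, pi P x = n ∧ ¬ p ∣ n := by
  classical
  have := Fact.mk hp
  have := Fintype.ofFinite G
  have := Fintype.ofFinite P
  have hindex : P.index = m := by
    have h1 := P.card_mul_index
    rw [hP, hcard] at h1
    exact Nat.eq_of_mul_eq_mul_left (pow_pos hp.pos _) h1
  let T : Set (G ⧸ P) := {q | x • q = q}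
  refine ⟨Nat.card T, ?_, ?_⟩
  · rw [pi, ind_def]
    have hs : ∑ g : G, ext0 P (fun _ => 1) (g * x * g⁻¹)
        = (Nat.card ((QuotientGroup.mk : G → G ⧸ P) ⁻¹' T) : ℂ) := by
      rw [Nat.card_eq_fintype_card, Fintype.card_subtype, Finset.card_filter]
      push_cast
      rw [← Equiv.sum_comp (Equiv.inv G)]
      refine Finset.sum_congr rfl fun g _ => ?_
      have : (g ∈ (QuotientGroup.mk : G → G ⧸ P) ⁻¹' T) ↔ g⁻¹ * x * g⁻¹⁻¹ ∈ P := by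
        rw [Set.mem_preimage]
        change x • (g : G ⧸ P) = g ↔ _
        rw [MulAction.Quotient.smul_mk, eq_comm, QuotientGroup.eq, smul_eq_mul, inv_inv, mul_assoc]
      simp only [this, ext0, Equiv.inv_apply]
      split_ifs <;> rfl
    rw [hs, Nat.card_congr (QuotientGroup.preimageMkEquivSubgroupProdSet P T), Nat.card_prod]
    push_cast
    rw [← mul_assoc, inv_mul_cancel₀, one_mul]
    exact_mod_cast Nat.card_pos.ne'
  · intro hdvd
    have hPG : IsPGroup p P := IsPGroup.of_card hP
    have hz : IsPGroup p (Subgroup.zpowers x) := hPG.to_le (by simpa using hx)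
    have h1 := hz.card_modEq_card_fixedPoints (G ⧸ P)
    have hT : MulAction.fixedPoints (Subgroup.zpowers x) (G ⧸ P) = T := by
      ext q
      constructor
      · intro h
        exact h ⟨x, Subgroup.mem_zpowers x⟩
      · rintro h ⟨y, hy⟩
        obtain ⟨j, rfl⟩ := Subgroup.mem_zpowers_iff.1 hy
        change x ^ j • q = q
        have : x ∈ MulAction.stabilizer G q := h
        exact (MulAction.stabilizer G q).zpow_mem this j
    rw [hT] at h1
    have h2 : Nat.card (G ⧸ P) = m := hindex
    rw [h2] at h1
    have : p ∣ m := (Nat.ModEq.dvd_iff h1 dvd_rfl).2 hdvd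
    have h3 : p ∣ p ^ a := dvd_pow_self p ha
    exact hp.one_lt.ne' (Nat.dvd_one.1 (hpm ▸ Nat.dvd_gcd h3 this))

/-- A generalised character `H` which inverts, up to an integer `κ` prime to `p`, the permutation
character `pi P` on `P`; it is an integral polynomial in `pi P`. -/
lemma exists_H {p a m : ℕ} (hp : p.Prime) (P : Subgroup G) (hP : Nat.card P = p ^ a)
    (hcard : Nat.card G = p ^ a * m) (hpm : (p ^ a).Coprime m) (ha : a ≠ 0) :
    ∃ (H : G → ℂ) (κ : ℤ), IsInt H ∧ ((κ : ℤ) : ZMod p) ≠ 0 ∧ (∀ x ∈ P, H x * pi P x = κ) ∧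
      (∀ x, H x⁻¹ = H x) ∧ ∀ t : ℕ, t.Coprime (Nat.card G) → ∀ x, H (x ^ t) = H x := by
  classical
  have := Fact.mk hp
  have := Fintype.ofFinite P
  choose n hn hpn using fun x : P => pi_val hp P hP hcard hpm ha x x.2
  let q : Polynomial ℤ := ∏ x : P, (Polynomial.C (n x : ℤ) - Polynomial.X)
  have hIntg : IsInt (pi P) := IsInt.ind IsInt.one
  refine ⟨fun x => Polynomial.aeval (pi P x) (-q.divX), q.coeff 0, hIntg.aeval _, ?_, ?_, ?_, ?_⟩
  · have : q.coeff 0 = ∏ x : P, (n x : ℤ) := by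
      rw [Polynomial.coeff_zero_eq_eval_zero, Polynomial.eval_prod]
      simp
    rw [this]
    push_cast
    rw [Finset.prod_ne_zero_iff]
    intro x _ h
    exact hpn x ((ZMod.natCast_eq_zero_iff _ _).1 h)
  · intro x hx
    have h0 : Polynomial.aeval (pi P x) q = 0 := by
      rw [map_prod]
      refine Finset.prod_eq_zero (Finset.mem_univ (⟨x, hx⟩ : P)) ?_
      rw [map_sub, Polynomial.aeval_X, Polynomial.aeval_C, hn ⟨x, hx⟩]
      simp
    have h1 := congrArg (Polynomial.aeval (pi P x)) (Polynomial.divX_mul_X_add q)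
    rw [h0, map_add, map_mul, Polynomial.aeval_X, Polynomial.aeval_C] at h1
    simp only [map_neg]
    rw [algebraMap_int_eq, Int.coe_castRingHom] at h1
    linear_combination -h1
  · intro x; simp only [pi_inv]
  · intro t ht x; simp only [pi_pow P ht]

/-- `κ` times the orthogonal projection of class functions of `P` onto the `G`-stable ones. -/
noncomputable def Eh (P : Subgroup G) (H : G → ℂ) (f : P → ℂ) : P → ℂ := res P (H * ind P f)

/-- Functions on `P` that are constant on `G`-conjugate elements. -/
def Stable (P : Subgroup G) (F : P → ℂ) : Prop :=
  ∀ (x y : P) (g : G), g * x * g⁻¹ = y → F x = F y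

lemma stable_res (P : Subgroup G) {F : G → ℂ} (hF : IsClassFn F) : Stable P (res P F) := by
  intro x y g h
  change F x = F y
  rw [← h, hF]

section
variable {P : Subgroup G} {H : G → ℂ} {κ : ℤ}

lemma Stable.classFn {F : P → ℂ} (h : Stable P F) : IsClassFn F := by
  intro g x
  refine (h x (g * x * g⁻¹) g ?_).symm
  simp

lemma Eh_stable (hH : IsInt H) (f : P → ℂ) : Stable P (Eh P H f) := by
  apply stable_res
  intro g x
  rw [Pi.mul_apply, Pi.mul_apply, hH.1, ind_classFn]

lemma Eh_of_stable (hκ : ∀ x ∈ P, H x * pi P x = κ) {F : P → ℂ} (hF : Stable P F) :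
    Eh P H F = (κ : ℂ) • F := by
  have := Fintype.ofFinite G
  funext x
  change H x * ind P F x = κ * F x
  rw [← hκ x x.2, mul_assoc]
  congr 1
  rw [pi, ind_def, ind_def, mul_assoc, Finset.sum_mul]
  congr 1
  refine Finset.sum_congr rfl fun g _ => ?_
  by_cases hy : g * x * g⁻¹ ∈ P
  · have h1 := ext0_coe P F ⟨_, hy⟩
    have h2 := ext0_coe P (fun _ => 1) ⟨_, hy⟩
    simp only at h1 h2
    rw [h1, h2, one_mul]
    exact (hF _ _ g rfl).symm
  · simp [ext0, hy]

lemma Eh_adj (hH : IsInt H) (hinv : ∀ x, H x⁻¹ = H x) (f g : P → ℂ) :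
    ip (Eh P H f) g = ip f (Eh P H g) := by
  have hc : ∀ f : P → ℂ, IsClassFn (H * ind P f) := fun f y x => by
    rw [Pi.mul_apply, Pi.mul_apply, hH.1, ind_classFn]
  unfold Eh
  rw [← ip_ind P f (hc g), ip_comm _ g, ← ip_ind P g (hc f), ip_comm, mul_comm H, ip_mul_left]
  simp only [hinv]

lemma Eh_pw {t : ℕ} (ht : t.Coprime (Nat.card G)) (hHt : ∀ x, H (x ^ t) = H x) (f : P → ℂ) :
    Eh P H (pw t f) = pw t (Eh P H f) := by
  unfold Eh
  rw [ind_pw P f ht]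
  funext x
  change H x * ind P f ((x : G) ^ t) = H ((x ^ t : P) : G) * ind P f ((x ^ t : P) : G)
  rw [Subgroup.coe_pow, hHt]

lemma Eh_tw (l : G →* ℂˣ) (f : P → ℂ) :
    Eh P H (tw (l.comp P.subtype) f) = tw (l.comp P.subtype) (Eh P H f) := by
  unfold Eh
  have h1 : tw (l.comp P.subtype) f = f * res P (fun x => (l x : ℂ)) := by
    funext x; exact mul_comm _ _
  have h2 : IsClassFn (fun x => (l x : ℂ)) := (isChar_linear l).classFn
  rw [h1, ind_mul_res P f h2]
  funext x
  change H x * (ind P f x * l x) = l x * (H x * ind P f x)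
  ring

lemma Eh_isInt (hH : IsInt H) {f : P → ℂ} (hf : IsInt f) : IsInt (Eh P H f) :=
  (hH.mul hf.ind).res P

end

end AcdK

/-! ### Fusion classes fixed by a power map -/

namespace AcdK

variable {G : Type} [Group G] [Finite G]

/-- `G`-fusion on `P`. -/
def fus (P : Subgroup G) : Setoid P where
  r x y := ∃ g : G, g * x * g⁻¹ = y
  iseqv := by
    refine ⟨fun x => ⟨1, by simp⟩, ?_, ?_⟩
    · rintro x y ⟨g, h⟩
      exact ⟨g⁻¹, by rw [← h]; group⟩
    · rintro x y z ⟨g, h⟩ ⟨g', h'⟩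
      exact ⟨g' * g, by rw [← h', ← h]; group⟩

lemma fus_mk {P : Subgroup G} {x y : P} :
    (Quotient.mk (fus P) x = Quotient.mk (fus P) y) ↔ ∃ g : G, g * x * g⁻¹ = y :=
  Quotient.eq (r := fus P)

lemma exists_fusPerm (P : Subgroup G) {t : ℕ} (ht : t.Coprime (Nat.card P)) :
    ∃ d : Equiv.Perm (Quotient (fus P)), ∀ x : P, d (Quotient.mk _ x) = Quotient.mk _ (x ^ t) := by
  let d0 : Quotient (fus P) → Quotient (fus P) :=
    Quotient.map' (s₁ := fus P) (s₂ := fus P) (fun x => x ^ t) (by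
      rintro x y ⟨g, h⟩
      refine ⟨g, ?_⟩
      simp only [Subgroup.coe_pow]
      rw [← h, conj_pow])
  have hs : Function.Surjective d0 := by
    intro q
    induction q using Quotient.inductionOn with
    | h x =>
    obtain ⟨s, hs⟩ := exists_pow_eq_self_of_coprime (x := x)
      (ht.coprime_dvd_right (orderOf_dvd_natCard x))
    refine ⟨Quotient.mk _ (x ^ s), ?_⟩
    change Quotient.mk _ ((x ^ s) ^ t) = _
    rw [← pow_mul, mul_comm, pow_mul, hs]
  exact ⟨Equiv.ofBijective d0 ⟨Finite.injective_iff_surjective.2 hs, hs⟩, fun x => rfl⟩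

open scoped Classical in
/-- The number of `G`-classes of `p`-elements fixed by the power map is at most the number of
irreducible characters fixed by it. -/
lemma card_fixed_le (P : Subgroup G) {t : ℕ} (ht : t.Coprime (Nat.card G))
    [Fintype (Quotient (fus P))] (d : Equiv.Perm (Quotient (fus P)))
    (hd : ∀ x : P, d (Quotient.mk _ x) = Quotient.mk _ (x ^ t)) :
    (Finset.univ.filter fun q => d q = q).card ≤ ((irr G).filter fun χ => pw t χ = χ).card := by
  have := Fintype.ofFinite G
  refine Nat.le_of_mul_le_mul_right ?_ (Nat.card_pos (α := G))
  have hb := brauer (G := G) ht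
  refine le_of_le_of_eq ?_ (Eq.trans hb.symm (by congr!))
  have hx : ∀ q : Quotient (fus P), ∃ x : P, Quotient.mk _ x = q := fun q => q.exists_rep
  choose x hx using hx
  have hg : ∀ q, ∃ g : G, d q = q → g * x q * g⁻¹ = (x q : G) ^ t := by
    intro q
    by_cases h : d q = q
    · have h1 := h
      rw [← hx q, hd, eq_comm, fus_mk] at h1
      obtain ⟨g, hg⟩ := h1
      exact ⟨g, fun _ => by simpa using hg⟩
    · exact ⟨1, fun h' => absurd h' h⟩
  choose g hg using hg
  let s : Quotient (fus P) → G → G := fun q => Function.invFun fun v => v * x q * v⁻¹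
  have hs : ∀ q u, s q (u * x q * u⁻¹) * x q * (s q (u * x q * u⁻¹))⁻¹ = u * x q * u⁻¹ := by
    intro q u
    exact Function.invFun_eq (f := fun v => v * (x q : G) * v⁻¹) ⟨u, rfl⟩
  have hcard : (Finset.univ.filter fun q => d q = q).card * Nat.card G
      = ((Finset.univ.filter fun q => d q = q) ×ˢ (Finset.univ : Finset G)).card := by
    rw [Finset.card_product, Finset.card_univ, Nat.card_eq_fintype_card]
  rw [hcard]
  refine Finset.card_le_card_of_injOn (fun a => (a.2 * x a.1 * a.2⁻¹,
    s a.1 (a.2 * x a.1 * a.2⁻¹) * g a.1 * ((s a.1 (a.2 * x a.1 * a.2⁻¹))⁻¹ * a.2) *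
      (s a.1 (a.2 * x a.1 * a.2⁻¹))⁻¹)) ?_ ?_
  · rintro ⟨q, u⟩ h
    have hq : d q = q := by simpa using h
    have h1 := hs q u
    have h2 := hg q hq
    simp only [Finset.coe_filter, Finset.mem_univ, true_and, Set.mem_ofPred_eq]
    set v := s q (u * x q * u⁻¹)
    have h3 : u * (x q : G) ^ t * u⁻¹ = (u * x q * u⁻¹) ^ t := conj_pow.symm
    rw [← h3, ← h2]
    have h4 : v⁻¹ * u * (x q : G) * u⁻¹ * v = x q := by
      have : v⁻¹ * u * (x q : G) * u⁻¹ * v = v⁻¹ * (u * x q * u⁻¹) * v := by group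
      rw [this, ← h1]; group
    have h5 : v * (x q : G) ^ t * v⁻¹ = u * (x q : G) ^ t * u⁻¹ := by
      rw [h3, ← h1, conj_pow]
    rw [← h2] at h5
    rw [← h5]
    calc _ = v * g q * (v⁻¹ * u * v⁻¹ * (u * x q * u⁻¹) * v * u⁻¹ * v) * (g q)⁻¹ * v⁻¹ := by group
      _ = v * g q * (v⁻¹ * u * v⁻¹ * (v * x q * v⁻¹) * v * u⁻¹ * v) * (g q)⁻¹ * v⁻¹ := by rw [h1]
      _ = v * g q * (v⁻¹ * u * x q * u⁻¹ * v) * (g q)⁻¹ * v⁻¹ := by group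
      _ = v * g q * x q * (g q)⁻¹ * v⁻¹ := by rw [h4]
      _ = _ := by group
  · rintro ⟨q, u⟩ h ⟨q', u'⟩ h' he
    simp only [Prod.mk.injEq] at he
    obtain ⟨h1, h2⟩ := he
    have hqq : q = q' := by
      rw [← hx q, ← hx q', fus_mk]
      refine ⟨u'⁻¹ * u, ?_⟩
      calc u'⁻¹ * u * (x q : G) * (u'⁻¹ * u)⁻¹ = u'⁻¹ * (u * x q * u⁻¹) * u' := by group
        _ = x q' := by rw [h1]; group
    subst hqq
    rw [h1] at h2
    have h3 := mul_right_cancel h2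
    have h4 := mul_left_cancel h3
    have h5 := mul_left_cancel h4
    rw [h5]

end AcdK

/-! ### The matrix of the stable projector -/

namespace AcdK

variable {G : Type} [Group G] [Finite G]

open Matrix

open scoped Classical in
lemma exists_pwPerm {P : Type} [Group P] [Finite P] {t q : ℕ} (ht : t.Coprime (Nat.card P))
    (htq : t ^ q ≡ 1 [MOD Nat.card P]) :
    ∃ β : Equiv.Perm {χ // χ ∈ irr P}, (∀ ω, ((β ω : {χ // χ ∈ irr P}) : P → ℂ) = pw t ω) ∧
      β ^ q = 1 := by
  let b : {χ // χ ∈ irr P} → {χ // χ ∈ irr P} :=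
    fun ω => ⟨pw t ω.1, mem_irr.2 (pw_mem (mem_irr.1 ω.2) ht)⟩
  have hb : Function.Injective b := by
    intro ω ω' h
    exact Subtype.ext (pw_inj ht (congrArg Subtype.val h))
  let β := Equiv.ofBijective b (Finite.injective_iff_bijective.1 hb)
  have h1 : ∀ ω, ((β ω : {χ // χ ∈ irr P}) : P → ℂ) = pw t ω := fun _ => rfl
  refine ⟨β, h1, ?_⟩
  have h2 : ∀ (j : ℕ) ω, (((β ^ j) ω : {χ // χ ∈ irr P}) : P → ℂ) = pw (t ^ j) ω := by
    intro j
    induction j with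
    | zero => intro ω; funext x; simp [pw]
    | succ j ih =>
      intro ω
      rw [pow_succ, Equiv.Perm.mul_apply, ih, h1, pw_pw, pow_succ]
  ext ω
  rw [h2, pw_congr htq]
  simp [pw]

/-- The matrix of `Eh` in the basis of irreducible characters of `P` is integral. -/
lemma exists_E (P : Subgroup G) {H : G → ℂ} (hH : IsInt H) :
    ∃ E : Matrix {χ // χ ∈ irr P} {χ // χ ∈ irr P} ℤ,
      ∀ i j, ((E i j : ℤ) : ℂ) = ip (Eh P H j.1) i.1 := by
  have : ∀ i j : {χ // χ ∈ irr P}, ∃ n : ℤ, ip (Eh P H j.1) i.1 = n := fun i j =>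
    (Eh_isInt hH (isChar_of_mem (mem_irr.1 j.2)).isInt).2 i.1 (mem_irr.1 i.2)
  choose E hE using this
  exact ⟨E, fun i j => (hE i j).symm⟩

open scoped Classical in
/-- The rank of the reduction modulo `p` of `Eh`, restricted to the characters of `P` fixed by the
power map, is at most the number of irreducible characters of `G` fixed by the power map. -/
lemma rank_E_le {p a : ℕ} [Fact p.Prime] (P : Subgroup G) (hP : Nat.card P = p ^ a)
    {t : ℕ} (ht : t.Coprime (Nat.card G)) (htp : t ^ p ^ a ≡ 1 [MOD p ^ a])
    {H : G → ℂ} {κ : ℤ} (hH : IsInt H) (hκ : ((κ : ℤ) : ZMod p) ≠ 0)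
    (hHκ : ∀ x ∈ P, H x * pi P x = κ) (hinv : ∀ x, H x⁻¹ = H x) (hHt : ∀ x, H (x ^ t) = H x)
    (E : Matrix {χ // χ ∈ irr P} {χ // χ ∈ irr P} ℤ)
    (hE : ∀ i j, ((E i j : ℤ) : ℂ) = ip (Eh P H j.1) i.1)
    (β : Equiv.Perm {χ // χ ∈ irr P})
    (hβ : ∀ ω, ((β ω : {χ // χ ∈ irr P}) : P → ℂ) = pw t ω) :
    ((E.map (Int.cast : ℤ → ZMod p)).submatrix (Subtype.val : {i // β i = i} → _)
      (Subtype.val : {i // β i = i} → _)).rank ≤ ((irr G).filter fun χ => pw t χ = χ).card := by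
  have htP : t.Coprime (Nat.card P) := ht.coprime_dvd_right P.card_subgroup_dvd_card
  have := Fintype.ofFinite (Quotient (fus P))
  obtain ⟨d, hd⟩ := exists_fusPerm P htP
  have hκ0 : (κ : ℂ) ≠ 0 := by
    intro h
    have : κ = 0 := by exact_mod_cast h
    exact hκ (by rw [this]; simp)
  have hfix : (Finset.univ.filter fun q => d q = q) = Finset.univ.filter fun q => d⁻¹ q = q := by
    ext q
    simp only [Finset.mem_filter, Finset.mem_univ, true_and]
    rw [Equiv.Perm.inv_eq_iff_eq, eq_comm]
  refine le_trans ?_ (card_fixed_le P ht d hd)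
  rw [hfix]
  -- stable functions are the fixed vectors of `κ⁻¹ • E`
  have hsum : ∀ (F : P → ℂ) (_ : IsClassFn F) (g : P → ℂ),
      ∑ j : {χ // χ ∈ irr P}, ip F j.1 * ip j.1 g = ip F g := by
    intro F hF g
    rw [ip_expand hF]
    exact Finset.sum_coe_sort (irr P) (fun χ => ip F χ * ip χ g)
  have hst : ∀ f : Quotient (fus P) → ℂ, Stable P fun x => f (Quotient.mk _ x) := by
    intro f x y g h
    exact congrArg f (fus_mk.2 ⟨g, h⟩)
  let Φ : (Quotient (fus P) → ℂ) →ₗ[ℂ] ({χ // χ ∈ irr P} → ℂ) :=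
    { toFun := fun f ω => ip (fun x => f (Quotient.mk _ x)) ω.1
      map_add' := fun f g => by
        funext ω; exact ip_add_left (fun x => f (Quotient.mk _ x)) (fun x => g (Quotient.mk _ x)) _
      map_smul' := fun c f => by
        funext ω; exact ip_smul_left c (fun x => f (Quotient.mk _ x)) _ }
  have hΦ : ∀ f ω, Φ f ω = ip (fun x => f (Quotient.mk _ x)) ω.1 := fun _ _ => rfl
  have hmv : ∀ (F : P → ℂ), Stable P F →
      (E.map (Int.cast : ℤ → ℂ)) *ᵥ (fun ω => ip F ω.1) = (κ : ℂ) • fun ω => ip F ω.1 := by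
    intro F hF
    funext i
    rw [Matrix.mulVec, dotProduct]
    have : ∀ j, (E.map (Int.cast : ℤ → ℂ)) i j * ip F j.1 = ip F j.1 * ip j.1 (Eh P H i.1) := by
      intro j
      rw [Matrix.map_apply, hE, Eh_adj hH hinv, mul_comm]
    rw [Finset.sum_congr rfl fun j _ => this j, hsum F hF.classFn, ← Eh_adj hH hinv,
      Eh_of_stable hHκ hF, ip_smul_left]
    rfl
  refine rank_fixed_le (p := p) β d⁻¹ a ?_ E ?_ κ hκ ?_ Φ ?_ ?_ ?_
  · rw [inv_pow, inv_eq_one]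
    have h2 : ∀ (j : ℕ) x, (d ^ j) (Quotient.mk _ x) = Quotient.mk _ (x ^ t ^ j) := by
      intro j
      induction j with
      | zero => intro x; simp
      | succ j ih =>
        intro x
        rw [pow_succ, Equiv.Perm.mul_apply, hd, ih, ← pow_mul, pow_succ, mul_comm]
    ext q
    induction q using Quotient.inductionOn with
    | h x =>
    rw [h2]
    congr 1
    have h3 : x ^ t ^ p ^ a = x ^ 1 := by
      rw [pow_eq_pow_iff_modEq]
      exact htp.of_dvd (hP ▸ orderOf_dvd_natCard x)
    rw [h3, pow_one]
  · intro i j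
    have : ((E (β i) (β j) : ℤ) : ℂ) = E i j := by
      rw [hE, hE, hβ, hβ, Eh_pw ht hHt, ip_pw _ _ htP]
    exact_mod_cast this
  · ext i k
    have : (((E * E) i k : ℤ) : ℂ) = ((κ • E) i k : ℤ) := by
      rw [Matrix.mul_apply, Matrix.smul_apply]
      push_cast
      have h1 := congrFun (hmv (Eh P H k.1) (Eh_stable hH _)) i
      rw [Matrix.mulVec, dotProduct] at h1
      simp only [Matrix.map_apply, Pi.smul_apply, smul_eq_mul] at h1
      simp only [hE] at h1 ⊢
      rw [smul_eq_mul]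
      push_cast
      rw [hE]
      exact h1
    exact_mod_cast this
  · intro f f' h
    have h1 : (fun x : P => f (Quotient.mk _ x)) = fun x => f' (Quotient.mk _ x) := by
      refine classFn_ext (hst f).classFn (hst f').classFn fun χ hχ => ?_
      exact congrFun h ⟨χ, mem_irr.2 hχ⟩
    funext q
    induction q using Quotient.inductionOn with
    | h x => exact congrFun h1 x
  · apply le_antisymm
    · rintro _ ⟨f, rfl⟩
      refine ⟨(κ : ℂ)⁻¹ • Φ f, ?_⟩
      rw [map_smul, Matrix.mulVecLin_apply]
      have := hmv _ (hst f)
      rw [show (Φ f) = fun ω => ip (fun x => f (Quotient.mk _ x)) ω.1 from rfl, this, smul_smul,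
        inv_mul_cancel₀ hκ0, one_smul]
    · rw [Matrix.range_mulVecLin, Submodule.span_le]
      rintro _ ⟨j, rfl⟩
      have hs := Eh_stable hH j.1
      refine ⟨Quotient.lift (Eh P H j.1) fun x y ⟨g, h⟩ => hs x y g h, ?_⟩
      funext i
      rw [hΦ]
      exact (hE i j).symm
  · intro f
    funext ω
    rw [hΦ, Function.comp_apply, hΦ, hβ]
    have : (fun x : P => f (Quotient.mk _ x)) = pw t fun x => (f ∘ ⇑d⁻¹) (Quotient.mk _ x) := by
      funext x
      change f _ = f (d⁻¹ (Quotient.mk _ (x ^ t)))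
      rw [← hd]
      exact congrArg f (d.symm_apply_apply _).symm
    rw [this, ip_pw _ _ htP]

end AcdK

/-! ### Counting fixed characters -/

namespace AcdK

variable {G : Type} [Group G] [Finite G]

open Matrix

lemma tw_res (P : Subgroup G) (μ : G →* ℂˣ) (χ : G → ℂ) :
    res P (tw μ χ) = tw (μ.comp P.subtype) (res P χ) := rfl

lemma pw_tw {t : ℕ} {μ : G →* ℂˣ} (h : ∀ x, μ (x ^ t) = μ x) (χ : G → ℂ) :
    pw t (tw μ χ) = tw μ (pw t χ) := by
  funext x
  change (μ (x ^ t) : ℂ) * χ (x ^ t) = μ x * χ (x ^ t)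
  rw [h]

set_option maxHeartbeats 2000000 in
open scoped Classical in
/-- If `X` is a set of class functions on `G` containing `1`, fixed by the power map and restricting irreducibly and
injectively to a Sylow `p`-subgroup `P`, and if `P` has a fixed linear character `l` which is not
the restriction of a member of `X`, then there are at least `|W|` fixed irreducible characters
outside `X`, for any `p`-group `W` of linear characters preserving `X`. -/
theorem count_Y {p a m : ℕ} (hp : p.Prime) (P : Subgroup G) (hP : Nat.card P = p ^ a)
    (hcard : Nat.card G = p ^ a * m) (hpm : (p ^ a).Coprime m)
    {t : ℕ} (ht : t.Coprime (Nat.card G)) (htp : t ^ p ^ a ≡ 1 [MOD p ^ a])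
    (X : Finset (G → ℂ)) (hX1 : (1 : G → ℂ) ∈ X) (hXc : ∀ χ ∈ X, IsClassFn χ)
    (hXt : ∀ χ ∈ X, pw t χ = χ) (hXi : ∀ χ ∈ X, res P χ ∈ Irr P)
    (hXinj : ∀ χ ∈ X, ∀ χ' ∈ X, res P χ = res P χ' → χ = χ')
    (W : Subgroup (G →* ℂˣ)) {n : ℕ} (hW : ∀ μ ∈ W, μ ^ p ^ n = 1)
    (hWX : ∀ μ ∈ W, ∀ χ ∈ X, tw μ χ ∈ X)
    (l : P →* ℂˣ) (hlt : ∀ x, l (x ^ t) = l x)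
    (hl : ∀ χ ∈ X, (fun x => (l x : ℂ)) ≠ res P χ) :
    X.card + Nat.card W ≤ ((irr G).filter fun χ => pw t χ = χ).card := by
  have := Fact.mk hp
  have ha : a ≠ 0 := by
    rintro rfl
    rw [pow_zero, Nat.card_eq_one_iff_unique] at hP
    obtain ⟨hs, _⟩ := hP
    apply hl 1 hX1
    funext x
    rw [Subsingleton.elim x 1, map_one]
    rfl
  have htP : t.Coprime (Nat.card P) := ht.coprime_dvd_right P.card_subgroup_dvd_card
  obtain ⟨H, κ, hH, hκ, hHκ, hinv, hHt⟩ := exists_H hp P hP hcard hpm ha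
  replace hHt := hHt t ht
  obtain ⟨β, hβ, hβp⟩ := exists_pwPerm (P := P) htP (q := p ^ a) (by rw [hP]; exact htp)
  obtain ⟨E, hE⟩ := exists_E P hH
  refine le_trans ?_ (rank_E_le P hP ht htp hH hκ hHκ hinv hHt E hE β hβ)
  have hμt : ∀ μ ∈ W, ∀ x, μ (x ^ t) = μ x := by
    intro μ hμ x
    have := congrFun (hXt _ (hWX μ hμ 1 hX1)) x
    simp only [pw, tw, Pi.one_apply, mul_one] at this
    exact Units.ext this
  have hμP : ∀ μ ∈ W, μ.comp P.subtype = 1 → μ = 1 := by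
    intro μ hμ h
    have h1 := hXinj _ (hWX μ hμ 1 hX1) _ hX1 (by
      rw [tw_res, h, tw_one])
    ext x
    have := congrFun h1 x
    simpa [tw] using this
  -- the two kinds of columns
  have hEX : ∀ (χ : G → ℂ) (hχ : χ ∈ X) i, E i ⟨res P χ, mem_irr.2 (hXi χ hχ)⟩
      = if i.1 = res P χ then κ else 0 := by
    intro χ hχ i
    have : ((E i ⟨res P χ, mem_irr.2 (hXi χ hχ)⟩ : ℤ) : ℂ)
        = ((if i.1 = res P χ then κ else 0 : ℤ) : ℂ) := by
      rw [hE]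
      simp only
      rw [Eh_of_stable hHκ (stable_res P (hXc χ hχ)), ip_smul_left,
        ip_irr (hXi χ hχ) (mem_irr.1 i.2)]
      by_cases h : i.1 = res P χ
      · simp [h]
      · rw [if_neg (Ne.symm h), if_neg h]; simp
    exact_mod_cast this
  have hEX' : ∀ (χ : G → ℂ) (hχ : χ ∈ X) j, j.1 ≠ res P χ →
      E ⟨res P χ, mem_irr.2 (hXi χ hχ)⟩ j = 0 := by
    intro χ hχ j hj
    have : ((E ⟨res P χ, mem_irr.2 (hXi χ hχ)⟩ j : ℤ) : ℂ) = ((0 : ℤ) : ℂ) := by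
      rw [hE]
      simp only
      rw [Eh_adj hH hinv, Eh_of_stable hHκ (stable_res P (hXc χ hχ)), ip_smul_right,
        ip_irr_ne (mem_irr.1 j.2) (hXi χ hχ) hj]
      simp
    exact_mod_cast this
  let lam : {χ // χ ∈ irr P} := ⟨fun x => (l x : ℂ), mem_irr.2 (linear_mem_irr l)⟩
  have hlam : β lam = lam := by
    apply Subtype.ext
    rw [hβ]
    funext x
    exact congrArg Units.val (hlt x)
  let tS : W → {χ // χ ∈ irr P} → {χ // χ ∈ irr P} := fun μ ω =>
    ⟨tw (μ.1.comp P.subtype) ω.1, mem_irr.2 (tw_mem _ (mem_irr.1 ω.2))⟩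
  have htSβ : ∀ μ ω, β ω = ω → β (tS μ ω) = tS μ ω := by
    intro μ ω h
    apply Subtype.ext
    rw [hβ]
    change pw t (tw _ _) = tw _ _
    rw [pw_tw, ← hβ, h]
    intro x
    have := hμt μ.1 μ.2 x
    simpa using this
  have htSm : ∀ μ μ' ω, tS (μ * μ') ω = tS μ (tS μ' ω) := by
    intro μ μ' ω
    exact Subtype.ext (tw_mul (μ.1.comp P.subtype) (μ'.1.comp P.subtype) ω.1)
  have htS1 : ∀ ω, tS 1 ω = ω := fun ω => Subtype.ext (tw_one _)
  have htSE : ∀ μ i j, E (tS μ i) (tS μ j) = E i j := by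
    intro μ i j
    have : ((E (tS μ i) (tS μ j) : ℤ) : ℂ) = E i j := by
      rw [hE, hE]
      change ip (Eh P H (tw _ _)) (tw _ _) = _
      rw [Eh_tw, ip_tw]
    exact_mod_cast this
  let Sp : {χ // χ ∈ irr P} → Prop := fun ω =>
    deg ω.1 = 1 ∧ β ω = ω ∧ ∀ χ ∈ X, ω.1 ≠ res P χ
  have hSp : ∀ μ ω, Sp ω → Sp (tS μ ω) := by
    rintro μ ω ⟨h1, h2, h3⟩
    refine ⟨?_, htSβ μ ω h2, ?_⟩
    · rw [← h1]; exact deg_tw _ _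
    · intro χ hχ h
      apply h3 _ (hWX _ (μ⁻¹).2 χ hχ)
      have h4 : tS μ⁻¹ (tS μ ω) = ω := by rw [← htSm, inv_mul_cancel, htS1]
      rw [← h4]
      change tw _ (tS μ ω).1 = _
      rw [h, tw_res]
  let act : MulAction W {ω // Sp ω} :=
    { smul := fun μ ω => ⟨tS μ ω.1, hSp μ _ ω.2⟩
      one_smul := fun ω => Subtype.ext (htS1 _)
      mul_smul := fun μ μ' ω => Subtype.ext (htSm _ _ _) }
  have hsmul : ∀ (μ : W) (ω : {ω // Sp ω}), (μ • ω).1 = tS μ ω.1 := fun _ _ => rfl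
  have hfree : ∀ (w : W) (s : {ω // Sp ω}), w • s = s → w = 1 := by
    intro w s h
    obtain ⟨ν, hν⟩ := exists_linear (mem_irr.1 s.1.2) s.2.1
    have h1 : tw (w.1.comp P.subtype) s.1.1 = s.1.1 :=
      congrArg (fun z : {ω // Sp ω} => z.1.1) h
    apply Subtype.ext
    apply hμP _ w.2
    ext x
    have h2 := congrFun h1 x
    rw [hν] at h2
    change _ * (ν x : ℂ) = ν x at h2
    have h3 := mul_right_cancel₀ (ν x).ne_zero (h2.trans (one_mul _).symm)
    simpa using h3
  have hWn : ∀ w : W, w ^ p ^ n = 1 := fun w => Subtype.ext (hW w.1 w.2)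
  have hFW := Fintype.ofFinite W
  have hlamS : Sp lam := by
    refine ⟨?_, hlam, hl⟩
    have h1 := irr_deg (linear_mem_irr l)
    simp only [map_one, Units.val_one] at h1
    have : (1 : ℕ) = deg (fun x => (l x : ℂ)) := by exact_mod_cast h1
    exact this.symm
  -- the sum of the column of `l` over the free part is nonzero
  have hsum : ∑ s : {ω // Sp ω}, ((E s.1 lam : ℤ) : ZMod p) ≠ 0 := by
    have hZ : κ = ∑ ω : {χ // χ ∈ irr P}, E ω lam * (deg ω.1 : ℤ) := by
      have h1 : Eh P H lam.1 1 = κ := by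
        rw [← hHκ 1 P.one_mem]
        change H 1 * ind P _ 1 = H 1 * ind P _ 1
        congr 1
        have := Fintype.ofFinite G
        rw [ind_def, ind_def]
        congr 1
        refine Finset.sum_congr rfl fun g _ => ?_
        rw [mul_one, mul_inv_cancel]
        have e1 := ext0_coe P lam.1 1
        have e2 := ext0_coe P (fun _ => 1) 1
        rw [Subgroup.coe_one] at e1 e2
        rw [e1, e2]
        change ((l 1 : ℂˣ) : ℂ) = 1
        simp
      have h2 := congrFun (expand (Eh_stable (P := P) hH lam.1).classFn) 1
      rw [h1, Finset.sum_apply] at h2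
      have : (κ : ℂ) = ((∑ ω : {χ // χ ∈ irr P}, E ω lam * (deg ω.1 : ℤ) : ℤ) : ℂ) := by
        rw [h2]
        push_cast
        rw [← Finset.sum_coe_sort]
        refine Finset.sum_congr rfl fun ω _ => ?_
        rw [hE, Pi.smul_apply, irr_deg (mem_irr.1 ω.2), smul_eq_mul]
      exact_mod_cast this
    have hZ' := congrArg (Int.cast : ℤ → ZMod p) hZ
    push_cast at hZ'
    rw [sum_eq_sum_fixed β hβp (fun ω => (E ω lam : ZMod p) * (deg ω.1 : ZMod p)) ?_] at hZ'
    · have h3 : ∑ s : {ω // Sp ω}, ((E s.1 lam : ℤ) : ZMod p) = κ := by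
        have e1 : ∑ s : {ω // Sp ω}, ((E s.1 lam : ℤ) : ZMod p)
            = ∑ ω ∈ Finset.univ.filter Sp, ((E ω lam : ℤ) : ZMod p) :=
          (Finset.sum_subtype _ (by simp) (fun ω => ((E ω lam : ℤ) : ZMod p))).symm
        rw [hZ', e1]
        refine Finset.sum_subset_zero_on_sdiff ?_ ?_ ?_
        · intro ω h
          simp only [Finset.mem_filter, Finset.mem_univ, true_and] at h ⊢
          exact h.2.1
        · intro ω h
          simp only [Finset.mem_sdiff, Finset.mem_filter, Finset.mem_univ, true_and] at h
          by_cases hd : deg ω.1 = 1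
          · obtain ⟨χ, hχ, hω⟩ : ∃ χ ∈ X, ω.1 = res P χ := by
              by_contra hcon
              push Not at hcon
              exact h.2 ⟨hd, h.1, hcon⟩
            have hω' : ω = ⟨res P χ, mem_irr.2 (hXi χ hχ)⟩ := Subtype.ext hω
            rw [hω', hEX' χ hχ lam (hl χ hχ)]
            simp
          · have := dvd_deg_of_pGroup hp _ P rfl (IsPGroup.of_card hP) ω.1 (mem_irr.1 ω.2) hd
            rw [(ZMod.natCast_eq_zero_iff _ _).2 this, mul_zero]
        · intro ω h
          simp only [Finset.mem_filter, Finset.mem_univ, true_and] at h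
          rw [h.1]; simp
      rw [h3]; exact hκ
    · intro ω
      have h1 : E (β ω) lam = E ω lam := by
        have : ((E (β ω) lam : ℤ) : ℂ) = E ω lam := by
          have h2 : pw t lam.1 = lam.1 := by rw [← hβ, hlam]
          rw [hE, hE, hβ]
          conv_lhs => rw [← h2]
          rw [Eh_pw ht hHt, ip_pw _ _ htP]
        exact_mod_cast this
      have h2 : deg (β ω).1 = deg ω.1 := by
        rw [hβ, deg, deg, pw, one_pow]
      rw [h1, h2]
  -- independence of the columns
  let A := (E.map (Int.cast : ℤ → ZMod p)).submatrix (Subtype.val : {i // β i = i} → _)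
      (Subtype.val : {i // β i = i} → _)
  let xc : X → {i // β i = i} := fun χ => ⟨⟨res P χ.1, mem_irr.2 (hXi _ χ.2)⟩, by
    apply Subtype.ext
    rw [hβ]
    have := hXt _ χ.2
    funext x
    exact congrFun this x⟩
  let wc : W → {i // β i = i} := fun μ => ⟨tS μ lam, htSβ μ lam hlam⟩
  have hli : LinearIndependent (ZMod p) (fun z : X ⊕ W => A.col (Sum.elim xc wc z)) := by
    rw [Fintype.linearIndependent_iff]
    intro g hg
    have hg' : ∀ j : {i // β i = i}, ∑ χ : X, g (Sum.inl χ) * (E j.1 (xc χ).1 : ZMod p)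
        + ∑ μ : W, g (Sum.inr μ) * (E j.1 (wc μ).1 : ZMod p) = 0 := by
      intro j
      have := congrFun hg j
      rw [Fintype.sum_sum_type] at this
      simpa [Finset.sum_apply, A] using this
    have hc : (fun μ : W => g (Sum.inr μ)) = 0 := by
      refine conv_eq_zero_of_free hfree hWn (fun s : {ω // Sp ω} => ((E s.1 lam : ℤ) : ZMod p)) _
        hsum ?_
      intro s
      have h1 := hg' ⟨s.1, s.2.2.1⟩
      rw [Finset.sum_eq_zero (s := (Finset.univ : Finset X)), zero_add] at h1
      · rw [← h1]
        refine Finset.sum_congr rfl fun w _ => ?_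
        rw [hsmul]
        have := htSE w (tS w⁻¹ s.1) lam
        rw [← htSm, mul_inv_cancel, htS1] at this
        rw [← this]
      · intro χ _
        have := hEX χ.1 χ.2 s.1
        rw [if_neg (s.2.2.2 _ χ.2)] at this
        change _ * ((E s.1 ⟨res P χ.1, _⟩ : ℤ) : ZMod p) = 0
        rw [this]; simp
    have ha : ∀ χ : X, g (Sum.inl χ) = 0 := by
      intro χ
      have h1 := hg' (xc χ)
      have h2 : ∀ μ : W, g (Sum.inr μ) = 0 := fun μ => congrFun hc μ
      simp only [h2, zero_mul, Finset.sum_const_zero, add_zero] at h1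
      rw [Finset.sum_eq_single χ] at h1
      · have := hEX χ.1 χ.2 (xc χ).1
        rw [if_pos rfl] at this
        change _ * ((E (xc χ).1 ⟨res P χ.1, _⟩ : ℤ) : ZMod p) = 0 at h1
        rw [this] at h1
        exact (mul_eq_zero.1 h1).resolve_right hκ
      · intro χ' _ hne
        have := hEX χ'.1 χ'.2 (xc χ).1
        rw [if_neg] at this
        · change _ * ((E (xc χ).1 ⟨res P χ'.1, _⟩ : ℤ) : ZMod p) = 0
          rw [this]; simp
        · intro h
          exact hne (Subtype.ext (hXinj _ χ'.2 _ χ.2 h.symm))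
      · intro h; exact absurd (Finset.mem_univ _) h
    rintro (χ | μ)
    · exact ha χ
    · exact congrFun hc μ
  have hle : ∀ z : X ⊕ W, A.col (Sum.elim xc wc z) ∈ LinearMap.range A.mulVecLin := by
    intro z
    rw [Matrix.range_mulVecLin]
    exact Submodule.subset_span ⟨_, rfl⟩
  have hli' : LinearIndependent (ZMod p) (fun z : X ⊕ W =>
      (⟨A.col (Sum.elim xc wc z), hle z⟩ : LinearMap.range A.mulVecLin)) := by
    apply LinearIndependent.of_comp (LinearMap.range A.mulVecLin).subtype
    exact hli
  have := hli'.fintype_card_le_finrank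
  rw [Fintype.card_sum, Fintype.card_coe] at this
  rw [Nat.card_eq_fintype_card]
  exact this

end AcdK

/-! ### A theorem of Tate type -/

namespace AcdK

open scoped commutatorElement

/-- A nontrivial normal subgroup of a finite `p`-group properly contains its commutator with the
whole group. -/
lemma exists_not_mem_commutator {p : ℕ} (hp : p.Prime) {P : Type} [Group P] [Finite P]
    (hP : IsPGroup p P) {Q : Subgroup P} (hQ : Q ≠ ⊥) : ¬ Q ≤ ⁅Q, (⊤ : Subgroup P)⁆ := by
  intro h
  have := Fact.mk hp
  have hn : Group.IsNilpotent P := hP.isNilpotent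
  obtain ⟨n, hn⟩ := Subgroup.nilpotent_iff_lowerCentralSeries.1 hn
  have : ∀ i, Q ≤ Subgroup.lowerCentralSeries (⊤ : Subgroup P) i := by
    intro i
    induction i with
    | zero => exact le_top
    | succ i ih => exact h.trans (Subgroup.commutator_mono ih le_rfl)
  exact hQ (le_bot_iff.1 (hn ▸ this n))

variable {G : Type} [Group G] [Finite G]

/-- Averaging over `G ⧸ P` the cocycle of a section shows that a homomorphism from `G` to `E / A`,
with `A` central of exponent prime to the index of `P`, lifts to `E` if its restriction to `P` does.
The homomorphism is encoded by the relation `R`. -/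
lemma exists_lift {E A : Type} [Group E] [CommGroup A] (j : A →* E) (hj : Function.Injective j)
    (hcen : ∀ c y, j c * y = y * j c) (P : Subgroup G) (ι : P →* E) (R : G → E → Prop)
    (hRm : ∀ {g h e e'}, R g e → R h e' → R (g * h) (e * e'))
    (hRu : ∀ {g e e'}, R g e → R g e' → ∃ c, e = j c * e')
    (hRP : ∀ x : P, R x (ι x)) (hRe : ∀ g, ∃ e, R g e)
    {q : ℕ} (hq0 : q ≠ 0) (hq : ∀ c : A, c ^ q = 1) (hind : P.index.Coprime q) :
    ∃ θ : G →* E, ∀ g y, R g y → ∃ c, y = j c * θ g := by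
  choose σ hσ using hRe
  have hout : ∀ g : G, ((g : G ⧸ P).out)⁻¹ * g ∈ P := by
    intro g
    rw [← QuotientGroup.eq]
    exact QuotientGroup.out_eq' _
  obtain ⟨s, hsd⟩ : ∃ s : G → E, ∀ g, s g = σ ((g : G ⧸ P).out) * ι ⟨_, hout g⟩ :=
    ⟨_, fun _ => rfl⟩
  have hs : ∀ g, R g (s g) := by
    intro g
    have := hRm (hσ ((g : G ⧸ P).out)) (hRP ⟨_, hout g⟩)
    rw [hsd]
    simpa using this
  have hsx : ∀ (g : G) (x : P), s (g * x) = s g * ι x := by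
    intro g x
    have h1 : ((g * x : G) : G ⧸ P) = g := by
      rw [QuotientGroup.eq]; simp
    rw [hsd, hsd, mul_assoc, ← map_mul]
    congr 1
    · rw [h1]
    · congr 1
      apply Subtype.ext
      simp only [Subgroup.coe_mul]
      rw [h1, mul_assoc]
  choose c hc' using fun g h => hRu (hRm (hs g) (hs h)) (hs _)
  have hc : ∀ g h, j (c g h) * s (g * h) = s g * s h := fun g h => (hc' g h).symm
  have hcx : ∀ h g (x : P), c h (g * x) = c h g := by
    intro h g x
    apply hj
    have h1 := hc h (g * x)
    rw [← mul_assoc h, hsx, hsx, ← mul_assoc, ← mul_assoc, ← hc h g] at h1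
    exact mul_right_cancel (mul_right_cancel h1)
  have hcoc : ∀ k h g, c k h * c (k * h) g = c h g * c k (h * g) := by
    intro k h g
    apply hj
    rw [map_mul, map_mul]
    refine mul_right_cancel (b := s (k * h * g)) ?_
    rw [mul_assoc, hc, ← mul_assoc, hc, mul_assoc k, mul_assoc (j (c h g)), hc, ← mul_assoc, hcen,
      mul_assoc, mul_assoc, hc]
  have hFQ := Fintype.ofFinite (G ⧸ P)
  let e : G → A := fun h => ∏ q : G ⧸ P, c h q.out
  have he : ∀ k h, c k h ^ P.index * e (k * h) = e h * e k := by
    intro k h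
    have h1 : ∏ q : G ⧸ P, c k (h * q.out) = e k := by
      change _ = ∏ q : G ⧸ P, c k q.out
      rw [← Equiv.prod_comp (MulAction.toPerm h : Equiv.Perm (G ⧸ P)) (fun q => c k q.out)]
      refine Finset.prod_congr rfl fun q _ => ?_
      have h2 : (((h • q : G ⧸ P).out)⁻¹ * (h * q.out)) ∈ P := by
        rw [← QuotientGroup.eq, QuotientGroup.out_eq']
        have := MulAction.Quotient.smul_mk P h q.out
        rw [QuotientGroup.out_eq'] at this
        exact this
      have h3 := hcx k ((h • q : G ⧸ P).out) ⟨_, h2⟩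
      simp only [mul_inv_cancel_left] at h3
      exact h3
    rw [← h1, ← Finset.prod_mul_distrib, ← Finset.prod_congr rfl fun q _ => hcoc k h q.out,
      Finset.prod_mul_distrib, Finset.prod_const, Finset.card_univ, Subgroup.index,
      Nat.card_eq_fintype_card]
  obtain ⟨m, hm⟩ : ∃ m, P.index * m ≡ 1 [MOD q] := by
    obtain ⟨m, _, hm⟩ := Nat.exists_mul_mod_eq_of_coprime 1 hind hq0
    exact ⟨m, hm⟩
  have hexp : ∀ z : A, z ^ (P.index * m) = z := by
    intro z
    have h2 : z ^ (P.index * m) = z ^ 1 := by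
      rw [pow_eq_pow_iff_modEq]
      exact hm.of_dvd (orderOf_dvd_of_pow_eq_one (hq z))
    rw [h2, pow_one]
  let θ : G →* E := MonoidHom.mk' (fun h => j (e h ^ m)⁻¹ * s h) (by
    intro k h
    have h1 : (e (k * h) ^ m)⁻¹ = (e k ^ m)⁻¹ * (e h ^ m)⁻¹ * c k h := by
      have h2 := congrArg (· ^ m) (he k h)
      simp only [mul_pow, ← pow_mul, hexp] at h2
      rw [← mul_inv, mul_comm (e k ^ m), ← h2, mul_inv, mul_comm _⁻¹, mul_assoc, inv_mul_cancel,
        mul_one]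
    rw [h1, map_mul, map_mul, mul_assoc, hc, mul_assoc, mul_assoc]
    congr 1
    rw [← mul_assoc, hcen _ (s k), mul_assoc])
  refine ⟨θ, fun g y hy => ?_⟩
  obtain ⟨b, hb⟩ := hRu hy (hs g)
  refine ⟨b * e g ^ m, ?_⟩
  change y = _ * (j (e g ^ m)⁻¹ * s g)
  rw [hb, ← mul_assoc, ← map_mul, mul_assoc, mul_inv_cancel, mul_one]

/-- A form of Tate's theorem: if `K` is a normal subgroup with `G = P K` and `P ⊓ K ≤ N`, for a Sylow
`p`-subgroup `P` and a perfect normal subgroup `N ≤ K` with `P ⊓ N ≠ ⊥`, then `P` has a linear character of order `p` which is nontrivial on `P ⊓ N`.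
A transfer-type averaging of the cocycle of a section splits off a central quotient. -/
theorem tate {p a : ℕ} (hp : p.Prime) (P : Subgroup G) (hP : Nat.card P = p ^ a)
    (hind : p.Coprime P.index) {N K : Subgroup G} [hN : N.Normal] [hK : K.Normal] (hNK : N ≤ K)
    (hperf : commutator N = ⊤) (hPK : ∀ x ∈ P, x ∈ K → x ∈ N)
    (hcover : ∀ g : G, ∃ x ∈ P, x⁻¹ * g ∈ K) (hPN : P ⊓ N ≠ ⊥) :
    ∃ l : P →* ℂˣ, l ^ p = 1 ∧ ∃ x : P, (x : G) ∈ N ∧ l x ≠ 1 := by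
  classical
  have := Fact.mk hp
  have hPp : IsPGroup p P := IsPGroup.of_card hP
  let Q : Subgroup P := N.subgroupOf P
  have hQn : Q.Normal := inferInstance
  have hQ : Q ≠ ⊥ := by
    intro h
    apply hPN
    rw [eq_bot_iff]
    rintro x ⟨hx, hxN⟩
    have : (⟨x, hx⟩ : P) ∈ Q := hxN
    rw [h, Subgroup.mem_bot] at this
    exact congrArg Subtype.val this
  let M : Subgroup P := ⁅Q, (⊤ : Subgroup P)⁆
  have hMn : M.Normal := inferInstance
  let C : Subgroup (P ⧸ M) := Q.map (QuotientGroup.mk' M)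
  have hCen : C ≤ Subgroup.center (P ⧸ M) := by
    rintro _ ⟨x, hx, rfl⟩
    rw [Subgroup.mem_center_iff]
    intro y
    induction y using QuotientGroup.induction_on with
    | H y =>
    have : ⁅x, y⁆ ∈ M := Subgroup.commutator_mem_commutator hx (Subgroup.mem_top y)
    have h1 : ((⁅x, y⁆ : P) : P ⧸ M) = 1 := (QuotientGroup.eq_one_iff _).2 this
    rw [QuotientGroup.mk'_apply, ← QuotientGroup.mk_mul, ← QuotientGroup.mk_mul]
    rw [eq_comm, QuotientGroup.eq]
    have h2 : (x * y)⁻¹ * (y * x) = ⁅y⁻¹, x⁻¹⁆ := by rw [commutatorElement_def]; group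
    rw [h2]
    rw [← inv_mem_iff, commutatorElement_inv]
    exact Subgroup.commutator_mem_commutator (Q.inv_mem hx) (Subgroup.mem_top _)
  have hCc : ∀ c ∈ C, ∀ y, c * y = y * c := fun c hc y =>
    ((Subgroup.mem_center_iff.1 (hCen hc)) y).symm
  -- `R g e` : the coset `e` lifts the image of `g` in `G / K`
  let R : G → P ⧸ M → Prop := fun g e => ∃ x : P, (x : P ⧸ M) = e ∧ (x : G)⁻¹ * g ∈ K
  have hRm : ∀ {g h e e'}, R g e → R h e' → R (g * h) (e * e') := by
    rintro g h _ _ ⟨x, rfl, hx⟩ ⟨y, rfl, hy⟩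
    refine ⟨x * y, rfl, ?_⟩
    have : ((x * y : P) : G)⁻¹ * (g * h) = ((y : G)⁻¹ * ((x : G)⁻¹ * g) * (y : G)⁻¹⁻¹) * ((y : G)⁻¹ * h) := by
      rw [Subgroup.coe_mul]; group
    rw [this]
    exact K.mul_mem (hK.conj_mem _ hx _) hy
  have hRu : ∀ {g e e'}, R g e → R g e' → e * e'⁻¹ ∈ C := by
    rintro g _ _ ⟨x, rfl, hx⟩ ⟨y, rfl, hy⟩
    refine ⟨x * y⁻¹, ?_, rfl⟩
    change ((x * y⁻¹ : P) : G) ∈ N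
    refine hPK _ (x * y⁻¹).2 ?_
    have h1 : (x : G)⁻¹ * (y : G) ∈ K := by
      have := K.mul_mem hx (K.inv_mem hy)
      have e1 : (x : G)⁻¹ * g * ((y : G)⁻¹ * g)⁻¹ = (x : G)⁻¹ * y := by group
      rwa [e1] at this
    have h2 := K.inv_mem (hK.conj_mem _ h1 x)
    have e2 : ((x : G) * ((x : G)⁻¹ * (y : G)) * (x : G)⁻¹)⁻¹ = ((x * y⁻¹ : P) : G) := by
      rw [Subgroup.coe_mul, Subgroup.coe_inv]; group
    rwa [e2] at h2
  have hRP : ∀ x : P, R x (x : P ⧸ M) := fun x => ⟨x, rfl, by simp [K.one_mem]⟩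
  have hRe : ∀ g, ∃ e, R g e := by
    intro g
    obtain ⟨x, hx, h⟩ := hcover g
    exact ⟨_, ⟨x, hx⟩, rfl, h⟩
  let _ : CommGroup C := { (inferInstance : Group C) with
    mul_comm := fun x y => Subtype.ext (hCc x x.2 y) }
  obtain ⟨θ, hθ⟩ := exists_lift C.subtype Subtype.val_injective (fun c y => hCc c c.2 y) P
    (QuotientGroup.mk' M) R hRm (fun h h' => ⟨⟨_, hRu h h'⟩, by simp⟩) hRP hRe (q := p ^ a)
    (pow_ne_zero _ hp.ne_zero) (by
      intro z
      apply Subtype.ext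
      obtain ⟨x, hx⟩ := QuotientGroup.mk_surjective (z : P ⧸ M)
      change (z : P ⧸ M) ^ p ^ a = 1
      rw [← hx, ← QuotientGroup.mk_pow, ← hP, pow_card_eq_one', QuotientGroup.mk_one])
    (hind.symm.pow_right a)
  have hRθ : ∀ {g y}, R g y → y * (θ g)⁻¹ ∈ C := by
    intro g y h
    obtain ⟨b, hb⟩ := hθ g y h
    rw [hb, mul_assoc, mul_inv_cancel, mul_one]
    exact b.2
  have hθN : ∀ g ∈ N, θ g = 1 := by
    have h1 : ∀ g : N, θ g ∈ C := by
      intro g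
      have : R g 1 := ⟨1, rfl, by simpa using hNK g.2⟩
      have := C.inv_mem (hRθ this)
      simpa using this
    let φ : N →* C := (θ.comp N.subtype).codRestrict C fun g => h1 g
    have h2 : commutator N ≤ φ.ker := Abelianization.commutator_subset_ker φ
    intro g hg
    have h3 : (⟨g, hg⟩ : N) ∈ φ.ker := h2 (hperf ▸ Subgroup.mem_top _)
    exact congrArg (fun z : C => (z : P ⧸ M)) h3
  have hlC : ∀ x : P, (x : P ⧸ M) * (θ x)⁻¹ ∈ C := fun x => hRθ (hRP x)
  let ψ : P →* C := MonoidHom.mk' (fun x => ⟨_, hlC x⟩) (by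
    intro x y
    apply Subtype.ext
    change ((x * y : P) : P ⧸ M) * (θ ((x * y : P) : G))⁻¹ = (x : P ⧸ M) * (θ x)⁻¹ * ((y : P ⧸ M) * (θ y)⁻¹)
    rw [Subgroup.coe_mul, map_mul, mul_inv_rev, mul_assoc (x : P ⧸ M), ← hCc _ (hlC y) (θ x)⁻¹,
      QuotientGroup.mk_mul]
    simp only [mul_assoc])
  have hψ : ∀ x : P, (x : G) ∈ N → ((ψ x : C) : P ⧸ M) = x := by
    intro x hx
    change (x : P ⧸ M) * (θ x)⁻¹ = x
    rw [hθN _ hx]; simp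
  have hCp : IsPGroup p C := (hPp.to_quotient M).to_subgroup _
  have hCn : Nontrivial C := by
    have h1 := exists_not_mem_commutator hp hPp hQ
    rw [SetLike.not_le_iff_exists] at h1
    obtain ⟨x, hx, hxM⟩ := h1
    refine ⟨⟨ψ x, 1, fun h => hxM ?_⟩⟩
    rw [← QuotientGroup.eq_one_iff, ← hψ x hx, h]
    rfl
  obtain ⟨l, hl, hl1⟩ := exists_linear_of_pGroup hCp
  refine ⟨l.comp ψ, ?_, ?_⟩
  · ext x
    have := DFunLike.congr_fun hl (ψ x)
    simpa using congrArg Units.val this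
  · by_contra hcon
    push Not at hcon
    apply hl1
    ext z
    obtain ⟨x, hx, hxz⟩ := z.2
    have h1 := hcon x hx
    have h2 : ψ x = z := by
      apply Subtype.ext
      rw [hψ x hx]; exact hxz
    rw [MonoidHom.comp_apply, h2] at h1
    rw [h1]; rfl

end AcdK

/-! ### The excess of the average degree -/

namespace AcdK

variable {G : Type} [Group G] [Finite G]

open scoped Classical in
/-- The `k`-valued irreducible characters of `G`, as a finset. -/
noncomputable def kirr (G : Type) [Group G] [Finite G] (k : Subfield ℂ) : Finset (G → ℂ) :=
  (irr G).filter fun χ => ∀ g, χ g ∈ k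

lemma mem_kirr {k : Subfield ℂ} {χ : G → ℂ} : χ ∈ kirr G k ↔ χ ∈ Irr G ∧ ∀ g, χ g ∈ k := by
  simp [kirr, mem_irr]

/-- The nonlinear `k`-valued irreducible characters of `G`. -/
noncomputable def nlin (G : Type) [Group G] [Finite G] (k : Subfield ℂ) : Finset (G → ℂ) :=
  (kirr G k).filter fun χ => deg χ ≠ 1

lemma mem_nlin {k : Subfield ℂ} {χ : G → ℂ} :
    χ ∈ nlin G k ↔ χ ∈ Irr G ∧ (∀ g, χ g ∈ k) ∧ deg χ ≠ 1 := by
  simp [nlin, mem_kirr, and_assoc]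

/-- The group of `k`-valued linear characters of `G`. -/
def linK (G : Type) [Group G] (k : Subfield ℂ) : Subgroup (G →* ℂˣ) where
  carrier := {l | ∀ x, (l x : ℂ) ∈ k}
  one_mem' := fun x => by simp
  mul_mem' := fun ha hb x => by simpa using k.mul_mem (ha x) (hb x)
  inv_mem' := fun ha x => by simpa using k.inv_mem (ha x)

lemma mem_linK {k : Subfield ℂ} {l : G →* ℂˣ} : l ∈ linK G k ↔ ∀ x, (l x : ℂ) ∈ k := Iff.rfl

lemma tw_mem_nlin {k : Subfield ℂ} {l : G →* ℂˣ} (hl : l ∈ linK G k) {χ : G → ℂ}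
    (hχ : χ ∈ nlin G k) : tw l χ ∈ nlin G k := by
  rw [mem_nlin] at hχ ⊢
  exact ⟨tw_mem l hχ.1, fun g => k.mul_mem (hl g) (hχ.2.1 g), by rw [deg_tw]; exact hχ.2.2⟩

lemma tw_inv_tw (l : G →* ℂˣ) (χ : G → ℂ) : tw l⁻¹ (tw l χ) = χ := by
  ext x
  simp [tw]

lemma linear_deg (l : G →* ℂˣ) : deg (fun x => (l x : ℂ)) = 1 := by
  have h := irr_deg (linear_mem_irr l)
  simp only [map_one, Units.val_one] at h
  exact_mod_cast h.symm

lemma card_lin (k : Subfield ℂ) :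
    ((kirr G k).filter fun χ => deg χ = 1).card = Nat.card (linK G k) := by
  have := Fintype.ofFinite (linK G k)
  rw [Nat.card_eq_fintype_card, ← Finset.card_univ]
  symm
  refine Finset.card_bij (fun l _ => fun x => ((l : G →* ℂˣ) x : ℂ)) ?_ ?_ ?_
  · intro l _
    rw [Finset.mem_filter, mem_kirr]
    exact ⟨⟨linear_mem_irr _, l.2⟩, linear_deg _⟩
  · intro l _ l' _ h
    apply Subtype.ext
    ext x
    exact congrFun h x
  · intro χ hχ
    rw [Finset.mem_filter, mem_kirr] at hχ
    obtain ⟨l, rfl⟩ := exists_linear hχ.1.1 hχ.2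
    exact ⟨⟨l, hχ.1.2⟩, Finset.mem_univ _, rfl⟩

/-- The sum of `χ(1) - c` over the `k`-valued irreducible characters; it is negative exactly when
the average degree is less than `c`. -/
noncomputable def excess (G : Type) [Group G] [Finite G] (k : Subfield ℂ) (c : ℝ) : ℝ :=
  ∑ χ ∈ kirr G k, ((deg χ : ℝ) - c)

lemma one_mem_kirr (k : Subfield ℂ) : (1 : G → ℂ) ∈ kirr G k :=
  mem_kirr.2 ⟨one_mem_irr, fun _ => k.one_mem⟩

lemma acdK_lt_iff (k : Subfield ℂ) (c : ℝ) : acdK G k < c ↔ excess G k c < 0 := by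
  have h1 : IrrK G k = ↑(kirr G k) := by
    ext χ; rw [Finset.mem_coe, mem_kirr]; rfl
  have h2 : (0 : ℝ) < (kirr G k).card := by
    exact_mod_cast Finset.card_pos.2 ⟨1, one_mem_kirr k⟩
  have h3 : ∑ χ ∈ kirr G k, (χ 1).re = ∑ χ ∈ kirr G k, (deg χ : ℝ) := by
    refine Finset.sum_congr rfl fun χ hχ => ?_
    rw [irr_deg (mem_kirr.1 hχ).1]; simp
  rw [acdK, h1, finsum_mem_coe_finset, h3, excess, Finset.sum_sub_distrib, sub_neg,
    Finset.sum_const, nsmul_eq_mul, mul_comm]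
  have h4 : Nat.card (↑(kirr G k) : Set (G → ℂ)) = (kirr G k).card := by
    simp
  rw [h4, div_lt_iff₀ h2]

lemma excess_eq (k : Subfield ℂ) (c : ℝ) :
    excess G k c = ∑ χ ∈ nlin G k, ((deg χ : ℝ) - c) - (c - 1) * Nat.card (linK G k) := by
  rw [excess, ← Finset.sum_filter_add_sum_filter_not _ (fun χ => deg χ = 1), ← card_lin]
  have : ∑ χ ∈ (kirr G k).filter (fun χ => deg χ = 1), ((deg χ : ℝ) - c) =
      ((kirr G k).filter fun χ => deg χ = 1).card * (1 - c) := by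
    rw [← nsmul_eq_mul, ← Finset.sum_const]
    refine Finset.sum_congr rfl fun χ hχ => ?_
    rw [(Finset.mem_filter.1 hχ).2]; simp
  rw [this]
  simp only [nlin, ne_eq]
  ring

/-- Summing over orbits of a group `W` of linear characters acting on irreducible characters by
multiplication: the orbit of `χ` has `|W| / |W_χ|` elements. -/
lemma orbit_sum (W : Subgroup (G →* ℂˣ)) (Y S : Finset (G → ℂ))
    (hS : ∀ μ ∈ W, ∀ χ ∈ Y, tw μ χ ∈ S)
    (hY : ∀ μ ∈ W, ∀ χ ∈ Y, ∀ χ' ∈ Y, tw μ χ = χ' → χ = χ') (w : (G → ℂ) → ℝ)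
    (hw : ∀ μ ∈ W, ∀ χ ∈ Y, w (tw μ χ) = w χ) (hw0 : ∀ ψ ∈ S, 0 ≤ w ψ) :
    ∑ χ ∈ Y, (Nat.card W : ℝ) * (w χ / Nat.card (W ⊓ stab χ : Subgroup (G →* ℂˣ))) ≤
      ∑ ψ ∈ S, w ψ := by
  classical
  have := Fintype.ofFinite W
  have h1 : ∑ χ ∈ Y, (Nat.card W : ℝ) * (w χ / Nat.card (W ⊓ stab χ : Subgroup (G →* ℂˣ))) =
      ∑ z ∈ Y ×ˢ (Finset.univ : Finset W),
        w z.1 / Nat.card (W ⊓ stab z.1 : Subgroup (G →* ℂˣ)) := by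
    rw [Finset.sum_product]
    refine Finset.sum_congr rfl fun χ _ => ?_
    simp only
    rw [Finset.sum_const, nsmul_eq_mul, Finset.card_univ, Nat.card_eq_fintype_card]
  rw [h1, ← Finset.sum_fiberwise_of_maps_to (t := S) (g := fun z : (G → ℂ) × W => tw (z.2 : G →* ℂˣ) z.1)
    (fun z hz => hS _ z.2.2 _ (Finset.mem_product.1 hz).1)]
  refine Finset.sum_le_sum fun ψ hψ => ?_
  obtain hE | ⟨⟨χ, ν⟩, hz⟩ := Finset.eq_empty_or_nonempty
    ((Y ×ˢ (Finset.univ : Finset W)).filter fun z => tw (z.2 : G →* ℂˣ) z.1 = ψ)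
  · rw [hE, Finset.sum_empty]; exact hw0 ψ hψ
  obtain ⟨hz1, hz2⟩ := Finset.mem_filter.1 hz
  have hχ := (Finset.mem_product.1 hz1).1
  have hfst : ∀ z ∈ (Y ×ˢ (Finset.univ : Finset W)).filter
      (fun z => tw (z.2 : G →* ℂˣ) z.1 = ψ), z.1 = χ := by
    rintro ⟨χ', ν'⟩ hz'
    obtain ⟨h1, h2⟩ := Finset.mem_filter.1 hz'
    refine hY ((ν : G →* ℂˣ)⁻¹ * ν') (W.mul_mem (W.inv_mem ν.2) ν'.2) _ (Finset.mem_product.1 h1).1 _ hχ ?_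
    simp only at h2 hz2
    rw [tw_mul, h2, ← hz2, tw_inv_tw]
  have hpos : (0 : ℝ) < Nat.card (W ⊓ stab χ : Subgroup (G →* ℂˣ)) := by
    exact_mod_cast Nat.card_pos
  have hwχ : w χ = w ψ := by rw [← hz2]; exact (hw _ ν.2 _ hχ).symm
  rw [Finset.sum_congr rfl fun z hz => by rw [hfst z hz], Finset.sum_const, nsmul_eq_mul, hwχ,
    mul_div_assoc', div_le_iff₀ hpos, mul_comm]
  refine mul_le_mul_of_nonneg_left ?_ (hw0 ψ hψ)
  have := Fintype.ofFinite (W ⊓ stab χ : Subgroup (G →* ℂˣ))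
  rw [Nat.card_eq_fintype_card, ← Finset.card_univ]
  norm_cast
  refine Finset.card_le_card_of_injOn (fun z => if h : (ν : G →* ℂˣ)⁻¹ * z.2 ∈ W ⊓ stab χ then ⟨_, h⟩
    else 1) (fun _ _ => Finset.mem_univ _) ?_
  have hin : ∀ z ∈ (Y ×ˢ (Finset.univ : Finset W)).filter
      (fun z => tw (z.2 : G →* ℂˣ) z.1 = ψ), (ν : G →* ℂˣ)⁻¹ * z.2 ∈ W ⊓ stab χ := by
    intro z hz
    refine ⟨W.mul_mem (W.inv_mem ν.2) z.2.2, ?_⟩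
    have h2 := (Finset.mem_filter.1 hz).2
    rw [hfst z hz] at h2
    simp only at hz2
    change _ ∈ stab χ
    rw [mem_stab, tw_mul, h2, ← hz2, tw_inv_tw]
  intro z hz z' hz' h
  rw [Finset.mem_coe] at hz hz'
  simp only [dif_pos (hin z hz), dif_pos (hin z' hz')] at h
  have h3 := mul_left_cancel (congrArg Subtype.val h)
  exact Prod.ext ((hfst z hz).trans (hfst z' hz').symm) (Subtype.ext h3)

end AcdK

/-! ### Perfect minimal normal subgroups -/

namespace AcdK

lemma eq_one_of_pow_coprime {M : Type*} [Monoid M] {x : M} {i j : ℕ} (h : i.Coprime j)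
    (hi : x ^ i = 1) (hj : x ^ j = 1) : x = 1 := by
  have := Nat.dvd_gcd (orderOf_dvd_of_pow_eq_one hi) (orderOf_dvd_of_pow_eq_one hj)
  rw [h.gcd_eq_one, Nat.dvd_one, orderOf_eq_one_iff] at this
  exact this

variable {G : Type} [Group G] [Finite G]

lemma mem_of_pow_coprime {N : Subgroup G} [N.Normal] {x : G} {i j : ℕ} (h : i.Coprime j)
    (hi : x ^ i ∈ N) (hj : x ^ j ∈ N) : x ∈ N := by
  rw [← QuotientGroup.eq_one_iff] at hi hj ⊢
  exact eq_one_of_pow_coprime h hi hj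

lemma pow_relIndex_mem {N K : Subgroup G} [N.Normal] {x : G} (hx : x ∈ K) :
    x ^ N.relIndex K ∈ N :=
  (N.subgroupOf K).pow_index_mem ⟨x, hx⟩

lemma pw_pow_fix {t : ℕ} {χ : G → ℂ} (h : pw t χ = χ) (n : ℕ) : pw (t ^ n) χ = χ := by
  induction n with
  | zero => ext x; simp [pw]
  | succ n ih => rw [pow_succ', ← pw_pw, ih, h]

lemma val_pow_eq_one {A : Type} [Group A] {l : A →* ℂˣ} {n : ℕ} (h : l ^ n = 1) (x : A) :
    (l x : ℂ) ^ n = 1 := by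
  have := congrArg Units.val (DFunLike.congr_fun h x)
  simpa using this

/-- A group of linear characters is not larger than the product of its `q`- and `m`-torsion, for
coprime `q` and `m`. -/
lemma card_le_torsion {q m : ℕ} (hqm : q.Coprime m) (hcard : Nat.card G = q * m)
    (L : Subgroup (G →* ℂˣ)) :
    Nat.card L ≤ Nat.card (L ⊓ (powMonoidHom q).ker : Subgroup (G →* ℂˣ)) *
      Nat.card (L ⊓ (powMonoidHom m).ker : Subgroup (G →* ℂˣ)) := by
  rw [← Nat.card_prod]
  have hc : ∀ l : G →* ℂˣ, l ^ (q * m) = 1 := by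
    intro l
    ext x
    rw [← hcard]
    simp [← map_pow]
  refine Nat.card_le_card_of_injective (fun l : L =>
    ((⟨l ^ m, L.pow_mem l.2 m, ?_⟩, ⟨l ^ q, L.pow_mem l.2 q, ?_⟩) :
      (L ⊓ (powMonoidHom q).ker : Subgroup (G →* ℂˣ)) ×
      (L ⊓ (powMonoidHom m).ker : Subgroup (G →* ℂˣ)))) ?_
  · change ((l : G →* ℂˣ) ^ m) ^ q = 1
    exact (pow_mul (l : G →* ℂˣ) m q).symm.trans (by rw [mul_comm]; exact hc _)
  · change ((l : G →* ℂˣ) ^ q) ^ m = 1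
    exact (pow_mul (l : G →* ℂˣ) q m).symm.trans (hc _)
  · intro l l' h
    rw [Prod.mk.injEq] at h
    apply Subtype.ext
    refine MonoidHom.ext fun x => ?_
    have h1 : (l : G →* ℂˣ) x ^ m = (l' : G →* ℂˣ) x ^ m :=
      DFunLike.congr_fun (congrArg Subtype.val h.1) x
    have h2 : (l : G →* ℂˣ) x ^ q = (l' : G →* ℂˣ) x ^ q :=
      DFunLike.congr_fun (congrArg Subtype.val h.2) x
    rw [← div_eq_one] at h1 h2 ⊢
    rw [← div_pow] at h1 h2
    exact eq_one_of_pow_coprime hqm h2 h1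

open scoped Classical in
set_option maxHeartbeats 2000000 in
/-- The case of a perfect normal subgroup `N` of order divisible by `p` such that `G ⧸ N` has the
normal `p`-complement `K ⧸ N`: there are so many characters of degree at least `5` not containing
`N` in their kernels that the average degree is at least `3`. -/
theorem perfect_case (hG : Odd (Nat.card G)) {p : ℕ} (hp : p.Prime) (hodd : Odd p)
    {k : Subfield ℂ} (hkp : ∀ z : ℂ, IsPrimitiveRoot z p → z ∈ k) {N K : Subgroup G}
    [hN : N.Normal] [hK : K.Normal] (hNK : N ≤ K) (hperf : commutator N = ⊤)
    (hpN : p ∣ Nat.card N) (hKN : (N.relIndex K).Coprime p) {n : ℕ} (hKi : K.index = p ^ n) :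
    2 * (Nat.card (linK G k) : ℝ) ≤ ∑ χ ∈ nlin G k, ((deg χ : ℝ) - 3) := by
  have := Fact.mk hp
  obtain ⟨a, m, hpm', hcard⟩ := Nat.exists_eq_pow_mul_and_not_dvd
    (Nat.card_pos (α := G)).ne' p hp.ne_one
  have hpm1 : p.Coprime m := (Nat.Prime.coprime_iff_not_dvd hp).2 hpm'
  have hpm : (p ^ a).Coprime m := hpm1.pow_left a
  obtain ⟨P, hP⟩ := Sylow.exists_subgroup_card_pow_prime p (G := G) (n := a)
    (hcard ▸ Dvd.intro _ rfl)
  have hPi : P.index = m := by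
    have := P.card_mul_index
    rw [hP, hcard] at this
    exact Nat.eq_of_mul_eq_mul_left (pow_pos hp.pos a) this
  have hPpow : ∀ x ∈ P, x ^ p ^ a = 1 := by
    intro x hx
    have := pow_card_eq_one' (x := (⟨x, hx⟩ : P))
    rw [hP] at this
    exact congrArg Subtype.val this
  have hPK : ∀ x ∈ P, x ∈ K → x ∈ N := by
    intro x hx hxK
    refine mem_of_pow_coprime (hKN.pow_right a) (pow_relIndex_mem hxK) ?_
    rw [hPpow x hx]; exact N.one_mem
  have hcover : ∀ g : G, ∃ x ∈ P, x⁻¹ * g ∈ K := by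
    intro g
    have h1 : P ⊔ K = ⊤ := by
      rw [← Subgroup.index_eq_one, ← Nat.dvd_one, ← (hpm1.pow_left n).gcd_eq_one]
      refine Nat.dvd_gcd ?_ ?_
      · rw [← hKi]; exact Subgroup.index_dvd_of_le le_sup_right
      · rw [← hPi]; exact Subgroup.index_dvd_of_le le_sup_left
    have h2 : g ∈ P ⊔ K := h1 ▸ Subgroup.mem_top g
    obtain ⟨x, hx, y, hy, rfl⟩ := Subgroup.mem_sup_of_normal_right.1 h2
    exact ⟨x, hx, by simpa using hy⟩
  have hPN : P ⊓ N ≠ ⊥ := by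
    intro h
    have h1 : N.relIndex P = p ^ a := by
      rw [← Subgroup.inf_relIndex_left, h, Subgroup.relIndex_bot_left, hP]
    have h2 : p ^ a ∣ N.index := h1 ▸ Subgroup.relIndex_dvd_index_of_normal N P
    obtain ⟨b, hb⟩ := h2
    have h3 := N.card_mul_index
    rw [hb, hcard, mul_left_comm] at h3
    have h4 := Nat.eq_of_mul_eq_mul_left (pow_pos hp.pos a) h3
    exact hpm' (h4 ▸ hpN.mul_right b)
  obtain ⟨l, hlp, x0, hx0N, hx0⟩ := tate hp P hP (hPi ▸ hpm1) hNK hperf hPK hcover hPN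
  obtain ⟨t, ht, htm, htp, htk, htI⟩ := exists_t0 hG hp hodd hcard hpm hkp
  -- elements of `X` contain `K` in their kernels
  have hker : ∀ χ ∈ Irr G, pw t χ = χ → (∀ n ∈ N, χ n = χ 1) → ∀ g ∈ K, χ g = χ 1 := by
    intro χ hχ hfix hχN g hg
    obtain ⟨ψ, hψ, hψχ⟩ := exists_quot hχ hχN
    have hKn : (K.map (QuotientGroup.mk' N)).Normal :=
      hK.map _ (QuotientGroup.mk'_surjective N)
    have hoddq : Odd (Nat.card (G ⧸ N)) :=
      Odd.of_dvd_nat hG (Subgroup.card_quotient_dvd_card N)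
    have h1 := ker_of_inverted hoddq hψ (N := K.map (QuotientGroup.mk' N)) (t := t)
      (by
        ext y
        obtain ⟨y, rfl⟩ := QuotientGroup.mk_surjective y
        have := congrFun hfix y
        simp only [pw, hψχ, QuotientGroup.mk_pow] at this ⊢
        exact this)
      (by
        rintro _ ⟨y, hy, rfl⟩
        rw [eq_inv_iff_mul_eq_one, ← pow_succ, ← map_pow]
        change ((y ^ (t + 1) : G) : G ⧸ N) = 1
        rw [QuotientGroup.eq_one_iff]
        have hd : N.relIndex K ∣ t + 1 := by
          refine dvd_trans ?_ htm
          have h2 : N.relIndex K ∣ p ^ a * m := by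
            rw [← hcard]
            exact ((Dvd.intro _ (Subgroup.relIndex_mul_index hNK))).trans
              (Subgroup.index_dvd_card N)
          exact (hKN.pow_right a).dvd_of_dvd_mul_left h2
        obtain ⟨b, hb⟩ := hd
        rw [hb, pow_mul]
        exact N.pow_mem (pow_relIndex_mem hy) b)
    rw [hψχ, hψχ]
    exact h1 _ ⟨g, hg, rfl⟩
  set I := (irr G).filter fun χ => pw t χ = χ with hI
  set X := I.filter fun χ => ∀ n ∈ N, χ n = χ 1 with hX
  have hXm : ∀ χ, χ ∈ X ↔ χ ∈ Irr G ∧ pw t χ = χ ∧ ∀ n ∈ N, χ n = χ 1 := by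
    intro χ; rw [hX, hI, Finset.mem_filter, Finset.mem_filter, mem_irr, and_assoc]
  set L := linK G k ⊓ (powMonoidHom (p ^ a)).ker with hL
  have hLp : ∀ μ ∈ L, μ ^ p ^ a = 1 := fun μ hμ => hμ.2
  have hLt : ∀ μ ∈ L, ∀ x, μ (x ^ t) = μ x := by
    intro μ hμ x
    apply Units.ext
    rw [map_pow, Units.val_pow_eq_pow_val]
    exact htk _ (hμ.1 x) (val_pow_eq_one (hLp μ hμ) x)
  have hcnt := count_Y hp P hP hcard hpm ht htp X
    ((hXm _).2 ⟨one_mem_irr, by ext; simp [pw], by simp⟩)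
    (fun χ hχ => irr_classFn ((hXm χ).1 hχ).1) (fun χ hχ => ((hXm χ).1 hχ).2.1)
    (by
      intro χ hχ
      obtain ⟨h1, h2, h3⟩ := (hXm χ).1 hχ
      obtain ⟨ψ, hψ, hψχ⟩ := exists_quot h1 (hker χ h1 h2 h3)
      have h4 : res P χ = fun x => ψ ((QuotientGroup.mk' K).comp P.subtype x) := by
        ext x
        exact hψχ x
      rw [h4]
      refine comp_mem _ ?_ hψ
      intro g
      obtain ⟨g, rfl⟩ := QuotientGroup.mk_surjective g
      obtain ⟨x, hx, hxg⟩ := hcover g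
      exact ⟨⟨x, hx⟩, QuotientGroup.eq.2 hxg⟩)
    (by
      intro χ hχ χ' hχ' h
      ext g
      obtain ⟨x, hx, hxg⟩ := hcover g
      have hg : g = (x * (x⁻¹ * g) * x⁻¹) * x := by group
      have hk := hK.conj_mem _ hxg x
      obtain ⟨h1, h2, h3⟩ := (hXm χ).1 hχ
      obtain ⟨h1', h2', h3'⟩ := (hXm χ').1 hχ'
      rw [hg, ker_mul (isChar_of_mem h1) (hker χ h1 h2 h3) hk,
        ker_mul (isChar_of_mem h1') (hker χ' h1' h2' h3') hk]
      exact congrFun h ⟨x, hx⟩)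
    L hLp
    (by
      intro μ hμ χ hχ
      obtain ⟨h1, h2, h3⟩ := (hXm χ).1 hχ
      refine (hXm _).2 ⟨tw_mem μ h1, ?_, ?_⟩
      · rw [pw_tw (hLt μ hμ), h2]
      · intro n hn
        have : μ n = 1 := perfect_le_ker hperf μ hn
        simp [tw, this, h3 n hn])
    l
    (by
      intro x
      apply Units.ext
      rw [map_pow, Units.val_pow_eq_pow_val]
      refine htk _ ?_ ?_
      · have h1 := val_pow_eq_one hlp x
        by_cases h2 : (l x : ℂ) = 1
        · rw [h2]; exact k.one_mem
        · refine hkp _ ?_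
          have h3 := IsPrimitiveRoot.orderOf (l x : ℂ)
          rwa [orderOf_eq_prime h1 h2] at h3
      · have := hPpow x x.2
        have h1 : x ^ p ^ a = 1 := Subtype.ext this
        rw [← Units.val_pow_eq_pow_val, ← map_pow, h1, map_one, Units.val_one])
    (by
      intro χ hχ h
      obtain ⟨h1, h2, h3⟩ := (hXm χ).1 hχ
      apply hx0
      apply Units.ext
      rw [congrFun h x0]
      have h4 : χ (x0 : G) = χ 1 := h3 _ hx0N
      have h5 := congrFun h 1
      simp only [map_one] at h5
      rw [h5]
      exact h4)
  set Y := I \ X with hY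
  have hXI : X ⊆ I := Finset.filter_subset _ _
  have hYcard : Nat.card L ≤ Y.card := by
    rw [hY, Finset.card_sdiff_of_subset hXI]
    have hcnt' : X.card + Nat.card L ≤ I.card := hcnt
    omega
  have hYm : ∀ χ ∈ Y, χ ∈ Irr G ∧ pw t χ = χ ∧ ¬ ∀ n ∈ N, χ n = χ 1 := by
    intro χ hχ
    obtain ⟨h1, h2⟩ := Finset.mem_sdiff.1 hχ
    rw [hX, Finset.mem_filter] at h2
    have h3 := h1
    rw [hI, Finset.mem_filter, mem_irr] at h3
    exact ⟨h3.1, h3.2, fun h => h2 ⟨h1, h⟩⟩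
  set M := linK G k ⊓ (powMonoidHom m).ker with hM
  have hpo : Odd (p ^ a) := hodd.pow
  have hMτ : ∀ μ ∈ M, ∀ x, x ^ (t ^ p ^ a) = x → μ x = 1 := by
    intro μ hμ x hx
    rw [tau_fix hG hcard hpm htm htp hpo] at hx
    refine eq_one_of_pow_coprime hpm (by rw [← map_pow, hx, map_one]) ?_
    have h1 : μ ^ m = 1 := hμ.2
    exact DFunLike.congr_fun h1 x
  have hτ := tau_sq hcard hpm htm htp hpo
  have hsum := orbit_sum M Y (nlin G k)
    (by
      intro μ hμ χ hχ
      obtain ⟨h1, h2, h3⟩ := hYm χ hχ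
      have h5 := five_le_deg hG hperf h1 h3
      exact tw_mem_nlin hμ.1 (mem_nlin.2 ⟨h1, htI χ h1 h2, by omega⟩))
    (by
      intro μ hμ χ hχ χ' hχ' h
      obtain ⟨h1, h2, h3⟩ := hYm χ hχ
      obtain ⟨h1', h2', h3'⟩ := hYm χ' hχ'
      refine tau_eq hG hτ h1 h1' (pw_pow_fix h2 _) (pw_pow_fix h2' _) fun x hx => ?_
      rw [← h]
      simp [tw, hMτ μ hμ x hx])
    (fun χ => (deg χ : ℝ) - 3) (fun μ _ χ _ => by simp only [deg_tw])
    (by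
      intro ψ hψ
      obtain ⟨h1, -, h2⟩ := mem_nlin.1 hψ
      have := three_le_deg hG h1 h2
      have : (3 : ℝ) ≤ deg ψ := by exact_mod_cast this
      linarith)
  refine le_trans ?_ hsum
  have hterm : ∀ χ ∈ Y, (Nat.card M : ℝ) * 2 ≤ (Nat.card M : ℝ) * (((deg χ : ℝ) - 3) /
      Nat.card (M ⊓ stab χ : Subgroup (G →* ℂˣ))) := by
    intro χ hχ
    refine mul_le_mul_of_nonneg_left ?_ (Nat.cast_nonneg _)
    obtain ⟨h1, h2, h3⟩ := hYm χ hχ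
    have h5 := five_mul_card_le _ G hG (t ^ p ^ a) (ht.pow_left _) hτ N hN hperf χ h1
      (pw_pow_fix h2 _) h3 (M ⊓ stab χ) rfl inf_le_right (fun μ hμ => hMτ μ hμ.1)
    have h6 : (1 : ℝ) ≤ Nat.card (M ⊓ stab χ : Subgroup (G →* ℂˣ)) := by
      exact_mod_cast Nat.card_pos
    have h7 : 5 * (Nat.card (M ⊓ stab χ : Subgroup (G →* ℂˣ)) : ℝ) ≤ deg χ := by
      exact_mod_cast h5
    rw [le_div_iff₀ (by linarith)]
    linarith
  refine le_trans ?_ (Finset.sum_le_sum hterm)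
  rw [Finset.sum_const, nsmul_eq_mul]
  have h1 : (Nat.card (linK G k) : ℝ) ≤ Nat.card L * Nat.card M := by
    exact_mod_cast card_le_torsion hpm hcard (linK G k)
  have h2 : (Nat.card L : ℝ) ≤ Y.card := by exact_mod_cast hYcard
  have h3 : (0 : ℝ) ≤ Nat.card M := Nat.cast_nonneg _
  nlinarith [mul_le_mul_of_nonneg_right h2 h3]

end AcdK

/-! ### Action on the dual of an abelian normal subgroup -/

namespace AcdK

variable {G : Type} [Group G] [Finite G]

/-- Conjugation action of `G` on the linear characters of a normal subgroup. -/
instance dualAction (Z : Subgroup G) [Z.Normal] : MulAction G (Z →* ℂˣ) where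
  smul g l := l.comp (MulAut.conjNormal g⁻¹ : MulAut Z).toMonoidHom
  one_smul l := by
    ext z
    change ((l (MulAut.conjNormal (1 : G)⁻¹ z) : ℂˣ) : ℂ) = l z
    simp
  mul_smul g h l := by
    ext z
    change ((l (MulAut.conjNormal (g * h)⁻¹ z) : ℂˣ) : ℂ) =
      l (MulAut.conjNormal h⁻¹ (MulAut.conjNormal g⁻¹ z))
    rw [mul_inv_rev, map_mul, MulAut.mul_apply]

variable {Z : Subgroup G} [hZn : Z.Normal]

lemma dual_smul_apply (g : G) (l : Z →* ℂˣ) (z : Z) :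
    (g • l) z = l (MulAut.conjNormal g⁻¹ z) := rfl

lemma dual_smul_mul (g : G) (l l' : Z →* ℂˣ) : g • (l * l') = (g • l) * (g • l') := rfl

lemma dual_smul_one (g : G) : g • (1 : Z →* ℂˣ) = 1 := rfl

lemma dual_smul_inv (g : G) (l : Z →* ℂˣ) : g • l⁻¹ = (g • l)⁻¹ := rfl

lemma dual_smul_pow (g : G) (l : Z →* ℂˣ) (n : ℕ) : g • l ^ n = (g • l) ^ n := rfl

lemma mem_stabilizer_apply {l : Z →* ℂˣ} {g : G} (hg : g ∈ MulAction.stabilizer G l) (z : Z) :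
    l (MulAut.conjNormal g z) = l z := by
  have h := (MulAction.stabilizer G l).inv_mem hg
  rw [MulAction.mem_stabilizer_iff] at h
  have := DFunLike.congr_fun h z
  rwa [dual_smul_apply, inv_inv] at this

lemma le_stabilizer (hcomm : ∀ x y : Z, x * y = y * x) (l : Z →* ℂˣ) :
    Z ≤ MulAction.stabilizer G l := by
  intro z hz
  rw [MulAction.mem_stabilizer_iff]
  ext y
  rw [dual_smul_apply]
  congr 2
  apply Subtype.ext
  have := congrArg Subtype.val (hcomm ⟨z, hz⟩⁻¹ y)
  simp only [Subgroup.coe_mul, Subgroup.coe_inv] at this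
  simp only [MulAut.conjNormal_apply, inv_inv]
  rw [this, inv_mul_cancel_right]

/-- Distinct constituents of the restriction of `χ` to `A` with the same linear restriction `l` to
`Z ≤ A` contribute to the multiplicity of `l`. -/
lemma card_le_mult {A : Subgroup G} (hZA : Z ≤ A) {χ : G → ℂ} (hχ : IsChar χ) (l : Z →* ℂˣ)
    (F : Finset (A → ℂ)) (hF : ∀ θ ∈ F, θ ∈ Irr A ∧ mult (res A χ) θ ≠ 0 ∧
      ∀ z : Z, θ (Subgroup.inclusion hZA z) = l z) :
    F.card ≤ mult (res Z χ) (fun z => (l z : ℂ)) := by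
  classical
  have hl := isChar_linear l
  have h1 : res Z χ = ∑ θ ∈ irr A, (mult (res A χ) θ : ℂ) •
      fun z => θ (Subgroup.inclusion hZA z) := by
    ext z
    have := congrFun (hχ.res A).expand (Subgroup.inclusion hZA z)
    rw [Finset.sum_apply] at this ⊢
    exact this
  have h2 : mult (res Z χ) (fun z => (l z : ℂ)) = ∑ θ ∈ irr A, mult (res A χ) θ *
      mult (fun z => θ (Subgroup.inclusion hZA z)) (fun z => (l z : ℂ)) := by
    have h3 := mult_eq (hχ.res Z) hl
    rw [h1, ip_sum_left, ← h1] at h3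
    have h4 : ∀ θ ∈ irr A, ip ((mult (res A χ) θ : ℂ) •
        fun z => θ (Subgroup.inclusion hZA z)) (fun z => (l z : ℂ)) =
        ((mult (res A χ) θ *
      mult (fun z => θ (Subgroup.inclusion hZA z)) (fun z => (l z : ℂ)) : ℕ) : ℂ) := by
      intro θ hθ
      rw [ip_smul_left, mult_eq ((isChar_of_mem (mem_irr.1 hθ)).comp _) hl]
      push_cast; rfl
    rw [Finset.sum_congr rfl h4] at h3
    exact_mod_cast h3.symm
  rw [h2, Finset.card_eq_sum_ones]
  refine le_trans (Finset.sum_le_sum (g := fun θ => mult (res A χ) θ *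
      mult (fun z => θ (Subgroup.inclusion hZA z)) (fun z => (l z : ℂ))) fun θ hθ => ?_)
    (Finset.sum_le_sum_of_subset fun θ hθ => mem_irr.2 (hF θ hθ).1)
  obtain ⟨h3, h4, h5⟩ := hF θ hθ
  have h6 : (fun z => θ (Subgroup.inclusion hZA z)) = fun z => (l z : ℂ) := funext h5
  have h7 : mult (fun z => (l z : ℂ)) (fun z => (l z : ℂ)) = 1 := by
    have := mult_eq hl hl
    rw [ip_irr_self (linear_mem_irr l)] at this
    exact_mod_cast this.symm
  rw [h6, h7]
  omega

/-- The degree of an irreducible character lying over `l` is at least the size of the orbit of `l`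
times the multiplicity. -/
lemma orbit_mul_le_deg {χ : G → ℂ} (hχ : χ ∈ Irr G) (l : Z →* ℂˣ) :
    (MulAction.stabilizer G l).index * mult (res Z χ) (fun z => (l z : ℂ)) ≤ deg χ := by
  classical
  have hc := isChar_of_mem hχ
  have := Fintype.ofFinite (MulAction.orbit G l)
  have h1 : (MulAction.stabilizer G l).index = Fintype.card (MulAction.orbit G l) := by
    rw [MulAction.index_stabilizer, Set.ncard_eq_toFinset_card', Set.toFinset_card]
  let e : MulAction.orbit G l → Z → ℂ := fun v z => ((v : Z →* ℂˣ) z : ℂ)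
  have he : Function.Injective e := by
    intro v w h
    apply Subtype.ext
    ext z
    exact congrFun h z
  have hm : ∀ v, mult (res Z χ) (e v) = mult (res Z χ) (fun z => (l z : ℂ)) := by
    rintro ⟨_, g, rfl⟩
    have h2 := ip_conj Z (irr_classFn hχ) (fun z => (l z : ℂ)) g⁻¹

    have h4 := mult_eq (hc.res Z) (isChar_linear (g • l))
    rw [mult_eq (hc.res Z) (isChar_linear l)] at h2
    have h5 := h4.symm.trans h2
    exact_mod_cast h5
  have hd : ∀ v, deg (e v) = 1 := fun v => linear_deg (v : Z →* ℂˣ)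
  rw [← deg_res Z, (hc.res Z).deg_expand]
  have h6 : Finset.univ.image e ⊆ irr Z := by
    intro f hf
    obtain ⟨v, -, rfl⟩ := Finset.mem_image.1 hf
    exact mem_irr.2 (linear_mem_irr _)
  refine le_trans (le_of_eq ?_) (Finset.sum_le_sum_of_subset h6)
  rw [Finset.sum_image fun a _ b _ h => he h]
  simp only [hm, hd, mul_one, Finset.sum_const, Finset.card_univ, h1, smul_eq_mul]

variable {π : G → Z}

/-- The extension of `l` to its stabilizer given by a crossed homomorphism `π : G → Z`. -/
def hat (hπ : ∀ g h, π (g * h) = π g * MulAut.conjNormal g (π h)) (l : Z →* ℂˣ) :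
    MulAction.stabilizer G l →* ℂˣ :=
  MonoidHom.mk' (fun g => l (π g)) fun g h => by
    rw [Subgroup.coe_mul, hπ, map_mul, mem_stabilizer_apply g.2]

lemma ind_one (A : Subgroup G) (l : A →* ℂˣ) : ind A (fun x => (l x : ℂ)) 1 = A.index := by
  have := Fintype.ofFinite G
  rw [ind_def]
  have h1 : ∀ g : G, ext0 A (fun x => (l x : ℂ)) (g * 1 * g⁻¹) = 1 := by
    intro g
    have := ext0_coe A (fun x => (l x : ℂ)) 1
    simpa using this
  rw [Finset.sum_congr rfl fun g _ => h1 g, Finset.sum_const, Finset.card_univ, nsmul_eq_mul,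
    mul_one]
  rw [← Nat.card_eq_fintype_card, ← A.card_mul_index]
  push_cast
  rw [inv_mul_cancel_left₀ (card_ne)]

/-- Inducing the extension `hat hπ l` of `l` from the stabilizer gives an irreducible character. -/
lemma ind_hat (hcomm : ∀ x y : Z, x * y = y * x)
    (hπ : ∀ g h, π (g * h) = π g * MulAut.conjNormal g (π h)) (hπZ : ∀ z : Z, π z = z)
    (l : Z →* ℂˣ) :
    ∃ χ ∈ Irr G, χ = ind _ (fun x => (hat hπ l x : ℂ)) ∧
      deg χ = (MulAction.stabilizer G l).index ∧ mult (res Z χ) (fun z => (l z : ℂ)) = 1 ∧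
      mult (res (MulAction.stabilizer G l) χ) (fun x => (hat hπ l x : ℂ)) ≠ 0 := by
  classical
  set A := MulAction.stabilizer G l with hA
  set f : A → ℂ := fun x => (hat hπ l x : ℂ) with hf
  have hfI : f ∈ Irr A := linear_mem_irr _
  have hfc : IsChar f := isChar_of_mem hfI
  have hn : ∀ ψ ∈ irr G, ip (ind A f) ψ = mult (res A ψ) f := by
    intro ψ hψ
    have hψ := mem_irr.1 hψ
    rw [ip_ind A f (irr_classFn hψ), ip_comm, mult_eq ((isChar_of_mem hψ).res A) hfc]
  have hexp : ind A f = ∑ ψ ∈ irr G, (mult (res A ψ) f : ℂ) • ψ := by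
    conv_lhs => rw [expand (ind_classFn A f)]
    exact Finset.sum_congr rfl fun ψ hψ => by rw [hn ψ hψ]
  have hdeg : A.index = ∑ ψ ∈ irr G, mult (res A ψ) f * deg ψ := by
    have h1 := congrFun hexp 1
    rw [hf, ind_one, ← hf, Finset.sum_apply] at h1
    have h2 : ∀ ψ ∈ irr G, ((mult (res A ψ) f : ℂ) • ψ) 1 =
        ((mult (res A ψ) f * deg ψ : ℕ) : ℂ) := by
      intro ψ hψ
      rw [Pi.smul_apply, irr_deg (mem_irr.1 hψ)]
      push_cast; rfl
    rw [Finset.sum_congr rfl h2] at h1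
    exact_mod_cast h1
  obtain ⟨χ, hχ, hm⟩ : ∃ χ ∈ irr G, mult (res A χ) f ≠ 0 := by
    by_contra hcon
    push Not at hcon
    rw [Finset.sum_eq_zero fun ψ hψ => by rw [hcon ψ hψ, zero_mul]] at hdeg
    exact A.index_ne_zero_of_finite hdeg
  have hχI := mem_irr.1 hχ
  have hml : 1 ≤ mult (res Z χ) (fun z => (l z : ℂ)) := by
    have := card_le_mult (le_stabilizer hcomm l) (isChar_of_mem hχI) l {f} (by
      intro θ hθ
      rw [Finset.mem_singleton] at hθ
      subst hθ
      refine ⟨hfI, hm, fun z => ?_⟩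
      change ((l (π z) : ℂˣ) : ℂ) = _
      rw [hπZ])
    simpa using this
  have hlow := orbit_mul_le_deg hχI l
  rw [← hA] at hlow
  have hsplit := Finset.add_sum_erase (irr G) (fun ψ => mult (res A ψ) f * deg ψ) hχ
  rw [← hdeg] at hsplit
  have hApos : 0 < A.index := Nat.pos_of_ne_zero A.index_ne_zero_of_finite
  have h1 : A.index ≤ deg χ := by nlinarith
  have h2 : deg χ ≤ mult (res A χ) f * deg χ := Nat.le_mul_of_pos_left _ (Nat.pos_of_ne_zero hm)
  have h3 : deg χ = A.index := by omega
  have h4 : mult (res A χ) f = 1 := by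
    have : mult (res A χ) f * A.index ≤ 1 * A.index := by rw [← h3]; omega
    have := Nat.le_of_mul_le_mul_right this hApos
    omega
  have h5 : mult (res Z χ) (fun z => (l z : ℂ)) = 1 := by
    rw [h3] at hlow
    have : A.index * mult (res Z χ) (fun z => (l z : ℂ)) ≤ A.index * 1 := by omega
    have := Nat.le_of_mul_le_mul_left this hApos
    omega
  have h6 : ∑ ψ ∈ (irr G).erase χ, mult (res A ψ) f * deg ψ = 0 := by
    rw [h4, h3] at hsplit; omega
  refine ⟨χ, hχI, ?_, h3, h5, hm⟩
  rw [hexp, ← Finset.add_sum_erase _ _ hχ, h4, Finset.sum_eq_zero]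
  · simp
  · intro ψ hψ
    have h7 := Finset.sum_eq_zero_iff.1 h6 ψ hψ
    have h8 := deg_pos (mem_irr.1 (Finset.mem_of_mem_erase hψ))
    have h9 : mult (res A ψ) f = 0 := by
      rcases Nat.mul_eq_zero.1 h7 with h | h
      · exact h
      · omega
    rw [h9]; simp

/-- A linear character trivial on `Z` which fixes the induced character is trivial on the
stabilizer. -/
lemma stabilizer_le_ker (hcomm : ∀ x y : Z, x * y = y * x)
    (hπ : ∀ g h, π (g * h) = π g * MulAut.conjNormal g (π h)) (hπZ : ∀ z : Z, π z = z)
    {l : Z →* ℂˣ} {χ : G → ℂ} (hχ : χ ∈ Irr G)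
    (h1 : mult (res Z χ) (fun z => (l z : ℂ)) = 1)
    (h2 : mult (res (MulAction.stabilizer G l) χ) (fun x => (hat hπ l x : ℂ)) ≠ 0)
    {μ : G →* ℂˣ} (hμZ : Z ≤ μ.ker) (hμ : tw μ χ = χ) : MulAction.stabilizer G l ≤ μ.ker := by
  classical
  set A := MulAction.stabilizer G l with hA
  set f : A → ℂ := fun x => (hat hπ l x : ℂ) with hf
  have hc := isChar_of_mem hχ
  let f' : A → ℂ := tw (μ.comp A.subtype) f
  have hfI : f ∈ Irr A := linear_mem_irr _
  have hfI' : f' ∈ Irr A := tw_mem _ hfI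
  have hm' : mult (res A χ) f' ≠ 0 := by
    rw [mult_ne_iff (hc.res A) (isChar_of_mem hfI')]
    rw [mult_ne_iff (hc.res A) (isChar_of_mem hfI), ← ip_tw (μ.comp A.subtype), ← tw_res, hμ] at h2
    exact h2
  have hres : ∀ z : Z, f (Subgroup.inclusion (le_stabilizer hcomm l) z) = l z := by
    intro z
    change ((l (π z) : ℂˣ) : ℂ) = _
    rw [hπZ]
  have h3 := card_le_mult (le_stabilizer hcomm l) hc l {f, f'} (by
    intro θ hθ
    rcases Finset.mem_insert.1 hθ with rfl | hθ
    · exact ⟨hfI, h2, hres⟩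
    · rw [Finset.mem_singleton] at hθ
      subst hθ
      refine ⟨hfI', hm', fun z => ?_⟩
      have : μ z = 1 := hμZ z.2
      change (μ z : ℂ) * f (Subgroup.inclusion (le_stabilizer hcomm l) z) = _
      rw [this, hres]; simp)
  rw [h1] at h3
  have hff : f = f' := by
    by_contra hne
    rw [Finset.card_pair hne] at h3
    omega
  intro x hx
  have h4 := congrFun hff ⟨x, hx⟩
  change f ⟨x, hx⟩ = (μ x : ℂ) * f ⟨x, hx⟩ at h4
  have h5 : f ⟨x, hx⟩ ≠ 0 := Units.ne_zero _
  rw [MonoidHom.mem_ker]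
  apply Units.ext
  exact mul_right_cancel₀ h5 (by rw [← h4]; simp)

end AcdK

/-! ### Contributions of orbits -/

namespace AcdK

variable {G : Type} [Group G] [Finite G]

/-- The linear characters of `G` trivial on `M`. -/
def ann (M : Subgroup G) : Subgroup (G →* ℂˣ) where
  carrier := {μ | M ≤ μ.ker}
  one_mem' := by intro x _; rfl
  mul_mem' := by
    intro a b ha hb x hx
    have h1 : a x = 1 := ha hx
    have h2 : b x = 1 := hb hx
    simp [MonoidHom.mem_ker, h1, h2]
  inv_mem' := by
    intro a ha x hx
    have h1 : a x = 1 := ha hx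
    simp [MonoidHom.mem_ker, h1]

lemma mem_ann {M : Subgroup G} {μ : G →* ℂˣ} : μ ∈ ann M ↔ M ≤ μ.ker := Iff.rfl

open scoped commutatorElement in
lemma card_ann_aux {M : Subgroup G} (hM : commutator G ≤ M) : Nat.card (ann M) = M.index := by
  have hn : M.Normal := Subgroup.Normal.of_commutator_le G hM
  letI : CommGroup (G ⧸ M) := { (inferInstance : Group (G ⧸ M)) with
    mul_comm := by
      intro x y
      obtain ⟨x, rfl⟩ := QuotientGroup.mk_surjective x
      obtain ⟨y, rfl⟩ := QuotientGroup.mk_surjective y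
      rw [← QuotientGroup.mk_mul, ← QuotientGroup.mk_mul, QuotientGroup.eq]
      have h : (x * y)⁻¹ * (y * x) = ⁅y⁻¹, x⁻¹⁆ := by rw [commutatorElement_def]; group
      rw [h]
      exact hM (Subgroup.commutator_mem_commutator (Subgroup.mem_top _) (Subgroup.mem_top _)) }
  rw [Subgroup.index, ← CommGroup.card_monoidHom_of_hasEnoughRootsOfUnity (G ⧸ M) ℂ]
  refine Nat.card_congr (Equiv.symm (Equiv.ofBijective
    (fun φ : (G ⧸ M) →* ℂˣ => (⟨φ.comp (QuotientGroup.mk' M), ?_⟩ : ann M)) ⟨?_, ?_⟩))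
  · intro x hx
    rw [MonoidHom.mem_ker, MonoidHom.comp_apply, QuotientGroup.mk'_apply,
      (QuotientGroup.eq_one_iff x).2 hx, map_one]
  · intro φ φ' h
    have h' := congrArg Subtype.val h
    refine MonoidHom.ext fun x => ?_
    obtain ⟨x, rfl⟩ := QuotientGroup.mk_surjective x
    exact DFunLike.congr_fun h' x
  · rintro ⟨μ, hμ⟩
    refine ⟨QuotientGroup.lift M μ hμ, ?_⟩
    apply Subtype.ext
    refine MonoidHom.ext fun x => rfl

lemma ann_sup (M : Subgroup G) : ann (M ⊔ commutator G) = ann M := by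
  ext μ
  rw [mem_ann, mem_ann, sup_le_iff]
  exact ⟨fun h => h.1, fun h => ⟨h, Abelianization.commutator_subset_ker μ⟩⟩

lemma card_ann_dvd (M : Subgroup G) : Nat.card (ann M) ∣ M.index := by
  rw [← ann_sup, card_ann_aux le_sup_right]
  exact Subgroup.index_dvd_of_le le_sup_left

lemma commutator_le_of_card_ann {M : Subgroup G} (h : Nat.card (ann M) = M.index) :
    commutator G ≤ M := by
  rw [← ann_sup, card_ann_aux le_sup_right] at h
  have h1 := Subgroup.relIndex_mul_index (H := M) (K := M ⊔ commutator G) le_sup_left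
  rw [h] at h1
  have h2 : M.relIndex (M ⊔ commutator G) = 1 :=
    Nat.eq_of_mul_eq_mul_right (Nat.pos_of_ne_zero M.index_ne_zero_of_finite)
      (h1.trans (one_mul _).symm)
  exact le_sup_right.trans (Subgroup.relIndex_eq_one.1 h2)

variable {Z : Subgroup G} [hZn : Z.Normal]

/-- The number of `k`-valued linear characters of `G` trivial on the stabilizer of `l`. -/
noncomputable def sK (k : Subfield ℂ) (l : Z →* ℂˣ) : ℕ :=
  Nat.card (linK G k ⊓ ann (MulAction.stabilizer G l) : Subgroup (G →* ℂˣ))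

lemma sK_pos (k : Subfield ℂ) (l : Z →* ℂˣ) : 0 < sK k l := Nat.card_pos

lemma sK_dvd (k : Subfield ℂ) (l : Z →* ℂˣ) : sK k l ∣ (MulAction.stabilizer G l).index :=
  (Subgroup.card_dvd_of_le inf_le_right).trans (card_ann_dvd _)

/-- If `sK k l` takes its largest possible value then `G` acts on the orbit of `l` as an abelian
group all of whose linear characters are `k`-valued. -/
lemma sK_eq {k : Subfield ℂ} {l : Z →* ℂˣ} (h : sK k l = (MulAction.stabilizer G l).index) :
    commutator G ≤ MulAction.stabilizer G l ∧ ann (MulAction.stabilizer G l) ≤ linK G k := by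
  have h1 := Subgroup.card_dvd_of_le (inf_le_right : linK G k ⊓ ann (MulAction.stabilizer G l) ≤ _)
  change sK k l ∣ _ at h1
  have h2 := card_ann_dvd (MulAction.stabilizer G l)
  rw [h] at h1
  have h3 := Nat.dvd_antisymm h2 h1
  refine ⟨commutator_le_of_card_ann h3, ?_⟩
  have h4 : linK G k ⊓ ann (MulAction.stabilizer G l) = ann (MulAction.stabilizer G l) := by
    refine Subgroup.eq_of_le_of_card_ge inf_le_right ?_
    rw [h3, ← h]; rfl
  rw [← h4]
  exact inf_le_left

lemma mem_of_pow_eq_one {p : ℕ} (hp : p.Prime) {k : Subfield ℂ}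
    (hkp : ∀ z : ℂ, IsPrimitiveRoot z p → z ∈ k) {z : ℂ} (hz : z ^ p = 1) : z ∈ k := by
  by_cases h2 : z = 1
  · rw [h2]; exact k.one_mem
  · refine hkp _ ?_
    have := Fact.mk hp
    have h3 := IsPrimitiveRoot.orderOf z
    rwa [orderOf_eq_prime hz h2] at h3

lemma index_odd (hG : Odd (Nat.card G)) (M : Subgroup G) : Odd M.index :=
  Odd.of_dvd_nat hG M.index_dvd_card

lemma three_le_index (hG : Odd (Nat.card G)) {M : Subgroup G} (h : M.index ≠ 1) : 3 ≤ M.index := by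
  obtain ⟨n, hn⟩ := index_odd hG M
  omega

set_option maxHeartbeats 1000000 in
/-- The contribution to the excess of the characters induced from representatives `R` of orbits of
nontrivial linear characters of `Z`, together with their twists by `k`-valued linear characters. -/
theorem orbit_contribution (hG : Odd (Nat.card G)) {p : ℕ} (hp : p.Prime) {k : Subfield ℂ}
    (hkp : ∀ z : ℂ, IsPrimitiveRoot z p → z ∈ k) (hcomm : ∀ x y : Z, x * y = y * x)
    (hZp : ∀ z : Z, z ^ p = 1) (hZG : Z ≤ commutator G) {π : G → Z}
    (hπ : ∀ g h, π (g * h) = π g * MulAut.conjNormal g (π h)) (hπZ : ∀ z : Z, π z = z)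
    {c : ℝ} (hc : c ≤ 3) (R : Finset (Z →* ℂˣ))
    (hR1 : ∀ l ∈ R, (MulAction.stabilizer G l).index ≠ 1)
    (hR : ∀ l ∈ R, ∀ l' ∈ R, ∀ g : G, g • l = l' → l = l') :
    (Nat.card (linK G k) : ℝ) * ∑ l ∈ R, (((MulAction.stabilizer G l).index : ℝ) - c) / sK k l ≤
      ∑ χ ∈ nlin G k, ((deg χ : ℝ) - c) := by
  classical
  have hFG := Fintype.ofFinite G
  choose χ hχI hχind hχdeg hχm hχs using ind_hat hcomm hπ hπZ
  have hker : ∀ μ : G →* ℂˣ, Z ≤ μ.ker := fun μ =>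
    hZG.trans (Abelianization.commutator_subset_ker μ)
  have hχk : ∀ l x, χ l x ∈ k := by
    intro l x
    rw [hχind, ind_def]
    refine k.mul_mem (k.inv_mem (natCast_mem k _)) (k.sum_mem fun g _ => ?_)
    unfold ext0
    split_ifs with h
    · refine mem_of_pow_eq_one hp hkp ?_
      change ((l _ : ℂˣ) : ℂ) ^ p = 1
      rw [← Units.val_pow_eq_pow_val, ← map_pow, hZp, map_one, Units.val_one]
    · exact k.zero_mem
  have hconst : ∀ l ∈ R, ∀ l' ∈ R, res Z (χ l) = res Z (χ l') → l = l' := by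
    intro l hl l' hl' h
    have hm1 := hχm l
    have hm2 := hχm l'
    rw [← h] at hm2
    have hcl := isChar_of_mem (hχI l)
    obtain ⟨g, hg⟩ := clifford Z (hχI l) (linear_mem_irr l) (linear_mem_irr l')
      ((mult_ne_iff (hcl.res Z) (isChar_linear l)).1 (by omega))
      ((mult_ne_iff (hcl.res Z) (isChar_linear l')).1 (by omega))
    refine hR l hl l' hl' g⁻¹ ?_
    ext z
    rw [dual_smul_apply, inv_inv]
    exact (hg z).symm
  have hrestw : ∀ (μ : G →* ℂˣ) (ψ : G → ℂ), res Z (tw μ ψ) = res Z ψ := by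
    intro μ ψ
    ext z
    have : μ z = 1 := hker μ z.2
    simp [res, tw, this]
  have hinj : Set.InjOn χ R := fun l hl l' hl' h => hconst l hl l' hl' (by rw [h])
  have hsum := orbit_sum (linK G k) (R.image χ) (nlin G k)
    (by
      intro μ hμ ψ hψ
      obtain ⟨l, hl, rfl⟩ := Finset.mem_image.1 hψ
      refine tw_mem_nlin hμ (mem_nlin.2 ⟨hχI l, hχk l, ?_⟩)
      rw [hχdeg]; exact hR1 l hl)
    (by
      intro μ hμ ψ hψ ψ' hψ' h
      obtain ⟨l, hl, rfl⟩ := Finset.mem_image.1 hψ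
      obtain ⟨l', hl', rfl⟩ := Finset.mem_image.1 hψ'
      rw [hconst l hl l' hl' (by rw [← h, hrestw])])
    (fun ψ => (deg ψ : ℝ) - c) (fun μ _ ψ _ => by simp only [deg_tw])
    (by
      intro ψ hψ
      obtain ⟨h1, -, h2⟩ := mem_nlin.1 hψ
      have := three_le_deg hG h1 h2
      have : (3 : ℝ) ≤ deg ψ := by exact_mod_cast this
      linarith)
  refine le_trans ?_ hsum
  rw [Finset.sum_image fun a ha b hb h => hinj ha hb h, Finset.mul_sum]
  refine Finset.sum_le_sum fun l hl => mul_le_mul_of_nonneg_left ?_ (Nat.cast_nonneg _)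
  rw [hχdeg]
  have h3 : (3 : ℝ) ≤ (MulAction.stabilizer G l).index := by
    exact_mod_cast three_le_index hG (hR1 l hl)
  have hpos : (0 : ℝ) < Nat.card (linK G k ⊓ stab (χ l) : Subgroup (G →* ℂˣ)) := by
    exact_mod_cast Nat.card_pos
  refine div_le_div_of_nonneg_left (by linarith) hpos ?_
  norm_cast
  refine Nat.card_mono (Set.toFinite _) ?_
  rintro μ ⟨h1, h2⟩
  exact ⟨h1, stabilizer_le_ker hcomm hπ hπZ (hχI l) (hχm l) (hχs l) (hker μ) (mem_stab.1 h2)⟩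

end AcdK

/-! ### Crossed homomorphisms and complements -/

namespace AcdK

variable {G : Type} [Group G] [Finite G] {Z : Subgroup G} [hZn : Z.Normal]

lemma coe_conjNormal (g : G) (z : Z) : ((MulAut.conjNormal g z : Z) : G) = g * z * g⁻¹ := rfl

/-- Over a normal subgroup `K` in which the abelian normal subgroup `Z` has coprime index, `Z` has a
complement `H`, and the projection to `Z` along `H` is a crossed homomorphism. -/
lemma exists_proj (hcomm : ∀ x y : Z, x * y = y * x) {K : Subgroup G} (hZK : Z ≤ K)
    (hco : (Nat.card Z).Coprime (Z.relIndex K)) :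
    ∃ (H : Subgroup G) (ζ : G → Z), H ≤ K ∧ Nat.card H = Z.relIndex K ∧ Z ⊓ H = ⊥ ∧
      (∀ x ∈ K, ((ζ x : G)⁻¹ * x) ∈ H) ∧
      (∀ x ∈ K, ∀ y ∈ K, ζ (x * y) = ζ x * MulAut.conjNormal x (ζ y)) ∧ ∀ z : Z, ζ z = z := by
  classical
  have hcardZ : Nat.card (Z.subgroupOf K) = Nat.card Z :=
    Nat.card_congr (Subgroup.subgroupOfEquivOfLe hZK).toEquiv
  obtain ⟨H', hH'⟩ := Subgroup.exists_right_complement'_of_coprime (N := Z.subgroupOf K)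
    (by rw [hcardZ]; exact hco)
  have hinf : Z ⊓ H'.map K.subtype = ⊥ := by
    rw [eq_bot_iff]
    rintro x ⟨hx, y, hy, rfl⟩
    have h1 : y ∈ Z.subgroupOf K ⊓ H' := ⟨hx, hy⟩
    rw [disjoint_iff.1 hH'.disjoint] at h1
    rw [Subgroup.mem_bot] at h1 ⊢
    rw [h1]; rfl
  have hHK : H'.map K.subtype ≤ K := by
    rintro _ ⟨y, _, rfl⟩; exact y.2
  have hcardH : Nat.card (H'.map K.subtype) = Z.relIndex K := by
    rw [Subgroup.card_map_of_injective K.subtype_injective]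
    have h1 := hH'.card_mul_card
    rw [← (Z.subgroupOf K).card_mul_index] at h1
    exact Nat.eq_of_mul_eq_mul_left Nat.card_pos h1
  set H := H'.map K.subtype with hH
  have hex : ∀ x : G, ∃ z : Z, x ∈ K → (z : G)⁻¹ * x ∈ H := by
    intro x
    by_cases hx : x ∈ K
    · obtain ⟨⟨a, b⟩, hab, -⟩ := hH'.existsUnique (⟨x, hx⟩ : K)
      refine ⟨⟨(a : K), a.2⟩, fun _ => ⟨b, b.2, ?_⟩⟩
      have h2 : ((a : K) : G) * (b : K) = x := congrArg Subtype.val hab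
      rw [← h2]
      change ((b : K) : G) = _
      group
    · exact ⟨1, fun h => absurd h hx⟩
  choose ζ hζ using hex
  have huniq : ∀ x ∈ K, ∀ z : Z, (z : G)⁻¹ * x ∈ H → ζ x = z := by
    intro x hx z hz
    have h1 : ((z : G)⁻¹ * ζ x) ∈ Z ⊓ H := by
      refine ⟨Z.mul_mem (Z.inv_mem z.2) (ζ x).2, ?_⟩
      have := H.mul_mem hz (H.inv_mem (hζ x hx))
      have e : (z : G)⁻¹ * x * ((ζ x : G)⁻¹ * x)⁻¹ = (z : G)⁻¹ * ζ x := by group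
      rwa [e] at this
    rw [hinf, Subgroup.mem_bot] at h1
    exact Subtype.ext (inv_mul_eq_one.1 h1).symm
  refine ⟨H, ζ, hHK, hcardH, hinf, hζ, fun x hx y hy => huniq _ (K.mul_mem hx hy) _ ?_, fun z =>
    huniq _ (hZK z.2) _ ?_⟩
  · have h1 := H.mul_mem (hζ x hx) (hζ y hy)
    have h3 : MulAut.conjNormal x (ζ y) = MulAut.conjNormal ((ζ x : G)⁻¹ * x) (ζ y) := by
      rw [map_mul, MulAut.mul_apply]
      apply Subtype.ext
      rw [coe_conjNormal ((ζ x : G)⁻¹)]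
      have := congrArg Subtype.val (hcomm (ζ x)⁻¹ (MulAut.conjNormal x (ζ y)))
      push_cast at this
      rw [this]; group
    rw [h3]
    push_cast
    rw [coe_conjNormal]
    have e : ((ζ x : G) * ((ζ x : G)⁻¹ * x * ζ y * ((ζ x : G)⁻¹ * x)⁻¹))⁻¹ * (x * y)
      = (ζ x : G)⁻¹ * x * ((ζ y : G)⁻¹ * y) := by group
    rw [e]; exact h1
  · rw [inv_mul_cancel]; exact H.one_mem

/-- Crossed homomorphisms trivial on `Z` are principal, by averaging over the complement `H`. -/
lemma principal (hcomm : ∀ x y : Z, x * y = y * x) {p : ℕ} (hp : 1 < p)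
    (hZp : ∀ z : Z, z ^ p = 1) {K H : Subgroup G} {ζ : G → Z} (hHK : H ≤ K) (hH : (Nat.card H).Coprime p)
    (hζ : ∀ x ∈ K, ((ζ x : G)⁻¹ * x) ∈ H) {c : G → Z}
    (hc : ∀ x ∈ K, ∀ y ∈ K, c (x * y) = c x * MulAut.conjNormal x (c y))
    (hZK : Z ≤ K) (hcZ : ∀ z : Z, c z = 1) : ∃ w : Z, ∀ x ∈ K, c x = w⁻¹ * MulAut.conjNormal x w := by
  classical
  let _ : CommGroup Z := { (inferInstance : Group Z) with mul_comm := hcomm }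
  let _ : Fintype H := Fintype.ofFinite H
  obtain ⟨u, hu⟩ : ∃ u : ℕ, ∀ z : Z, (z ^ Nat.card H) ^ u = z := by
    obtain ⟨u, -, hu⟩ := Nat.exists_mul_mod_eq_one_of_coprime hH hp
    refine ⟨u, fun z => ?_⟩
    rw [← pow_mul, pow_eq_pow_mod _ (hZp z), hu, pow_one]
  set W : Z := ∏ h : H, c h with hW
  have hWx : ∀ x ∈ H, W = c x ^ Nat.card H * MulAut.conjNormal x W := by
    intro x hx
    calc W = ∏ h : H, c ((⟨x, hx⟩ * h : H) : G) :=
          (Fintype.prod_equiv (Equiv.mulLeft (⟨x, hx⟩ : H)) _ _ fun h => rfl).symm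
      _ = ∏ h : H, (c x * MulAut.conjNormal x (c h)) :=
          Finset.prod_congr rfl fun h _ => hc _ (hHK hx) _ (hHK h.2)
      _ = _ := by
          rw [Finset.prod_mul_distrib, Finset.prod_const, Finset.card_univ, hW, map_prod,
            Nat.card_eq_fintype_card]
  have hcH : ∀ x ∈ H, c x = W ^ u * MulAut.conjNormal x ((W ^ u)⁻¹) := by
    intro x hx
    have h1 : c x ^ Nat.card H = W * (MulAut.conjNormal x W)⁻¹ :=
      eq_mul_inv_of_mul_eq (hWx x hx).symm
    rw [← hu (c x), h1, mul_pow, map_inv, map_pow, inv_pow]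
  refine ⟨(W ^ u)⁻¹, fun x hx => ?_⟩
  have hx1 : x = (ζ x : G) * ((ζ x : G)⁻¹ * x) := by group
  have h1 : c x = c ((ζ x : G)⁻¹ * x) := by
    conv_lhs => rw [hx1]
    rw [hc _ (hZK (ζ x).2) _ (hHK (hζ x hx)), hcZ, one_mul]
    apply Subtype.ext
    rw [coe_conjNormal]
    have := congrArg Subtype.val (hcomm (ζ x) (c ((ζ x : G)⁻¹ * x)))
    push_cast at this
    rw [this]; group
  rw [h1, hcH _ (hζ x hx), inv_inv]
  congr 1
  rw [map_mul, MulAut.mul_apply]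
  apply Subtype.ext
  rw [coe_conjNormal ((ζ x : G)⁻¹)]
  have := congrArg Subtype.val (hcomm (ζ x)⁻¹ (MulAut.conjNormal x (W ^ u)⁻¹))
  push_cast at this
  push_cast
  rw [this]; group

/-- If only the identity of `Z` commutes with `K`, the projection extends to a crossed
homomorphism `G → Z` (in other words, `Z` has a complement in `G`). -/
lemma exists_crossed (hcomm : ∀ x y : Z, x * y = y * x) {p : ℕ} (hp : 1 < p)
    (hZp : ∀ z : Z, z ^ p = 1) {K : Subgroup G} [hK : K.Normal] (hZK : Z ≤ K) (hco : (Nat.card Z).Coprime (Z.relIndex K))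
    (hcop : (Z.relIndex K).Coprime p)
    (hfix : ∀ z : Z, (∀ x ∈ K, MulAut.conjNormal x z = z) → z = 1) :
    ∃ π : G → Z, (∀ g h, π (g * h) = π g * MulAut.conjNormal g (π h)) ∧ ∀ z : Z, π z = z := by
  obtain ⟨H, ζ, hHK, hcardH, -, hζH, hζ, hζZ⟩ := exists_proj hcomm hZK hco
  let _ : CommGroup Z := { (inferInstance : Group Z) with mul_comm := hcomm }
  have hZtriv : ∀ z w : Z, MulAut.conjNormal (z : G) w = w := by
    intro z w
    apply Subtype.ext
    rw [coe_conjNormal]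
    have := congrArg Subtype.val (hcomm z w)
    push_cast at this
    rw [this]; group
  have hKc : ∀ g : G, ∀ x ∈ K, g⁻¹ * x * g ∈ K := by
    intro g x hx
    simpa using hK.conj_mem x hx g⁻¹
  set c : G → G → Z := fun g x => MulAut.conjNormal g (ζ (g⁻¹ * x * g)) * (ζ x)⁻¹ with hcdef
  have hex : ∀ g : G, ∃ w : Z, ∀ x ∈ K, c g x = w⁻¹ * MulAut.conjNormal x w := by
    intro g
    refine principal hcomm hp hZp hHK (hcardH ▸ hcop) hζH ?_ hZK ?_
    · intro x hx y hy
      have e : g⁻¹ * (x * y) * g = (g⁻¹ * x * g) * (g⁻¹ * y * g) := by group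
      simp only [hcdef]
      rw [e, hζ _ (hKc g x hx) _ (hKc g y hy), hζ x hx y hy, map_mul, ← MulAut.mul_apply, ← map_mul]
      have e2 : g * (g⁻¹ * x * g) = x * g := by group
      rw [e2, map_mul, map_mul, MulAut.mul_apply, map_inv, mul_inv]
      exact mul_mul_mul_comm _ _ _ _
    · intro z
      simp only [hcdef]
      have e : g⁻¹ * (z : G) * g = ((MulAut.conjNormal g⁻¹ z : Z) : G) := by
        rw [coe_conjNormal, inv_inv]
      rw [e, hζZ, hζZ, ← MulAut.mul_apply, ← map_mul, mul_inv_cancel, map_one, MulAut.one_apply,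
        mul_inv_cancel]
  choose π hπ using hex
  have huniq : ∀ g w, (∀ x ∈ K, c g x = w⁻¹ * MulAut.conjNormal x w) → π g = w := by
    intro g w hw
    have h1 : π g * w⁻¹ = 1 := by
      refine hfix _ fun x hx => ?_
      have h2 := (hπ g x hx).symm.trans (hw x hx)
      rw [map_mul, map_inv]
      have h3 : MulAut.conjNormal x (π g) = π g * (w⁻¹ * MulAut.conjNormal x w) := by
        rw [← h2, mul_inv_cancel_left]
      rw [h3, ← mul_assoc, mul_inv_cancel_right]
    exact mul_inv_eq_one.1 h1
  refine ⟨π, fun g h => huniq _ _ fun x hx => ?_, fun z => huniq _ _ fun x hx => ?_⟩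
  · have e1 : c (g * h) x = MulAut.conjNormal g (c h (g⁻¹ * x * g)) * c g x := by
      simp only [hcdef]
      have e : (g * h)⁻¹ * x * (g * h) = h⁻¹ * (g⁻¹ * x * g) * h := by group
      rw [e, map_mul (MulAut.conjNormal g), map_inv (MulAut.conjNormal g), ← MulAut.mul_apply,
        ← map_mul MulAut.conjNormal, mul_assoc (MulAut.conjNormal (g * h) _), inv_mul_cancel_left]
    rw [e1, hπ h _ (hKc g x hx), hπ g x hx, map_mul (MulAut.conjNormal g),
      map_inv (MulAut.conjNormal g), ← MulAut.mul_apply, ← map_mul MulAut.conjNormal]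
    have e2 : g * (g⁻¹ * x * g) = x * g := by group
    rw [e2, map_mul MulAut.conjNormal, MulAut.mul_apply, map_mul (MulAut.conjNormal x), mul_inv,
      mul_mul_mul_comm, mul_comm ((MulAut.conjNormal g (π h))⁻¹), mul_comm
      (MulAut.conjNormal x (MulAut.conjNormal g (π h)))]
  · simp only [hcdef]
    have e : (z : G)⁻¹ * x * z = ((z⁻¹ * MulAut.conjNormal x z : Z) : G) * x := by
      push_cast
      rw [coe_conjNormal]; group
    rw [hZtriv, e, hζ _ (hZK (Subtype.prop _)) _ hx, hζZ, hZtriv, mul_inv_cancel_right]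

/-- If `Z` is central in `K`, its complement in `K` is characteristic, and `G` has a normal
`p`-complement. -/
lemma hasNormalPComplement_of_central {p : ℕ} (hp : p.Prime) (hcomm : ∀ x y : Z, x * y = y * x)
    (hZp : ∀ z : Z, z ^ p = 1)
    {K : Subgroup G} [hK : K.Normal] (hZK : Z ≤ K) (hcop : (Z.relIndex K).Coprime p)
    {n : ℕ} (hKi : K.index = p ^ n) (hcen : ∀ x ∈ K, ∀ z : Z, MulAut.conjNormal x z = z) :
    HasNormalPComplement G p := by
  have : Fact p.Prime := ⟨hp⟩
  obtain ⟨a, ha⟩ : ∃ a, Nat.card Z = p ^ a :=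
    IsPGroup.iff_card.1 (fun z => ⟨1, by rw [pow_one]; exact hZp z⟩)
  have hco : (Nat.card Z).Coprime (Z.relIndex K) := by
    rw [ha]; exact Nat.Coprime.pow_left a hcop.symm
  obtain ⟨H, ζ, hHK, hcardH, -, hζH, -, -⟩ := exists_proj hcomm hZK hco
  have hpowH : ∀ x ∈ H, x ^ Nat.card H = 1 := by
    intro x hx
    have := pow_card_eq_one' (x := (⟨x, hx⟩ : H))
    exact congrArg Subtype.val this
  have hmem : ∀ x ∈ K, x ^ Nat.card H = 1 → x ∈ H := by
    intro x hx h1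
    have hx1 : x = (ζ x : G) * ((ζ x : G)⁻¹ * x) := by group
    have hc : Commute (ζ x : G) ((ζ x : G)⁻¹ * x) := by
      have := congrArg Subtype.val (hcen _ (hHK (hζH x hx)) (ζ x))
      rw [coe_conjNormal] at this
      exact (mul_inv_eq_iff_eq_mul.1 this).symm
    rw [hx1, hc.mul_pow, hpowH _ (hζH x hx), mul_one] at h1
    have h2 : ζ x = 1 := eq_one_of_pow_coprime (hcardH ▸ hcop) (Subtype.ext (by simpa using h1))
      (hZp _)
    have := hζH x hx
    rwa [h2, Subgroup.coe_one, inv_one, one_mul] at this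
  refine ⟨H, ⟨fun x hx g => hmem _ (hK.conj_mem x (hHK hx) g) ?_⟩, hcardH ▸ hcop, a + n, ?_⟩
  · rw [conj_pow, hpowH x hx, mul_one, mul_inv_cancel]
  · have h1 := Subgroup.relIndex_mul_index hHK
    have h2 := Subgroup.relIndex_mul_relIndex ⊥ H K bot_le hHK
    have h3 := Subgroup.relIndex_mul_relIndex ⊥ Z K bot_le hZK
    rw [← h3, Subgroup.relIndex_bot_left, Subgroup.relIndex_bot_left, hcardH,
      mul_comm (Nat.card Z)] at h2
    have h4 : H.relIndex K = Nat.card Z :=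
      Nat.eq_of_mul_eq_mul_left (hcardH ▸ Nat.card_pos) h2
    rw [← h1, h4, hKi, ha, pow_add]

end AcdK

/-! ### Orbits on the dual of a minimal normal subgroup -/

namespace AcdK

variable {G : Type} [Group G] [Finite G] {Z : Subgroup G} [hZn : Z.Normal]

/-- In the dual of a minimal normal subgroup, a normal stabilizer of a nontrivial character
centralizes `Z`: the commutator `[S, Z]` is normal and lies in the kernel of the character. -/
lemma stabilizer_central (hmin : ∀ M : Subgroup G, M.Normal → M ≤ Z → M = ⊥ ∨ M = Z)
    {l : Z →* ℂˣ} (hl : l ≠ 1) (hS : commutator G ≤ MulAction.stabilizer G l) :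
    ∀ g ∈ MulAction.stabilizer G l, ∀ z : Z, MulAut.conjNormal g z = z := by
  have hSn : (MulAction.stabilizer G l).Normal := Subgroup.Normal.of_commutator_le G hS
  set S := MulAction.stabilizer G l with hSdef
  have hle : ⁅S, Z⁆ ≤ l.ker.map Z.subtype := by
    rw [Subgroup.commutator_le]
    intro g hg z hz
    refine ⟨MulAut.conjNormal g ⟨z, hz⟩ * (⟨z, hz⟩ : Z)⁻¹, ?_, ?_⟩
    · change l _ = 1
      rw [map_mul, mem_stabilizer_apply hg, map_inv, mul_inv_cancel]
    · rw [commutatorElement_def]; rfl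
  have hle2 : l.ker.map Z.subtype ≤ Z := by
    rintro _ ⟨y, _, rfl⟩; exact y.2
  rcases hmin ⁅S, Z⁆ inferInstance (hle.trans hle2) with h | h
  · intro g hg z
    have h1 := Subgroup.commutator_mem_commutator hg z.2
    rw [h, Subgroup.mem_bot, commutatorElement_def] at h1
    exact Subtype.ext (mul_inv_eq_one.1 h1)
  · refine absurd (MonoidHom.ext fun z => ?_) hl
    have hz : (z : G) ∈ ⁅S, Z⁆ := by rw [h]; exact z.2
    obtain ⟨y, hy, hyz⟩ := hle hz
    have : y = z := Subtype.ext hyz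
    rw [← this]; exact hy

lemma stabilizer_index_ne_one (hmin : ∀ M : Subgroup G, M.Normal → M ≤ Z → M = ⊥ ∨ M = Z)
    (hnc : ¬ ∀ (g : G) (z : Z), MulAut.conjNormal g z = z) {l : Z →* ℂˣ} (hl : l ≠ 1) :
    (MulAction.stabilizer G l).index ≠ 1 := by
  intro h
  have h1 := Subgroup.index_eq_one.1 h
  exact hnc fun g z => stabilizer_central hmin hl (h1 ▸ le_top) g (h1 ▸ Subgroup.mem_top g) z

lemma le_stabilizer_of_central {S : Subgroup G} (h : ∀ g ∈ S, ∀ z : Z, MulAut.conjNormal g z = z)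
    (l : Z →* ℂˣ) : S ≤ MulAction.stabilizer G l := by
  intro g hg
  refine MonoidHom.ext fun z => ?_
  rw [dual_smul_apply, h _ (S.inv_mem hg)]

lemma stabilizer_eq_of_commutator_le
    (hmin : ∀ M : Subgroup G, M.Normal → M ≤ Z → M = ⊥ ∨ M = Z)
    {l l' : Z →* ℂˣ} (hl : l ≠ 1) (hl' : l' ≠ 1) (hS : commutator G ≤ MulAction.stabilizer G l) :
    MulAction.stabilizer G l' = MulAction.stabilizer G l := by
  have h1 := le_stabilizer_of_central (stabilizer_central hmin hl hS) l'
  exact le_antisymm (le_stabilizer_of_central (stabilizer_central hmin hl' (hS.trans h1)) l) h1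

lemma stabilizer_inv (l : Z →* ℂˣ) : MulAction.stabilizer G l⁻¹ = MulAction.stabilizer G l := by
  ext g
  rw [MulAction.mem_stabilizer_iff, MulAction.mem_stabilizer_iff, dual_smul_inv]
  exact inv_inj (a := g • l)

lemma dual_pow_eq_one {p : ℕ} (hZp : ∀ z : Z, z ^ p = 1) (l : Z →* ℂˣ) : l ^ p = 1 := by
  refine MonoidHom.ext fun z => ?_
  rw [MonoidHom.pow_apply, ← map_pow, hZp, map_one, MonoidHom.one_apply]

lemma dual_not_conj_inv (hG : Odd (Nat.card G)) {p : ℕ} (hp : Odd p) (hZp : ∀ z : Z, z ^ p = 1)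
    {l : Z →* ℂˣ} (hl : l ≠ 1) (g : G) : g • l ≠ l⁻¹ := by
  intro h
  have h2 : g ^ 2 ∈ MulAction.stabilizer G l := by
    rw [MulAction.mem_stabilizer_iff, pow_two, mul_smul, h, dual_smul_inv, h]
    exact inv_inv l
  have h3 : g ∈ MulAction.stabilizer G l := by
    obtain ⟨m, hm⟩ := hG
    have e : g = (g ^ 2) ^ (m + 1) := by
      have h0 : g ^ Nat.card G = 1 := pow_card_eq_one'
      rw [← pow_mul]
      have : 2 * (m + 1) = Nat.card G + 1 := by omega
      rw [this, pow_succ, h0, one_mul]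
    rw [e]; exact Subgroup.pow_mem _ h2 _
  rw [MulAction.mem_stabilizer_iff, h] at h3
  refine hl (MonoidHom.ext fun z => eq_one_of_pow_coprime (i := 2) (Nat.coprime_two_left.2 hp) ?_
    (DFunLike.congr_fun (dual_pow_eq_one hZp l) z))
  have h4 : (l z)⁻¹ = l z := DFunLike.congr_fun h3 z
  rw [pow_two]
  nth_rewrite 1 [← h4]
  exact inv_mul_cancel _

/-- Representatives of the nontrivial orbits on the dual of `Z`, when these all have length `d`. -/
lemma exists_reps (hcomm : ∀ x y : Z, x * y = y * x) {d : ℕ}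
    (hd : ∀ l : Z →* ℂˣ, l ≠ 1 → (MulAction.stabilizer G l).index = d) :
    ∃ R : Finset (Z →* ℂˣ), (∀ l ∈ R, l ≠ 1) ∧
      (∀ l ∈ R, ∀ l' ∈ R, ∀ g : G, g • l = l' → l = l') ∧
      (∀ l : Z →* ℂˣ, l ≠ 1 → ∃ l' ∈ R, ∃ g : G, g • l' = l) ∧ R.card * d + 1 = Nat.card Z := by
  classical
  let _ : Fintype (Z →* ℂˣ) := Fintype.ofFinite _
  let o : (Z →* ℂˣ) → (Z →* ℂˣ) := fun l =>
    Quotient.out (Quotient.mk (MulAction.orbitRel G (Z →* ℂˣ)) l)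
  have ho : ∀ l, o l ∈ MulAction.orbit G l := fun l =>
    MulAction.orbitRel_apply.1 (Quotient.exact (Quotient.out_eq _))
  have hoe : ∀ (g : G) l, o (g • l) = o l := by
    intro g l
    have : (Quotient.mk (MulAction.orbitRel G (Z →* ℂˣ)) (g • l)) = Quotient.mk _ l :=
      Quotient.sound (MulAction.orbitRel_apply.2 ⟨g, rfl⟩)
    simp only [o, this]
  have hsm : ∀ (g : G) (l : Z →* ℂˣ), l ≠ 1 → g • l ≠ 1 := by
    intro g l hl h
    apply hl
    rw [← inv_smul_smul g l, h, dual_smul_one]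
  have ho1 : ∀ l, l ≠ 1 → o l ≠ 1 := by
    intro l hl
    obtain ⟨g, hg⟩ := ho l
    rw [← hg]; exact hsm g l hl
  have hoo : ∀ l, o (o l) = o l := by
    intro l
    obtain ⟨g, hg⟩ := ho l
    have hg' : g • l = o l := hg
    rw [← hg', hoe, hg']
  let R : Finset (Z →* ℂˣ) := Finset.univ.filter fun l => l ≠ 1 ∧ o l = l
  have hmem : ∀ l, l ∈ R ↔ l ≠ 1 ∧ o l = l := fun l => by simp [R]
  refine ⟨R, fun l hl => ((hmem l).1 hl).1, ?_, ?_, ?_⟩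
  · intro l hl l' hl' g hg
    rw [← ((hmem l).1 hl).2, ← ((hmem l').1 hl').2, ← hg, hoe]
  · intro l hl
    refine ⟨o l, (hmem _).2 ⟨ho1 l hl, hoo l⟩, ?_⟩
    obtain ⟨g, hg⟩ := ho l
    have hg' : g • l = o l := hg
    exact ⟨g⁻¹, by rw [← hg', inv_smul_smul]⟩
  · let _ : CommGroup Z := { (inferInstance : Group Z) with mul_comm := hcomm }
    have hcard : Nat.card (Z →* ℂˣ) = Nat.card Z :=
      CommGroup.card_monoidHom_of_hasEnoughRootsOfUnity Z ℂ
    have h1 : (Finset.univ.erase (1 : Z →* ℂˣ)).card = R.card * d := by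
      rw [Finset.card_eq_sum_card_fiberwise (f := o) (t := R)
        (fun l hl => (hmem _).2 ⟨ho1 l (Finset.ne_of_mem_erase hl), hoo l⟩)]
      rw [Finset.sum_const_nat (m := d)]
      intro r hr
      rw [← hd r ((hmem r).1 hr).1, MulAction.index_stabilizer, ← Set.ncard_coe_finset]
      congr 1
      ext l
      simp only [Finset.coe_filter, Finset.mem_erase, Finset.mem_univ, and_true, Set.mem_ofPred_eq]
      constructor
      · rintro ⟨_, rfl⟩
        exact MulAction.mem_orbit_symm.1 (ho l)
      · rintro ⟨g, rfl⟩
        exact ⟨hsm g r ((hmem r).1 hr).1, (hoe g r).trans ((hmem r).1 hr).2⟩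
    rw [← h1, Finset.card_erase_of_mem (Finset.mem_univ _), Finset.card_univ,
      ← Nat.card_eq_fintype_card, hcard]
    exact Nat.sub_add_cancel Nat.card_pos

/-- Linear characters of `G` separate the cosets of a subgroup containing the commutator subgroup. -/
lemma mem_of_ann {M : Subgroup G} (hM : commutator G ≤ M) {x : G}
    (h : ∀ μ ∈ ann M, μ x = 1) : x ∈ M := by
  have h1 : ann M ≤ ann (M ⊔ Subgroup.zpowers x) := by
    intro μ hμ
    rw [mem_ann, sup_le_iff, Subgroup.zpowers_le]
    exact ⟨hμ, h μ hμ⟩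
  have h2 := Subgroup.card_le_of_le h1
  rw [card_ann_aux hM, card_ann_aux (hM.trans le_sup_left)] at h2
  have h3 := Subgroup.relIndex_mul_index (H := M) (K := M ⊔ Subgroup.zpowers x) le_sup_left
  have h4 : M.relIndex (M ⊔ Subgroup.zpowers x) ≤ 1 := by
    have hpos : 0 < (M ⊔ Subgroup.zpowers x).index :=
      Nat.pos_of_ne_zero Subgroup.index_ne_zero_of_finite
    rw [← h3] at h2
    exact le_of_mul_le_mul_right (by rwa [one_mul]) hpos
  have h5 : M.relIndex (M ⊔ Subgroup.zpowers x) ≠ 0 := Subgroup.index_ne_zero_of_finite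
  exact Subgroup.relIndex_eq_one.1 (by omega)
    ((le_sup_right : _ ≤ M ⊔ Subgroup.zpowers x) (Subgroup.mem_zpowers x))

/-- If all linear characters of `G` trivial on `M ≥ [G, G]` are `k`-valued, then `k` contains the
roots of unity whose order is that of any element modulo `M`. -/
lemma exists_root {M : Subgroup G} (hM : commutator G ≤ M) {k : Subfield ℂ}
    (hk : ann M ≤ linK G k) (g : G) {e : ℕ} (he : ∀ m, g ^ m ∈ M → e ∣ m) :
    ∃ z ∈ k, IsPrimitiveRoot z e := by
  let ev : (G →* ℂˣ) →* ℂˣ := MonoidHom.eval g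
  have hfin : Finite ((ann M).map ev) :=
    Finite.of_surjective _ (ev.subgroupMap_surjective (ann M))
  obtain ⟨⟨t, μ, hμ, ht⟩, hgen⟩ := IsCyclic.exists_generator (α := (ann M).map ev)
  have hn : g ^ orderOf t ∈ M := by
    refine mem_of_ann hM fun ν hν => ?_
    obtain ⟨i, hi⟩ := Subgroup.mem_zpowers_iff.1 (hgen ⟨ν g, ν, hν, rfl⟩)
    have hi' : t ^ i = ν g := congrArg Subtype.val hi
    rw [map_pow, ← hi', ← zpow_natCast, ← zpow_mul, mul_comm, zpow_mul, zpow_natCast,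
      pow_orderOf_eq_one, one_zpow]
  obtain ⟨m, hm⟩ := he _ hn
  have htk : (t : ℂ) ∈ k := by
    rw [← ht]; exact hk hμ g
  have hpos : 0 < orderOf t := by
    refine orderOf_pos_iff.2 (isOfFinOrder_iff_pow_eq_one.2 ⟨Nat.card G, Nat.card_pos, ?_⟩)
    rw [← ht]
    change μ g ^ _ = 1
    rw [← map_pow, pow_card_eq_one', map_one]
  refine ⟨(t : ℂ) ^ m, k.pow_mem htk m, ?_⟩
  have h1 : IsPrimitiveRoot (t : ℂ) (orderOf t) :=
    IsPrimitiveRoot.coe_units_iff.2 (IsPrimitiveRoot.orderOf t)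
  exact h1.pow hpos (hm.trans (mul_comm _ _))

end AcdK

/-! ### The abelian case -/

namespace AcdK

variable {G : Type} [Group G] [Finite G] {Z : Subgroup G} [hZn : Z.Normal]

/-- If every nontrivial character of `Z` is conjugate to `l` or to `l⁻¹`, then some `g` acts on the orbit
of `l` with order divisible by `(p - 1) / 2`: take `g` moving `l` to `l ^ j` or `l⁻¹` to `l ^ j` with `j` a
primitive root modulo `p`. -/
lemma exists_order_of_two_orbits {p : ℕ} (hp : p.Prime) (hpodd : Odd p) (hZp : ∀ z : Z, z ^ p = 1)
    {l : Z →* ℂˣ} (hl : l ≠ 1)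
    (htwo : ∀ l' : Z →* ℂˣ, l' ≠ 1 → ∃ g : G, g • l = l' ∨ g • l⁻¹ = l') :
    ∃ g : G, ∀ m, g ^ m ∈ MulAction.stabilizer G l → (p - 1) / 2 ∣ m := by
  have : Fact p.Prime := ⟨hp⟩
  obtain ⟨y, hy⟩ : ∃ y, l y ≠ 1 := by
    by_contra hcon
    push Not at hcon
    exact hl (MonoidHom.ext hcon)
  have hord : orderOf (l y) = p :=
    orderOf_eq_prime (DFunLike.congr_fun (dual_pow_eq_one hZp l) y) hy
  obtain ⟨u, hu⟩ := IsCyclic.exists_generator (α := (ZMod p)ˣ)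
  have huord : orderOf u = p - 1 := by
    rw [orderOf_eq_card_of_forall_mem_zpowers hu, Nat.card_eq_fintype_card, ZMod.card_units]
  set j : ℕ := (u : ZMod p).val with hj
  have hjc : ((j : ℕ) : ZMod p) = u := ZMod.natCast_zmod_val _
  have hlj : l ^ j ≠ 1 := by
    intro h
    have h1 : p ∣ j := by
      rw [← hord]; exact orderOf_dvd_of_pow_eq_one (DFunLike.congr_fun h y)
    rw [← ZMod.natCast_eq_zero_iff, hjc] at h1
    exact u.ne_zero h1
  obtain ⟨g, hg⟩ := htwo _ hlj
  have h2 : (g ^ 2) • l = l ^ (j ^ 2) := by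
    rw [pow_two, mul_smul]
    rcases hg with h | h
    · rw [h, dual_smul_pow, h, pow_two]
      exact (pow_mul l j j).symm
    · have h' : g • l = (l ^ j)⁻¹ := by
        rw [← h, dual_smul_inv]; exact (inv_inv (g • l)).symm
      rw [h', dual_smul_inv, dual_smul_pow, h', pow_two]
      refine MonoidHom.ext fun z => ?_
      change (((l z ^ j)⁻¹) ^ j)⁻¹ = l z ^ (j * j)
      rw [inv_pow, inv_inv, pow_mul]
  have h3 : ∀ m, (g ^ 2) ^ m • l = l ^ ((j ^ 2) ^ m) := by
    intro m
    induction m with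
    | zero => rw [pow_zero, one_smul, pow_zero]; exact (pow_one l).symm
    | succ m ih =>
      rw [pow_succ, mul_smul, h2, dual_smul_pow, ih, pow_succ (j ^ 2)]
      exact (pow_mul l _ _).symm
  refine ⟨g, fun m hm => ?_⟩
  have h4 : (g ^ 2) ^ m ∈ MulAction.stabilizer G l := by
    rw [pow_right_comm]; exact Subgroup.pow_mem _ hm 2
  rw [MulAction.mem_stabilizer_iff, h3] at h4
  have h5 : (j ^ 2) ^ m ≡ 1 [MOD p] := by
    rw [← hord]
    have h4' : l y ^ ((j ^ 2) ^ m) = l y ^ 1 := (DFunLike.congr_fun h4 y).trans (pow_one _).symm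
    exact pow_eq_pow_iff_modEq.1 h4'
  have h6 : u ^ (2 * m) = 1 := by
    apply Units.ext
    have := (ZMod.natCast_eq_natCast_iff _ _ _).2 h5
    push_cast at this ⊢
    rw [hjc, ← pow_mul] at this
    exact this
  have h7 : p - 1 ∣ 2 * m := by
    rw [← huord]; exact orderOf_dvd_of_pow_eq_one h6
  obtain ⟨q, hq⟩ := hpodd
  have h8 : (p - 1) / 2 = q := by omega
  have h9 : p - 1 = 2 * q := by omega
  rw [h9] at h7
  rw [h8]
  exact Nat.dvd_of_mul_dvd_mul_left two_pos h7

lemma const_bounds {p : ℕ} (hp5 : 5 ≤ p) :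
    (1 : ℝ) < 3 * (p : ℝ) ^ 2 / ((p : ℝ) ^ 2 + 2) ∧ 3 * (p : ℝ) ^ 2 / ((p : ℝ) ^ 2 + 2) < 3 := by
  have h : (5 : ℝ) ≤ p := by exact_mod_cast hp5
  have h0 : (0 : ℝ) < (p : ℝ) ^ 2 + 2 := by positivity
  rw [lt_div_iff₀ h0, div_lt_iff₀ h0]
  constructor <;> nlinarith

set_option maxHeartbeats 1000000 in
/-- For a minimal normal subgroup `Z` of exponent `p` with a crossed projection `π : G → Z`, the
characters of `G` lying over suitable orbits of nontrivial characters of `Z` outweigh the linear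
ones. -/
theorem abelian_case (hG : Odd (Nat.card G)) {p : ℕ} (hp : p.Prime) (hpodd : Odd p)
    (hmod : p % 3 = 2) {k : Subfield ℂ} (hkp : ∀ z : ℂ, IsPrimitiveRoot z p → z ∈ k)
    (hk3 : ∀ z : ℂ, IsPrimitiveRoot z 3 → z ∉ k)
    (hcond : (∀ z : ℂ, IsPrimitiveRoot z ((p - 1) / 2) → z ∉ k) ∨ Even ((p - 1) / 2))
    (hcomm : ∀ x y : Z, x * y = y * x) (hZp : ∀ z : Z, z ^ p = 1) (hZG : Z ≤ commutator G)
    (hZ1 : Z ≠ ⊥) (hmin : ∀ M : Subgroup G, M.Normal → M ≤ Z → M = ⊥ ∨ M = Z)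
    (hnc : ¬ ∀ (g : G) (z : Z), MulAut.conjNormal g z = z)
    {π : G → Z} (hπ : ∀ g h, π (g * h) = π g * MulAut.conjNormal g (π h))
    (hπZ : ∀ z : Z, π z = z) {c : ℝ} (hc : c = 3 * (p : ℝ) ^ 2 / ((p : ℝ) ^ 2 + 2)) :
    (c - 1) * Nat.card (linK G k) ≤ ∑ χ ∈ nlin G k, ((deg χ : ℝ) - c) := by
  classical
  have : Fact p.Prime := ⟨hp⟩
  have hp5 : 5 ≤ p := by
    have := hp.two_le
    obtain ⟨q, hq⟩ := hpodd
    omega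
  obtain ⟨hc1, hc3⟩ := const_bounds hp5
  rw [← hc] at hc1 hc3
  have hidx : ∀ l : Z →* ℂˣ, l ≠ 1 → 3 ≤ (MulAction.stabilizer G l).index ∧
      Odd (MulAction.stabilizer G l).index := fun l hl =>
    ⟨three_le_index hG (stabilizer_index_ne_one hmin hnc hl), index_odd hG _⟩
  obtain ⟨a, ha⟩ : ∃ a, Nat.card Z = p ^ a :=
    IsPGroup.iff_card.1 (fun z => ⟨1, by rw [pow_one]; exact hZp z⟩)
  have ha0 : a ≠ 0 := by
    rintro rfl
    exact hZ1 (Subgroup.eq_bot_of_card_eq Z (ha.trans (pow_zero p)))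
  have h3pa : ¬ 3 ∣ p ^ a := by
    intro h
    have := Nat.prime_three.dvd_of_dvd_pow h
    omega
  -- It suffices to exhibit a set of orbit representatives with enough total weight.
  suffices hmain : ∃ R : Finset (Z →* ℂˣ), (∀ l ∈ R, l ≠ 1) ∧
      (∀ l ∈ R, ∀ l' ∈ R, ∀ g : G, g • l = l' → l = l') ∧
      c - 1 ≤ ∑ l ∈ R, (((MulAction.stabilizer G l).index : ℝ) - c) / sK k l by
    obtain ⟨R, hR1, hR, hsum⟩ := hmain
    refine le_trans ?_ (orbit_contribution hG hp hkp hcomm hZp hZG hπ hπZ hc3.le R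
      (fun l hl => stabilizer_index_ne_one hmin hnc (hR1 l hl)) hR)
    rw [mul_comm]
    exact mul_le_mul_of_nonneg_left hsum (Nat.cast_nonneg _)
  by_cases hall : ∀ l : Z →* ℂˣ, l ≠ 1 → (MulAction.stabilizer G l).index = 3
  · -- All orbits have length three.
    obtain ⟨R, hR1, hR, -, hcard⟩ := exists_reps hcomm hall
    refine ⟨R, hR1, hR, ?_⟩
    have hs : ∀ l ∈ R, (((MulAction.stabilizer G l).index : ℝ) - c) / sK k l = 3 - c := by
      intro l hl
      have h3 := hall l (hR1 l hl)
      have hs1 : sK k l = 1 := by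
        rcases (Nat.dvd_prime Nat.prime_three).1 (h3 ▸ sK_dvd k l) with h | h
        · exact h
        · exfalso
          obtain ⟨hS, hann⟩ := sK_eq (h.trans h3.symm)
          have : Fact (Nat.Prime 3) := ⟨Nat.prime_three⟩
          obtain ⟨⟨μ, hμ⟩, hμ3⟩ := exists_prime_orderOf_dvd_card' (G := ann _) 3
            (by rw [card_ann_aux hS, h3])
          rw [Subgroup.orderOf_mk] at hμ3
          have hμ1 : μ ≠ 1 := by
            rintro rfl
            rw [orderOf_one] at hμ3
            omega
          obtain ⟨x, hx⟩ : ∃ x, μ x ≠ 1 := by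
            by_contra hcon
            push Not at hcon
            exact hμ1 (MonoidHom.ext hcon)
          have hx3 : μ x ^ 3 = 1 := by
            have := pow_orderOf_eq_one μ
            rw [hμ3] at this
            exact DFunLike.congr_fun this x
          refine hk3 (μ x : ℂ) ?_ (hann hμ x)
          rw [IsPrimitiveRoot.coe_units_iff, ← orderOf_eq_prime hx3 hx]
          exact IsPrimitiveRoot.orderOf _
      rw [h3, hs1]; norm_num
    rw [Finset.sum_congr rfl hs, Finset.sum_const, nsmul_eq_mul]
    have ha2 : 2 ≤ a := by
      rcases Nat.lt_or_ge a 2 with h | h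
      · have : a = 1 := by omega
        rw [ha, this, pow_one] at hcard
        omega
      · exact h
    have h1 : p ^ 2 ≤ R.card * 3 + 1 := by
      rw [hcard, ha]; exact Nat.pow_le_pow_right hp.pos ha2
    have h1' : (p : ℝ) ^ 2 ≤ R.card * 3 + 1 := by exact_mod_cast h1
    have h0 : (0 : ℝ) < (p : ℝ) ^ 2 + 2 := by positivity
    have e1 : 3 - c = 6 / ((p : ℝ) ^ 2 + 2) := by
      rw [hc]; field_simp; ring
    have e2 : c - 1 = (2 * (p : ℝ) ^ 2 - 2) / ((p : ℝ) ^ 2 + 2) := by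
      rw [hc]; field_simp; ring
    rw [e1, e2, mul_div_assoc']
    exact div_le_div_of_nonneg_right (by linarith) h0.le
  · push Not at hall
    obtain ⟨l, hl, hl3⟩ := hall
    obtain ⟨hd3, hdodd⟩ := hidx l hl
    have hd5 : 5 ≤ (MulAction.stabilizer G l).index := by
      obtain ⟨q, hq⟩ := hdodd
      omega
    have hinv1 : l⁻¹ ≠ 1 := by
      intro h
      refine hl (MonoidHom.ext fun z => ?_)
      have h1 : (l z)⁻¹ = 1 := DFunLike.congr_fun h z
      exact inv_eq_one.1 h1
    set d := (MulAction.stabilizer G l).index with hd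
    have hd5' : (5 : ℝ) ≤ d := by exact_mod_cast hd5
    have hinvne : l ≠ l⁻¹ := by
      have := dual_not_conj_inv hG hpodd hZp hl 1
      rwa [one_smul] at this
    by_cases hs : sK k l = d
    · -- `G` acts on the orbit of `l` as an abelian group.
      obtain ⟨hS, hann⟩ := sK_eq hs
      have hst : ∀ l' : Z →* ℂˣ, l' ≠ 1 →
          MulAction.stabilizer G l' = MulAction.stabilizer G l := fun l' hl' =>
        stabilizer_eq_of_commutator_le hmin hl hl' hS
      obtain ⟨R, hR1, hR, hRc, hcard⟩ := exists_reps hcomm (d := d)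
        (fun l' hl' => by rw [hst l' hl'])
      refine ⟨R, hR1, hR, ?_⟩
      have hterm : ∀ l' ∈ R,
          (((MulAction.stabilizer G l').index : ℝ) - c) / sK k l' = ((d : ℝ) - c) / d := by
        intro l' hl'
        have e : sK k l' = sK k l := by unfold sK; rw [hst l' (hR1 l' hl')]
        rw [e, hs, hst l' (hR1 l' hl')]
      rw [Finset.sum_congr rfl hterm, Finset.sum_const, nsmul_eq_mul]
      have hZodd : Odd (p ^ a) := hpodd.pow
      have hReven : Even R.card := by
        by_contra hcon
        rw [Nat.not_even_iff_odd] at hcon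
        have h1 := (hcon.mul hdodd).add_odd odd_one
        rw [hcard, ha] at h1
        exact (Nat.not_even_iff_odd.2 hZodd) h1
      obtain ⟨r1, hr1, g1, hg1⟩ := hRc l hl
      obtain ⟨r2, hr2, g2, hg2⟩ := hRc l⁻¹ hinv1
      have hr12 : r1 ≠ r2 := by
        rintro rfl
        refine dual_not_conj_inv hG hpodd hZp hl (g2 * g1⁻¹) ?_
        rw [mul_smul, ← hg1, inv_smul_smul, hg1, hg2]
      have hR2 : R.card ≠ 2 := by
        intro hR2
        have hRe : R = {r1, r2} := by
          refine (Finset.eq_of_subset_of_card_le ?_ ?_).symm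
          · intro x hx
            rw [Finset.mem_insert, Finset.mem_singleton] at hx
            rcases hx with rfl | rfl <;> assumption
          · rw [hR2, Finset.card_pair hr12]
        obtain ⟨g, hg⟩ := exists_order_of_two_orbits (G := G) hp hpodd hZp hl (by
          intro l' hl'
          obtain ⟨r, hr, h, hh⟩ := hRc l' hl'
          rw [hRe, Finset.mem_insert, Finset.mem_singleton] at hr
          rcases hr with rfl | rfl
          · exact ⟨h * g1⁻¹, Or.inl (by rw [mul_smul, ← hg1, inv_smul_smul, hh])⟩
          · exact ⟨h * g2⁻¹, Or.inr (by rw [mul_smul, ← hg2, inv_smul_smul, hh])⟩)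
        have hodd2 : Odd ((p - 1) / 2) := by
          refine Odd.of_dvd_nat hG (hg _ ?_)
          rw [pow_card_eq_one']; exact Subgroup.one_mem _
        obtain ⟨z, hzk, hz⟩ := exists_root hS hann g hg
        rcases hcond with h | h
        · exact h z hz hzk
        · exact (Nat.not_even_iff_odd.2 hodd2) h
      have hRpos : R.card ≠ 0 := Finset.card_ne_zero_of_mem hr1
      have hR4 : 4 ≤ R.card := by
        obtain ⟨q, hq⟩ := hReven
        omega
      have hR4' : (4 : ℝ) ≤ R.card := by exact_mod_cast hR4
      have hdpos : (0 : ℝ) < d := by linarith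
      rw [mul_div_assoc', le_div_iff₀ hdpos]
      rcases Nat.lt_or_ge d 7 with h7 | h7
      · have hd5e : d = 5 := by
          obtain ⟨q, hq⟩ := hdodd
          omega
        have hR6 : 6 ≤ R.card := by
          have : R.card ≠ 4 := by
            intro h4
            rw [h4, hd5e, ha] at hcard
            apply h3pa
            rw [← hcard]; norm_num
          obtain ⟨q, hq⟩ := hReven
          omega
        have hR6' : (6 : ℝ) ≤ R.card := by exact_mod_cast hR6
        rw [hd5e]
        push_cast
        nlinarith
      · have h7' : (7 : ℝ) ≤ d := by exact_mod_cast h7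
        nlinarith
    · -- Few linear characters fix the characters above `l`.
      refine ⟨{l, l⁻¹}, ?_, ?_, ?_⟩
      · intro x hx
        rw [Finset.mem_insert, Finset.mem_singleton] at hx
        rcases hx with rfl | rfl <;> assumption
      · intro x hx y hy g hg
        rw [Finset.mem_insert, Finset.mem_singleton] at hx hy
        rcases hx with rfl | rfl <;> rcases hy with rfl | rfl
        · rfl
        · exact absurd hg (dual_not_conj_inv hG hpodd hZp hl g)
        · refine absurd ?_ (dual_not_conj_inv hG hpodd hZp hl g⁻¹)
          rw [inv_smul_eq_iff, hg]
        · rfl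
      · rw [Finset.sum_pair hinvne, stabilizer_inv]
        have e : sK k l⁻¹ = sK k l := by unfold sK; rw [stabilizer_inv]
        rw [e, ← hd]
        have hspos : (0 : ℝ) < sK k l := by exact_mod_cast sK_pos k l
        have hs3 : 3 * sK k l ≤ d := by
          obtain ⟨q, hq⟩ := sK_dvd k l
          rw [← hd] at hq
          have hqodd : Odd q := (Nat.odd_mul.1 (hq ▸ hdodd)).2
          have hq1 : q ≠ 1 := by
            rintro rfl
            exact hs (by rw [hq, mul_one])
          have hq3 : 3 ≤ q := by
            obtain ⟨t, ht⟩ := hqodd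
            omega
          rw [hq, mul_comm]
          exact Nat.mul_le_mul_left _ hq3
        have hs3' : (3 : ℝ) * sK k l ≤ d := by exact_mod_cast hs3
        have : (1 : ℝ) ≤ ((d : ℝ) - c) / sK k l := by
          rw [le_div_iff₀ hspos]
          nlinarith
        linarith

end AcdK

/-! ### Induction on the group order -/

namespace AcdK

section

variable {G : Type} [Group G] [Finite G]

/-- Passing to a quotient by a subgroup of the commutator subgroup only discards characters of
degree at least three, so it does not increase the excess. -/
lemma excess_quotient_le (hG : Odd (Nat.card G)) (k : Subfield ℂ) {c : ℝ} (hc : c ≤ 3)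
    {N : Subgroup G} [N.Normal] (hN : N ≤ commutator G) : excess (G ⧸ N) k c ≤ excess G k c := by
  classical
  let f : (G ⧸ N → ℂ) → (G → ℂ) := fun χ x => χ (QuotientGroup.mk' N x)
  have hinj : Function.Injective f := by
    intro χ ψ h
    funext x
    obtain ⟨x, rfl⟩ := QuotientGroup.mk'_surjective N x
    exact congrFun h x
  have hsub : (kirr (G ⧸ N) k).image f ⊆ kirr G k := by
    intro χ hχ
    obtain ⟨ψ, hψ, rfl⟩ := Finset.mem_image.1 hχ
    rw [mem_kirr] at hψ ⊢
    exact ⟨comp_mem _ (QuotientGroup.mk'_surjective N) hψ.1, fun g => hψ.2 _⟩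
  have h1 : excess (G ⧸ N) k c = ∑ χ ∈ (kirr (G ⧸ N) k).image f, ((deg χ : ℝ) - c) := by
    rw [Finset.sum_image fun a _ b _ h => hinj h]
    refine Finset.sum_congr rfl fun χ _ => ?_
    rw [show deg (f χ) = deg χ from deg_comp _ χ]
  rw [h1, excess]
  refine Finset.sum_le_sum_of_subset_of_nonneg hsub fun χ hχ hn => ?_
  obtain ⟨hχi, hχk⟩ := mem_kirr.1 hχ
  have hdeg : deg χ ≠ 1 := by
    intro h
    obtain ⟨l, rfl⟩ := exists_linear hχi h
    have hker : N ≤ l.ker := hN.trans (Abelianization.commutator_subset_ker l)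
    refine hn (Finset.mem_image.2 ⟨fun x => (QuotientGroup.lift N l hker x : ℂ), ?_, rfl⟩)
    rw [mem_kirr]
    refine ⟨linear_mem_irr _, fun g => ?_⟩
    obtain ⟨g, rfl⟩ := QuotientGroup.mk'_surjective N g
    exact hχk g
  have h3 : (3 : ℝ) ≤ deg χ := by exact_mod_cast three_le_deg hG hχi hdeg
  linarith

lemma hasNormalPComplement_of_abelian {p : ℕ} (hp : p.Prime) (h : commutator G = ⊥) :
    HasNormalPComplement G p := by
  have : Fact p.Prime := ⟨hp⟩
  have hn : ∀ M : Subgroup G, M.Normal := fun M =>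
    Subgroup.Normal.of_commutator_le G (h ▸ bot_le)
  let P : Sylow p G := default
  have := hn P
  obtain ⟨H, hH⟩ := Subgroup.exists_right_complement'_of_coprime P.card_coprime_index
  obtain ⟨a, ha⟩ := IsPGroup.iff_card.1 P.isPGroup'
  have hc := hH.card_mul_card
  have h1 : H.index = Nat.card P := by
    rw [← H.card_mul_index, mul_comm] at hc
    exact (Nat.eq_of_mul_eq_mul_left Nat.card_pos hc).symm
  have h2 : Nat.card H = (P : Subgroup G).index := by
    rw [← (P : Subgroup G).card_mul_index] at hc
    exact Nat.eq_of_mul_eq_mul_left Nat.card_pos hc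
  refine ⟨H, hn H, ?_, a, h1.trans ha⟩
  rw [h2, Nat.coprime_comm]
  exact (Nat.Prime.coprime_iff_not_dvd hp).2 P.not_dvd_index

/-- In an abelian minimal normal subgroup, the elements of order dividing `p` form a normal subgroup
of `G`, so they exhaust it as soon as they are not all trivial. -/
lemma pow_eq_one_of_minimal {p : ℕ} (hp : p.Prime) {Z : Subgroup G} [hZn : Z.Normal]
    (hcomm : ∀ x y : Z, x * y = y * x) (hpZ : p ∣ Nat.card Z)
    (hmin : ∀ M : Subgroup G, M.Normal → M ≤ Z → M = ⊥ ∨ M = Z) (z : Z) : z ^ p = 1 := by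
  have : Fact p.Prime := ⟨hp⟩
  let E : Subgroup G :=
    { carrier := {x | x ∈ Z ∧ x ^ p = 1}
      one_mem' := ⟨Z.one_mem, one_pow p⟩
      mul_mem' := by
        rintro a b ⟨ha, ha'⟩ ⟨hb, hb'⟩
        refine ⟨Z.mul_mem ha hb, ?_⟩
        have hab : Commute a b := congrArg Subtype.val (hcomm ⟨a, ha⟩ ⟨b, hb⟩)
        rw [hab.mul_pow, ha', hb', one_mul]
      inv_mem' := by
        rintro a ⟨ha, ha'⟩
        exact ⟨Z.inv_mem ha, by rw [inv_pow, ha', inv_one]⟩ }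
  have hE : E.Normal := ⟨by
    rintro x ⟨hx, hx'⟩ g
    exact ⟨hZn.conj_mem x hx g, by rw [conj_pow, hx', mul_one, mul_inv_cancel]⟩⟩
  rcases hmin E hE (fun x hx => hx.1) with h | h
  · obtain ⟨y, hy⟩ := exists_prime_orderOf_dvd_card' p hpZ
    have h1 : (y : G) ∈ E := ⟨y.2, by
      have := pow_orderOf_eq_one y
      rw [hy] at this
      exact congrArg Subtype.val this⟩
    rw [h, Subgroup.mem_bot] at h1
    have h2 : y = 1 := Subtype.ext h1
    rw [h2, orderOf_one] at hy
    exact absurd hy.symm hp.one_lt.ne'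
  · have h1 : (z : G) ∈ E := by rw [h]; exact z.2
    exact Subtype.ext h1.2

end

/-- The induction: `G` is replaced by its quotient by a minimal normal subgroup contained in the
commutator subgroup. -/
theorem hasNormalPComplement_of_excess_neg {p : ℕ} (hp : p.Prime) (hpodd : Odd p) (hmod : p % 3 = 2)
    {k : Subfield ℂ} (hkp : ∀ z : ℂ, IsPrimitiveRoot z p → z ∈ k)
    (hk3 : ∀ z : ℂ, IsPrimitiveRoot z 3 → z ∉ k)
    (hcond : (∀ z : ℂ, IsPrimitiveRoot z ((p - 1) / 2) → z ∉ k) ∨ Even ((p - 1) / 2)) (n : ℕ) :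
    ∀ (G : Type) [Group G] [Finite G], Nat.card G = n → Odd (Nat.card G) →
      excess G k (3 * (p : ℝ) ^ 2 / ((p : ℝ) ^ 2 + 2)) < 0 → HasNormalPComplement G p := by
  induction n using Nat.strong_induction_on with
  | _ n ih =>
  intro G _ _ hn hG hex
  have hp5 : 5 ≤ p := by
    have := hp.two_le
    obtain ⟨q, hq⟩ := hpodd
    omega
  obtain ⟨hc1, hc3⟩ := const_bounds hp5
  set c : ℝ := 3 * (p : ℝ) ^ 2 / ((p : ℝ) ^ 2 + 2) with hc
  by_cases hcom : commutator G = ⊥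
  · exact hasNormalPComplement_of_abelian hp hcom
  obtain ⟨N, ⟨hNn, hN1, hNG⟩, hNmin⟩ := Set.Finite.exists_minimal
    (s := {M : Subgroup G | M.Normal ∧ M ≠ ⊥ ∧ M ≤ commutator G}) (Set.toFinite _)
    ⟨commutator G, inferInstance, hcom, le_rfl⟩
  have hmin : ∀ M : Subgroup G, M.Normal → M ≤ N → M = ⊥ ∨ M = N := by
    intro M hM hMN
    by_cases h : M = ⊥
    · exact Or.inl h
    · exact Or.inr (le_antisymm hMN (hNmin ⟨hM, h, hMN.trans hNG⟩ hMN))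
  have hcardq : Nat.card G = Nat.card (G ⧸ N) * Nat.card N :=
    Subgroup.card_eq_card_quotient_mul_card_subgroup N
  obtain ⟨K', hK'n, hK'c, m, hm⟩ : HasNormalPComplement (G ⧸ N) p := by
    refine ih (Nat.card (G ⧸ N)) ?_ (G ⧸ N) rfl (Odd.of_dvd_nat hG (hcardq ▸ dvd_mul_right _ _))
      ((excess_quotient_le hG k hc3.le hNG).trans_lt hex)
    rw [← hn, hcardq]
    have h1 : 1 < Nat.card N := by
      rw [Subgroup.one_lt_card_iff_ne_bot]; exact hN1
    exact lt_mul_of_one_lt_right Nat.card_pos h1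
  set K : Subgroup G := K'.comap (QuotientGroup.mk' N) with hK
  have hKn : K.Normal := inferInstance
  have hsurj := QuotientGroup.mk'_surjective N
  have hNK : N ≤ K := by
    intro x hx
    rw [hK, Subgroup.mem_comap, QuotientGroup.mk'_apply, (QuotientGroup.eq_one_iff x).2 hx]
    exact K'.one_mem
  have hKi : K.index = p ^ m := by
    rw [hK, Subgroup.index_comap_of_surjective _ hsurj, hm]
  have hKN : N.relIndex K = Nat.card K' := by
    have h1 := Subgroup.relIndex_comap ⊥ (QuotientGroup.mk' N) K
    rw [MonoidHom.comap_bot, QuotientGroup.ker_mk', hK,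
      Subgroup.map_comap_eq_self_of_surjective hsurj, Subgroup.relIndex_bot_left] at h1
    exact h1
  have hKNp : (N.relIndex K).Coprime p := hKN ▸ hK'c
  by_cases hpN : p ∣ Nat.card N
  swap
  · refine ⟨K, hKn, ?_, m, hKi⟩
    have h1 := Subgroup.relIndex_mul_relIndex ⊥ N K bot_le hNK
    rw [Subgroup.relIndex_bot_left, Subgroup.relIndex_bot_left] at h1
    rw [← h1]
    exact Nat.Coprime.mul_left ((Nat.Prime.coprime_iff_not_dvd hp).2 hpN).symm hKNp
  -- A lower bound for the contribution of nonlinear characters contradicts negative excess.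
  have hcontra : ¬ (c - 1) * Nat.card (linK G k) ≤ ∑ χ ∈ nlin G k, ((deg χ : ℝ) - c) := by
    intro h
    rw [excess_eq] at hex
    linarith
  rcases hmin ⁅N, N⁆ inferInstance (Subgroup.commutator_le_left N N) with h | h
  · have hcomm : ∀ x y : N, x * y = y * x := by
      intro x y
      have h1 := Subgroup.commutator_mem_commutator x.2 y.2
      rw [h, Subgroup.mem_bot] at h1
      exact Subtype.ext (commutatorElement_eq_one_iff_mul_comm.1 h1)
    have hNp : ∀ z : N, z ^ p = 1 := pow_eq_one_of_minimal hp hcomm hpN hmin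
    by_cases hcen : ∀ x ∈ K, ∀ z : N, MulAut.conjNormal x z = z
    · exact hasNormalPComplement_of_central hp hcomm hNp hNK hKNp hKi hcen
    have hfix : ∀ z : N, (∀ x ∈ K, MulAut.conjNormal x z = z) → z = 1 := by
      have hCn : (N ⊓ Subgroup.centralizer (K : Set G)).Normal := inferInstance
      rcases hmin _ hCn inf_le_left with h1 | h1
      · intro z hz
        have h2 : (z : G) ∈ N ⊓ Subgroup.centralizer (K : Set G) := by
          refine ⟨z.2, Subgroup.mem_centralizer_iff.2 fun x hx => ?_⟩
          exact mul_inv_eq_iff_eq_mul.1 (congrArg Subtype.val (hz x hx))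
        rw [h1, Subgroup.mem_bot] at h2
        exact Subtype.ext h2
      · refine absurd (fun x hx z => ?_) hcen
        have h2 : (z : G) ∈ N ⊓ Subgroup.centralizer (K : Set G) := h1.symm ▸ z.2
        exact Subtype.ext (mul_inv_eq_iff_eq_mul.2 (Subgroup.mem_centralizer_iff.1 h2.2 x hx))
    have hco : (Nat.card N).Coprime (N.relIndex K) := by
      have : Fact p.Prime := ⟨hp⟩
      obtain ⟨a, ha⟩ : ∃ a, Nat.card N = p ^ a :=
        IsPGroup.iff_card.1 (fun z => ⟨1, by rw [pow_one]; exact hNp z⟩)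
      rw [ha]; exact Nat.Coprime.pow_left a hKNp.symm
    obtain ⟨π, hπ, hπZ⟩ := exists_crossed hcomm hp.one_lt hNp hNK hco hKNp hfix
    exact absurd (abelian_case hG hp hpodd hmod hkp hk3 hcond hcomm hNp hNG hN1 hmin
      (fun h => hcen fun x _ z => h x z) hπ hπZ hc) hcontra
  · have hperf : commutator N = ⊤ := by
      apply Subgroup.map_injective N.subtype_injective
      rw [Subgroup.map_subtype_commutator, h, ← MonoidHom.range_eq_map, Subgroup.range_subtype]
    have h1 := perfect_case hG hp hpodd hkp hNK hperf hpN hKNp hKi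
    refine absurd ?_ hcontra
    refine le_trans ?_ (h1.trans (Finset.sum_le_sum fun χ _ => sub_le_sub_left hc3.le _))
    exact mul_le_mul_of_nonneg_right (by linarith) (Nat.cast_nonneg _)

end AcdK

theorem average_k_degree_normal_p_complement_two_mod_three_no_thirds
    (G : Type) [Group G] [Fintype G] (hG : Odd (Nat.card G))
    (p : ℕ) (hp : p.Prime) (hpodd : Odd p) (hmod : p % 3 = 2)
    (k : Subfield ℂ)
    (hkp : ∀ z : ℂ, IsPrimitiveRoot z p → z ∈ k)
    (hk3 : ∀ z : ℂ, IsPrimitiveRoot z 3 → z ∉ k)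
    (hcond : (∀ z : ℂ, IsPrimitiveRoot z ((p - 1) / 2) → z ∉ k) ∨ Even ((p - 1) / 2))
    (h : acdK G k < 3 * (p : ℝ) ^ 2 / ((p : ℝ) ^ 2 + 2)) :
    HasNormalPComplement G p := by
  have hex := (AcdK.acdK_lt_iff (G := G) k _).1 h
  exact AcdK.hasNormalPComplement_of_excess_neg hp hpodd hmod hkp hk3 hcond _ G rfl hG hex
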